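/- (Saturation for Littlewood–Richardson coefficients) Let λ, μ, ν be partitions with at most n parts such that |λ| + |μ| = |ν|. If for some positive integer m the Littlewood–Richardson coefficient c^{mν}_{mλ, mμ} is nonzero, then c^{ν}_{λμ} is nonzero. -/

import Mathlib

/-!
(Saturation for Littlewood–Richardson coefficients.)  Let `λ, μ, ν` be partitions with at most
`n` parts such that `|λ| + |μ| = |ν|`.  If for some positive integer `m` the Littlewood–Richardson
coefficient `c^{mν}_{mλ, mμ}` is nonzero, then `c^ν_{λμ}` is nonzero.

The Littlewood–Richardson coefficient `c^ν_{λμ}` is the multiplicity of `V(ν)` in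
`V(λ) ⊗ V(μ)`; under the hypothesis `|λ| + |μ| = |ν|` this multiplicity is the same for
`GL(n)` and for `SL(n)`.  Nonvanishing of the multiplicity of `V(a)` in a (completely reducible)
representation is equivalent to the existence of a highest weight vector of weight `a`
(the predicate `Occurs` below), where partitions are viewed as characters of the diagonal torus.
-/

open scoped TensorProduct
abbrev SL (n : ℕ) := Matrix.SpecialLinearGroup (Fin n) ℂ

section Defs

variable {n : ℕ} {V W : Type*} [AddCommGroup V] [Module ℂ V] [AddCommGroup W] [Module ℂ W]

/-- A matrix in `SL(n)` lying in the standard maximal torus (diagonal matrices). -/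
def SLIsDiag (g : SL n) : Prop := ∀ i j, i ≠ j → g.val i j = 0

/-- A matrix in `SL(n)` lying in the unipotent radical of the standard Borel
(upper triangular, 1's on the diagonal). -/
def SLIsUniUpper (g : SL n) : Prop :=
  (∀ i, g.val i i = 1) ∧ ∀ i j : Fin n, j < i → g.val i j = 0

/-- `v` is a highest weight vector of weight `a` (a character of the diagonal torus,
`diag d ↦ ∏ dᵢ^{aᵢ}`): it is nonzero, fixed by the unipotent radical of the Borel, and the
torus acts on it through the character `a`. -/
def IsHWVector (ρ : Representation ℂ (SL n) V) (a : Fin n → ℤ) (v : V) : Prop :=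
  v ≠ 0 ∧ (∀ g, SLIsUniUpper g → ρ g v = v) ∧
    ∀ g, SLIsDiag g → ρ g v = (∏ i, g.val i i ^ a i) • v

/-- The irreducible representation `V(a)` of highest weight `a` occurs in `ρ`:
equivalently (for completely reducible `ρ`), `ρ` has a highest weight vector of weight `a`. -/
def Occurs (ρ : Representation ℂ (SL n) V) (a : Fin n → ℤ) : Prop := ∃ v, IsHWVector ρ a v

/-- `ρ` is irreducible: `V ≠ 0` and the only invariant subspaces are `⊥` and `⊤`. -/
def RepIsIrreducible (ρ : Representation ℂ (SL n) V) : Prop :=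
  (∃ v : V, v ≠ 0) ∧ ∀ p : Submodule ℂ V, (∀ g, ∀ x ∈ p, ρ g x ∈ p) → p = ⊥ ∨ p = ⊤

/-- The space of invariants `V^G` is nonzero. -/
def HasInvariant (ρ : Representation ℂ (SL n) V) : Prop := ∃ v : V, v ≠ 0 ∧ ∀ g, ρ g v = v

/-- Dominance of the weight `a` (for the standard choice of positive roots). -/
def SLDominant (a : Fin n → ℤ) : Prop := ∀ i j : Fin n, i ≤ j → a j ≤ a i

/-- The tensor product of a finite family of representations of `SL(n)`,
with the diagonal action. -/
noncomputable def piTensorRep {r : ℕ} {V : Fin r → Type*} [∀ i, AddCommGroup (V i)]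
    [∀ i, Module ℂ (V i)] (ρ : ∀ i, Representation ℂ (SL n) (V i)) :
    Representation ℂ (SL n) (⨂[ℂ] i, V i) where
  toFun g := PiTensorProduct.map fun i => ρ i g
  map_one' := by simp
  map_mul' g h := by
    simpa using PiTensorProduct.map_mul (fun i => ρ i g) (fun i => ρ i h)

/-- The tensor product of two representations of `SL(n)` with the diagonal action. -/
noncomputable def tensorRep2 (ρ : Representation ℂ (SL n) V) (σ : Representation ℂ (SL n) W) :
    Representation ℂ (SL n) (V ⊗[ℂ] W) := ρ.tprod σ

end Defs

/-- A partition with at most `n` parts: a non-increasing vector of naturals. -/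
def IsPartition {n : ℕ} (a : Fin n → ℕ) : Prop := ∀ i j : Fin n, i ≤ j → a j ≤ a i

namespace LRSat
open Filter Topology Module

theorem exists_generalized_inverse {E F : Type*} [AddCommGroup E] [Module ℂ E]
    [AddCommGroup F] [Module ℂ F] (N : E →ₗ[ℂ] F) :
    ∃ R : F →ₗ[ℂ] E, ∀ x, N (R (N x)) = N x := by
  obtain ⟨s, hs⟩ := N.rangeRestrict.exists_rightInverse_of_surjective N.range_rangeRestrict
  obtain ⟨p, hp⟩ := N.range.subtype.exists_leftInverse_of_injective (Submodule.ker_subtype _)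
  refine ⟨s ∘ₗ p, fun x => ?_⟩
  have h1 : p (N x) = N.rangeRestrict x := LinearMap.congr_fun hp (N.rangeRestrict x)
  have h2 : N.rangeRestrict (s (N.rangeRestrict x)) = N.rangeRestrict x :=
    LinearMap.congr_fun hs (N.rangeRestrict x)
  simpa [h1] using congrArg Subtype.val h2

section Curve

variable {E F : Type*} [NormedAddCommGroup E] [NormedSpace ℂ E] [FiniteDimensional ℂ E]
  [NormedAddCommGroup F] [NormedSpace ℂ F] [FiniteDimensional ℂ F]

/-- A vector in the kernel of a differentiable family of linear maps whose rank does not jump up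
extends to a differentiable family of kernel vectors. -/
theorem exists_kernel_curve (N : ℂ → E →L[ℂ] F) (hN : DifferentiableAt ℂ N 0)
    (hr : ∀ᶠ t in 𝓝 (0 : ℂ), finrank ℂ (N t).toLinearMap.range ≤ finrank ℂ (N 0).toLinearMap.range)
    (z₀ : E) (hz : N 0 z₀ = 0) :
    ∃ z : ℂ → E, DifferentiableAt ℂ z 0 ∧ z 0 = z₀ ∧ ∀ᶠ t in 𝓝 (0 : ℂ), N t (z t) = 0 := by
  obtain ⟨R', hR'⟩ := exists_generalized_inverse (N 0).toLinearMap
  let R : F →L[ℂ] E := LinearMap.toContinuousLinearMap R'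
  have hR : ∀ x, N 0 (R (N 0 x)) = N 0 x := hR'
  have : CompleteSpace E := FiniteDimensional.complete ℂ E
  let Θ : ℂ → E →L[ℂ] E := fun t => 1 + R.comp (N t - N 0)
  have hΘ0 : Θ 0 = 1 := by simp [Θ]
  have hΘd : DifferentiableAt ℂ Θ 0 := by
    refine (differentiableAt_const _).add ?_
    exact (differentiableAt_const _).clm_comp (hN.sub (differentiableAt_const _))
  have hu : ∀ᶠ t in 𝓝 (0 : ℂ), IsUnit (Θ t) := by
    have h := hΘd.continuousAt.eventually
      (Units.isOpen.mem_nhds (x := Θ 0) (by rw [hΘ0]; exact isUnit_one))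
    exact h
  let Φ : ℂ → E →L[ℂ] E := fun t => Ring.inverse (Θ t)
  refine ⟨fun t => Φ t z₀, ?_, ?_, ?_⟩
  · have h1 : DifferentiableAt ℂ Φ 0 :=
      DifferentiableAt.inverse hΘd (by rw [hΘ0]; exact isUnit_one)
    exact h1.clm_apply (differentiableAt_const _)
  · simp [Φ, hΘ0]
  · filter_upwards [hr, hu] with t ht hut
    have hΦ1 : Θ t * Φ t = 1 := Ring.mul_inverse_cancel _ hut
    have hΦ2 : Φ t * Θ t = 1 := Ring.inverse_mul_cancel _ hut
    set y := Φ t z₀ with hy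
    have hy1 : Θ t y = z₀ := by
      have := congrArg (fun f : E →L[ℂ] E => f z₀) hΦ1
      simpa using this
    have hinj : Function.Injective (Θ t) := by
      intro a b hab
      have := congrArg (Φ t) hab
      have h1 : ∀ x, Φ t (Θ t x) = x := fun x => by
        simpa using congrArg (fun f : E →L[ℂ] E => f x) hΦ2
      simpa [h1] using this
    have key : ∀ x, N 0 (Θ t x) = N 0 (R (N t x)) := by
      intro x
      simp [Θ, hR]
    let K : Submodule ℂ E := ((N 0).toLinearMap ∘ₗ R' ∘ₗ (N t).toLinearMap).ker
    have hK : ∀ x, x ∈ K ↔ N 0 (R (N t x)) = 0 := fun x => Iff.rfl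
    have hle : (N t).toLinearMap.ker ≤ K := by
      intro x hx
      rw [hK]
      have : N t x = 0 := hx
      simp [this]
    have hdim : finrank ℂ K ≤ finrank ℂ (N 0).toLinearMap.ker := by
      let f : K →ₗ[ℂ] (N 0).toLinearMap.ker :=
        ((Θ t).toLinearMap.restrict (p := K) (q := (N 0).toLinearMap.ker) (by
          intro x hx
          have := (hK x).1 hx
          change N 0 (Θ t x) = 0
          rw [key, this]))
      refine LinearMap.finrank_le_finrank_of_injective (f := f) ?_
      intro a b hab
      apply Subtype.ext
      exact hinj (congrArg Subtype.val hab)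
    have e1 := (N t).toLinearMap.finrank_range_add_finrank_ker
    have e2 := (N 0).toLinearMap.finrank_range_add_finrank_ker
    have heq : (N t).toLinearMap.ker = K :=
      Submodule.eq_of_le_of_finrank_le hle (by omega)
    have hyK : y ∈ K := by
      rw [hK, ← key, hy1, hz]
    rw [← heq] at hyK
    exact hyK

/-- The set where an entire function on a finite-dimensional space does not vanish is dense. -/
theorem dense_ne_zero {P : Type*} [NormedAddCommGroup P] [NormedSpace ℂ P]
    (f : P → ℂ) (hf : Differentiable ℂ f) (p₁ : P) (h : f p₁ ≠ 0) : Dense {p | f p ≠ 0} := by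
  rw [dense_iff_inter_open]
  rintro U hU ⟨p, hp⟩
  by_contra hcon
  have hzero : ∀ q ∈ U, f q = 0 := by
    intro q hq
    by_contra hne
    exact hcon ⟨q, hq, hne⟩
  let γ : ℂ → P := fun t => p + t • (p₁ - p)
  have hγ : Differentiable ℂ γ := by fun_prop
  have ha : AnalyticOnNhd ℂ (f ∘ γ) Set.univ :=
    (hf.comp hγ).differentiableOn.analyticOnNhd isOpen_univ
  have hev : f ∘ γ =ᶠ[𝓝 0] (0 : ℂ → ℂ) := by
    have : ∀ᶠ t in 𝓝 (0 : ℂ), γ t ∈ U :=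
      hγ.continuous.continuousAt.eventually (hU.mem_nhds (by simpa [γ] using hp))
    filter_upwards [this] with t ht
    exact hzero _ ht
  have := ha.eqOn_of_preconnected_of_eventuallyEq
    (analyticOnNhd_const (v := (0 : ℂ))) isPreconnected_univ (Set.mem_univ 0) hev
  have h1 := this (Set.mem_univ (1 : ℂ))
  exact h (by simpa [γ] using h1)

end Curve
end LRSat

namespace LRSat
open Filter Topology Module

/-- A subspace with three bases adapted to the flags spanned by the `u i`, along which the Horn type
inequality for the thresholds `a` and the bound `r` fails. -/
def Viol {n : ℕ} {W : Type*} [AddCommGroup W] [Module ℂ W] (a : Fin 3 → Fin n → ℕ) (r : ℕ)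
    (u : Fin 3 → Fin n → W) : Prop :=
  ∃ d : ℕ, ∃ s : Fin 3 → Fin d → W, ∃ J : Fin 3 → (Fin d ↪o Fin n),
    (∀ i, LinearIndependent ℂ (s i)) ∧
    (∀ i i' k, s i k ∈ Submodule.span ℂ (Set.range (s i'))) ∧
    (∀ i k, s i k ∈ Submodule.span ℂ (u i '' Set.Iic (J i k))) ∧
    d * r < ∑ i, ∑ k, a i (J i k)

/-- Violations inside a subspace, with respect to induced flags, are violations. -/
theorem Viol.of_subspace {n d : ℕ} {W X : Type*} [AddCommGroup W] [Module ℂ W] [AddCommGroup X]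
    [Module ℂ X] {a : Fin 3 → Fin n → ℕ} {r : ℕ} {u : Fin 3 → Fin n → W} (f : X →ₗ[ℂ] W)
    (hf : Function.Injective f) (b : Fin 3 → Fin d → X) (J : Fin 3 → (Fin d ↪o Fin n))
    (hb : ∀ i k, f (b i k) ∈ Submodule.span ℂ (u i '' Set.Iic (J i k)))
    (h : Viol (fun i k => a i (J i k)) r b) : Viol a r u := by
  obtain ⟨e, s, J', h1, h2, h3, h4⟩ := h
  refine ⟨e, fun i k => f (s i k), fun i => (J' i).trans (J i), ?_, ?_, ?_, ?_⟩
  · intro i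
    exact (h1 i).map' f (LinearMap.ker_eq_bot.2 hf)
  · intro i i' k
    have := Submodule.mem_map_of_mem (f := f) (h2 i i' k)
    rw [Submodule.map_span, ← Set.range_comp] at this
    exact this
  · intro i k
    have := Submodule.mem_map_of_mem (f := f) (h3 i k)
    rw [Submodule.map_span] at this
    refine Submodule.span_le.2 ?_ this
    rintro _ ⟨_, ⟨l, hl, rfl⟩, rfl⟩
    refine Submodule.span_mono (Set.image_mono ?_) (hb i l)
    exact Set.Iic_subset_Iic.2 ((J i).monotone hl)
  · simpa using h4

theorem exists_adapted_basis {n : ℕ} {W : Type*} [AddCommGroup W] [Module ℂ W]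
    [FiniteDimensional ℂ W] (u : Fin n → W) (hu : LinearIndependent ℂ u) (hn : finrank ℂ W = n) (S : Submodule ℂ W) (d : ℕ)
    (hd : finrank ℂ S = d) :
    ∃ b : Fin n → W, ∃ J : Fin d ↪o Fin n, LinearIndependent ℂ b ∧
      (∀ j, b j ∈ Submodule.span ℂ (u '' Set.Iic j)) ∧
      (∀ j, u j ∈ Submodule.span ℂ (b '' Set.Iic j)) ∧ (∀ k, b (J k) ∈ S) ∧
      Submodule.span ℂ (Set.range fun k => b (J k)) = S := by
  classical
  have hex : ∀ j, ∃ w : W, w - u j ∈ Submodule.span ℂ (u '' Set.Iio j) ∧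
      ((∃ w ∈ S, w - u j ∈ Submodule.span ℂ (u '' Set.Iio j)) → w ∈ S) := by
    intro j
    by_cases h : ∃ w ∈ S, w - u j ∈ Submodule.span ℂ (u '' Set.Iio j)
    · obtain ⟨w, hw, hw'⟩ := h
      exact ⟨w, hw', fun _ => hw⟩
    · exact ⟨u j, by simp, fun h' => absurd h' h⟩
  choose b hb1 hb2 using hex
  let P : Finset (Fin n) := {j | ∃ w ∈ S, w - u j ∈ Submodule.span ℂ (u '' Set.Iio j)}
  have hP : ∀ j ∈ P, b j ∈ S := fun j hj => hb2 j (by simpa [P] using hj)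
  have hbu : ∀ j, b j ∈ Submodule.span ℂ (u '' Set.Iic j) := by
    intro j
    have h1 : u j ∈ Submodule.span ℂ (u '' Set.Iic j) := Submodule.subset_span ⟨j, by simp, rfl⟩
    have h2 := Submodule.span_mono (Set.image_mono Set.Iio_subset_Iic_self) (hb1 j)
    simpa using add_mem h2 h1
  have hub : ∀ j, u j ∈ Submodule.span ℂ (b '' Set.Iic j) := by
    intro j
    induction j using WellFoundedLT.induction with
    | ind j ih =>
      have h1 : b j ∈ Submodule.span ℂ (b '' Set.Iic j) := Submodule.subset_span ⟨j, by simp, rfl⟩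
      have h2 : Submodule.span ℂ (u '' Set.Iio j) ≤ Submodule.span ℂ (b '' Set.Iic j) := by
        rw [Submodule.span_le]
        rintro _ ⟨l, hl, rfl⟩
        exact Submodule.span_mono (Set.image_mono (Set.Iic_subset_Iic.2 (le_of_lt hl))) (ih l hl)
      have := sub_mem h1 (h2 (hb1 j))
      simpa using this
  have hspan_u : ⊤ ≤ Submodule.span ℂ (Set.range u) :=
    (hu.span_eq_top_of_card_eq_finrank' (by simp [hn])).ge
  have hspan_b : ⊤ ≤ Submodule.span ℂ (Set.range b) := by
    refine hspan_u.trans (Submodule.span_le.2 ?_)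
    rintro _ ⟨j, rfl⟩
    exact Submodule.span_mono (Set.image_subset_range _ _) (hub j)
  have hbind : LinearIndependent ℂ b :=
    linearIndependent_of_top_le_span_of_card_eq_finrank hspan_b (by simp [hn])
  have hS : S ≤ Submodule.span ℂ (b '' (P : Set (Fin n))) := by
    have key : ∀ m : ℕ, ∀ w ∈ S, w ∈ Submodule.span ℂ (u '' {j | (j : ℕ) < m}) →
        w ∈ Submodule.span ℂ (b '' (P : Set (Fin n))) := by
      intro m
      induction m with
      | zero => intro w _ hw; simp at hw; simp [hw]
      | succ m ih =>
        intro w hwS hw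
        by_cases hm : m < n
        · have hset : {j : Fin n | (j : ℕ) < m + 1} = insert ⟨m, hm⟩ {j : Fin n | (j : ℕ) < m} := by
            ext j; simp [Fin.ext_iff]; omega
          have hIio : {j : Fin n | (j : ℕ) < m} = Set.Iio ⟨m, hm⟩ := by
            ext j; simp [Fin.lt_def]
          rw [hset, Set.image_insert_eq, Submodule.mem_span_insert] at hw
          obtain ⟨c, z, hz, rfl⟩ := hw
          by_cases hc : c = 0
          · subst hc
            exact ih _ hwS (by simpa using hz)
          · have hmP : (⟨m, hm⟩ : Fin n) ∈ P := by
              simp only [P, Finset.mem_filter, Finset.mem_univ, true_and]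
              refine ⟨_, S.smul_mem c⁻¹ hwS, ?_⟩
              rw [← hIio]
              have : c⁻¹ • (c • u ⟨m, hm⟩ + z) - u ⟨m, hm⟩ = c⁻¹ • z := by
                rw [smul_add, inv_smul_smul₀ hc]; abel
              rw [this]
              exact Submodule.smul_mem _ _ hz
            have h1 := ih (c • u ⟨m, hm⟩ + z - c • b ⟨m, hm⟩)
              (sub_mem hwS (S.smul_mem c (hP _ hmP))) (by
                have h2 := hb1 ⟨m, hm⟩
                rw [← hIio] at h2
                have : c • u ⟨m, hm⟩ + z - c • b ⟨m, hm⟩ =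
                    z - c • (b ⟨m, hm⟩ - u ⟨m, hm⟩) := by
                  rw [smul_sub]; abel
                rw [this]
                exact sub_mem hz (Submodule.smul_mem _ _ h2))
            have h2 : c • b ⟨m, hm⟩ ∈ Submodule.span ℂ (b '' (P : Set (Fin n))) :=
              Submodule.smul_mem _ _ (Submodule.subset_span ⟨_, hmP, rfl⟩)
            simpa using add_mem h1 h2
        · refine ih w hwS (Submodule.span_mono (Set.image_mono ?_) hw)
          intro j _
          have := j.2
          simp; omega
    intro w hw
    refine key n w hw ?_
    have : {j : Fin n | (j : ℕ) < n} = Set.univ := by ext; simp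
    rw [this, Set.image_univ]
    exact hspan_u trivial
  have hspanP : Submodule.span ℂ (b '' (P : Set (Fin n))) = S := by
    refine le_antisymm (Submodule.span_le.2 ?_) hS
    rintro _ ⟨j, hj, rfl⟩
    exact hP j hj
  have hcard : P.card = d := by
    have h1 := finrank_span_eq_card (hbind.comp (fun j : P => (j : Fin n)) Subtype.val_injective)
    have h2 : Set.range (b ∘ fun j : P => (j : Fin n)) = b '' (P : Set (Fin n)) := by
      rw [Set.range_comp]; congr 1; ext; simp
    rw [h2, hspanP, hd] at h1
    simpa using h1.symm
  refine ⟨b, P.orderEmbOfFin hcard, hbind, hbu, hub, fun k => hP _ (P.orderEmbOfFin_mem hcard k), ?_⟩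
  rw [← hspanP]
  congr 1
  have := P.range_orderEmbOfFin hcard
  rw [← this, ← Set.range_comp]
  rfl

/-- Among linearly independent triples, the existence of a violation is a closed condition. -/
theorem exists_isClosed_viol {n : ℕ} (a : Fin 3 → Fin n → ℕ) (r : ℕ) :
    ∃ C : Set (Fin 3 → Fin n → EuclideanSpace ℂ (Fin n)), IsClosed C ∧
      ∀ u, (∀ i, LinearIndependent ℂ (u i)) → (Viol a r u ↔ u ∈ C) := by
  classical
  let D : (Fin n → EuclideanSpace ℂ (Fin n)) → ℂ := fun v => (Matrix.of fun j k => v j k).det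
  have hD : Continuous D := by
    refine Continuous.matrix_det ?_
    refine continuous_matrix fun j k => ?_
    simp only [Matrix.of_apply]
    fun_prop
  have hspan : ∀ (u : Fin n → EuclideanSpace ℂ (Fin n)), LinearIndependent ℂ u → ∀ (j : Fin n) (s : EuclideanSpace ℂ (Fin n)),
      (s ∈ Submodule.span ℂ (u '' Set.Iic j) ↔ ∀ l, j < l → D (Function.update u l s) = 0) := by
    intro u hu j s
    let DA : AlternatingMap ℂ (EuclideanSpace ℂ (Fin n)) ℂ (Fin n) :=
      Matrix.detRowAlternating.compLinearMap (WithLp.linearEquiv 2 ℂ (Fin n → ℂ)).toLinearMap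
    have hDA : ∀ v, DA v = D v := fun v => rfl
    rcases isEmpty_or_nonempty (Fin n) with hn | hn
    · exact isEmptyElim j
    let bs := basisOfLinearIndependentOfCardEqFinrank hu (by simp)
    have hbs : ⇑bs = u := coe_basisOfLinearIndependentOfCardEqFinrank hu (by simp)
    have hD0 : DA u ≠ 0 := by
      rw [← hbs, AlternatingMap.map_basis_ne_zero_iff]
      intro h0
      have h1 : DA (fun j => EuclideanSpace.single j 1) = 1 := by
        rw [hDA]
        have : (Matrix.of fun j k => (EuclideanSpace.single j (1 : ℂ) : EuclideanSpace ℂ (Fin n)) k)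
            = (1 : Matrix (Fin n) (Fin n) ℂ) := by
          ext j k
          simp [Matrix.one_apply, eq_comm]
        simp only [D, this, Matrix.det_one]
      simp [h0] at h1
    have hc : ∀ l, D (Function.update u l s) = bs.repr s l * DA u := by
      intro l
      have h1 : s = ∑ k, bs.repr s k • u k := by
        conv_lhs => rw [← bs.sum_repr s]
        rw [hbs]
      rw [← hDA]
      conv_lhs => rw [h1]
      rw [AlternatingMap.map_update_sum, Finset.sum_eq_single l]
      · rw [AlternatingMap.map_update_smul, Function.update_eq_self, smul_eq_mul]
      · intro k _ hk
        rw [AlternatingMap.map_update_smul, AlternatingMap.map_update_self _ _ hk.symm, smul_zero]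
      · simp
    have h2 := bs.mem_span_image (m := s) (s := Set.Iic j)
    rw [hbs] at h2
    rw [h2]
    constructor
    · intro h l hl
      rw [hc]
      have : bs.repr s l = 0 := by
        by_contra hne
        have := h (Finsupp.mem_support_iff.2 hne)
        simp at this
        omega
      rw [this, zero_mul]
    · intro h l hl
      have hl' := Finsupp.mem_support_iff.1 hl
      by_contra hcon
      have := h l (by simpa using hcon)
      rw [hc] at this
      exact mul_ne_zero hl' hD0 this
  let C : (d : Fin (n + 1)) → (Fin 3 → (Fin d ↪o Fin n)) → Set (Fin 3 → Fin n → EuclideanSpace ℂ (Fin n)) := fun d J =>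
    {u | d * r < ∑ i, ∑ k, a i (J i k) ∧ ∃ s : Fin 3 → Fin d → EuclideanSpace ℂ (Fin n),
      (∀ i, Orthonormal ℂ (s i)) ∧ (∀ i i' k, s i k = ∑ l, inner ℂ (s i' l) (s i k) • s i' l) ∧
      ∀ i k l, J i k < l → D (Function.update (u i) l (s i k)) = 0}
  have hC : ∀ d J, IsClosed (C d J) := by
    intro d J
    by_cases hlt : (d : ℕ) * r < ∑ i, ∑ k, a i (J i k)
    swap
    · have : C d J = ∅ := by
        ext u; simp only [C, hlt, Set.mem_ofPred_eq, false_and, Set.mem_empty_iff_false]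
      rw [this]
      exact isClosed_empty
    let K := Metric.closedBall (0 : Fin 3 → Fin d → EuclideanSpace ℂ (Fin n)) 1
    have : CompactSpace K := isCompact_iff_compactSpace.1 (isCompact_closedBall _ _)
    let E : Set ((Fin 3 → Fin n → EuclideanSpace ℂ (Fin n)) × K) :=
      {p | (∀ i k l, inner ℂ (p.2.1 i k) (p.2.1 i l) = if k = l then (1 : ℂ) else 0) ∧
        (∀ i i' k, p.2.1 i k = ∑ l, inner ℂ (p.2.1 i' l) (p.2.1 i k) • p.2.1 i' l) ∧
        ∀ i k l, J i k < l → D (Function.update (p.1 i) l (p.2.1 i k)) = 0}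
    have hx : ∀ i k, Continuous fun p : (Fin 3 → Fin n → EuclideanSpace ℂ (Fin n)) × K =>
        p.2.1 i k := fun i k =>
      (continuous_apply k).comp ((continuous_apply i).comp (continuous_subtype_val.comp continuous_snd))
    have hE : IsClosed E := by
      simp only [E, Set.ofPred_and, Set.ofPred_forall]
      refine IsClosed.inter ?_ (IsClosed.inter ?_ ?_)
      · refine isClosed_iInter fun i => isClosed_iInter fun k => isClosed_iInter fun l => ?_
        exact isClosed_eq ((hx i k).inner (hx i l)) continuous_const
      · refine isClosed_iInter fun i => isClosed_iInter fun i' => isClosed_iInter fun k => ?_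
        exact isClosed_eq (hx i k) (continuous_finsetSum _ fun l _ =>
          Continuous.fun_smul ((hx i' l).inner (hx i k)) (hx i' l))
      · refine isClosed_iInter fun i => isClosed_iInter fun k => isClosed_iInter fun l =>
          isClosed_iInter fun _ => ?_
        refine isClosed_eq (hD.comp ?_) continuous_const
        exact Continuous.update (by fun_prop) l (hx i k)
    have := isClosedMap_fst_of_compactSpace _ hE
    convert this using 1
    ext u
    simp only [C, hlt, true_and, Set.mem_ofPred_eq, Set.mem_image, E]
    constructor
    · rintro ⟨s, h1, h2, h3⟩
      refine ⟨⟨u, s, ?_⟩, ⟨fun i => orthonormal_iff_ite.1 (h1 i), h2, h3⟩, rfl⟩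
      rw [mem_closedBall_zero_iff, pi_norm_le_iff_of_nonneg zero_le_one]
      intro i
      rw [pi_norm_le_iff_of_nonneg zero_le_one]
      intro k
      rw [(h1 i).1 k]
    · rintro ⟨⟨u', s, hs⟩, ⟨h1, h2, h3⟩, rfl⟩
      exact ⟨s, fun i => orthonormal_iff_ite.2 (h1 i), h2, h3⟩
  refine ⟨⋃ d, ⋃ J, C d J, isClosed_iUnion_of_finite fun d => isClosed_iUnion_of_finite fun J => hC d J, ?_⟩
  intro u hu
  simp only [Set.mem_iUnion]
  constructor
  · rintro ⟨d, s, J, h1, h2, h3, h4⟩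
    have hdn : d ≤ n := by simpa using Fintype.card_le_of_embedding (J 0).toEmbedding
    let t : Fin 3 → Fin d → EuclideanSpace ℂ (Fin n) := fun i => InnerProductSpace.gramSchmidtNormed ℂ (s i)
    have ht : ∀ i, Orthonormal ℂ (t i) := fun i => InnerProductSpace.gramSchmidtNormed_orthonormal (h1 i)
    have hts : ∀ i, Submodule.span ℂ (Set.range (t i)) = Submodule.span ℂ (Set.range (s i)) := fun i => by
      rw [InnerProductSpace.span_gramSchmidtNormed_range, InnerProductSpace.span_gramSchmidt]
    refine ⟨⟨d, by omega⟩, J, h4, t, ht, ?_, ?_⟩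
    · intro i i' k
      have h5 : t i k ∈ Submodule.span ℂ (Set.range (t i')) := by
        have h6 : t i k ∈ Submodule.span ℂ (Set.range (s i)) := by
          rw [← hts i]; exact Submodule.subset_span ⟨k, rfl⟩
        rw [hts i']
        refine Submodule.span_le.2 ?_ h6
        rintro _ ⟨l, rfl⟩
        exact h2 i i' l
      obtain ⟨c, hc⟩ := (Submodule.mem_span_range_iff_exists_fun ℂ).1 h5
      rw [← hc]
      refine Finset.sum_congr rfl fun l _ => ?_
      rw [(ht i').inner_right_fintype]
    · intro i k
      rw [← hspan _ (hu i)]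
      have h5 : t i k ∈ Submodule.span ℂ (s i '' Set.Iic k) := by
        rw [← InnerProductSpace.span_gramSchmidt_Iic, ← InnerProductSpace.span_gramSchmidtNormed]
        exact Submodule.subset_span ⟨k, by simp, rfl⟩
      refine Submodule.span_le.2 ?_ h5
      rintro _ ⟨l, hl, rfl⟩
      exact Submodule.span_mono (Set.image_mono (Set.Iic_subset_Iic.2 ((J i).monotone hl))) (h3 i l)
  · rintro ⟨d, J, h4, s, h1, h2, h3⟩
    refine ⟨d, s, J, fun i => (h1 i).linearIndependent, fun i i' k => ?_, fun i k => ?_, h4⟩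
    · rw [h2 i i' k]
      exact Submodule.sum_mem _ fun l _ => Submodule.smul_mem _ _ (Submodule.subset_span ⟨l, rfl⟩)
    · rw [hspan _ (hu i)]
      exact h3 i k

end LRSat

namespace LRSat
open Filter Topology Module

section RankWitness
variable {P E F : Type*} [NormedAddCommGroup P] [NormedSpace ℂ P]
  [NormedAddCommGroup E] [NormedSpace ℂ E] [FiniteDimensional ℂ E]
  [NormedAddCommGroup F] [NormedSpace ℂ F] [FiniteDimensional ℂ F]

/-- Lower bounds for the rank in a differentiable family are detected by a differentiable
function. -/
theorem exists_rank_witness (N : P → E →L[ℂ] F) (hN : Differentiable ℂ N) (p₁ : P) :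
    ∃ f : P → ℂ, Differentiable ℂ f ∧ f p₁ ≠ 0 ∧ ∀ p, f p ≠ 0 →
      finrank ℂ (N p₁).toLinearMap.range ≤ finrank ℂ (N p).toLinearMap.range := by
  let k := finrank ℂ (N p₁).toLinearMap.range
  let v : Basis (Fin k) ℂ (N p₁).toLinearMap.range := finBasis ℂ _
  have hv : ∀ b, ∃ x : E, N p₁ x = v b := fun b => (v b).2
  choose α hα using hv
  let L : (Fin k → ℂ) →ₗ[ℂ] F := (Submodule.subtype _) ∘ₗ v.equivFun.symm.toLinearMap
  have hL : L.ker = ⊥ := by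
    rw [LinearMap.ker_eq_bot]
    exact (Subtype.val_injective).comp v.equivFun.symm.injective
  obtain ⟨β', hβ'⟩ := L.exists_leftInverse_of_injective hL
  let β : F →L[ℂ] (Fin k → ℂ) := LinearMap.toContinuousLinearMap β'
  have hβ : ∀ b, β (v b) = Pi.single b 1 := by
    intro b
    have h1 : L (Pi.single b 1) = v b := by simp [L]
    have := LinearMap.congr_fun hβ' (Pi.single b 1)
    rw [LinearMap.comp_apply, h1] at this
    exact this
  let B : P → Matrix (Fin k) (Fin k) ℂ := fun p => Matrix.of fun a b => β (N p (α a)) b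
  refine ⟨fun p => (B p).det, ?_, ?_, ?_⟩
  · have hB : ∀ a b, Differentiable ℂ fun p => B p a b := by
      intro a b
      have h1 : Differentiable ℂ fun p => N p (α a) := hN.clm_apply (differentiable_const _)
      have h2 : Differentiable ℂ fun p => β (N p (α a)) := β.differentiable.comp h1
      exact (differentiable_pi.1 h2) b
    simp only [Matrix.det_apply]
    fun_prop
  · have : B p₁ = 1 := by
      ext a b
      simp [B, hα, hβ, Matrix.one_apply, Pi.single_apply, eq_comm]
    simp [this]
  · intro p hp
    have h1 : LinearIndependent ℂ (B p).row := by
      rw [Matrix.linearIndependent_rows_iff_isUnit, Matrix.isUnit_iff_isUnit_det]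
      exact isUnit_iff_ne_zero.2 hp
    have h2 : LinearIndependent ℂ fun a => N p (α a) := LinearIndependent.of_comp β.toLinearMap h1
    have h3 := finrank_span_eq_card h2
    have h4 : Submodule.span ℂ (Set.range fun a => N p (α a)) ≤ (N p).toLinearMap.range := by
      rw [Submodule.span_le]
      rintro _ ⟨a, rfl⟩
      exact ⟨α a, rfl⟩
    have h5 := Submodule.finrank_mono h4
    rw [h3] at h5
    simpa [k] using h5

/-- The derivative of a family whose rank does not jump up maps the kernel to the range. -/
theorem deriv_apply_mem_range (Z : ℂ → E →L[ℂ] F) (hZ : DifferentiableAt ℂ Z 0)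
    (hr : ∀ᶠ t in 𝓝 (0 : ℂ), finrank ℂ (Z t).toLinearMap.range ≤ finrank ℂ (Z 0).toLinearMap.range)
    (w : E) (hw : Z 0 w = 0) : ∃ x, deriv Z 0 w = Z 0 x := by
  obtain ⟨z, hz, hz0, hz1⟩ := exists_kernel_curve Z hZ hr w hw
  have h1 : HasDerivAt (fun t => Z t (z t)) (deriv Z 0 (z 0) + Z 0 (deriv z 0)) 0 :=
    hZ.hasDerivAt.clm_apply hz.hasDerivAt
  have h2 : HasDerivAt (fun t => Z t (z t)) 0 0 :=
    (hasDerivAt_const (0 : ℂ) (0 : F)).congr_of_eventuallyEq hz1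
  have h3 := h1.unique h2
  refine ⟨-deriv z 0, ?_⟩
  rw [hz0] at h3
  rw [map_neg]
  exact eq_neg_of_add_eq_zero_left h3

end RankWitness

section Attain

/-- The index set of the linear conditions attached to the thresholds `a`. -/
abbrev Idx {n : ℕ} (a : Fin 3 → Fin n → ℕ) (r : ℕ) : Type :=
  {x : Fin 3 × Fin n × Fin r // (x.2.2 : ℕ) < a x.1 x.2.1}

/-- Triples of families of vectors, together with triples of endomorphisms. -/
abbrev Par (n r : ℕ) : Type :=
  (Fin 3 → Fin n → EuclideanSpace ℂ (Fin n)) × (Fin 3 → (Fin r → ℂ) →L[ℂ] (Fin r → ℂ))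

/-- The linear conditions attached to the thresholds `a`. -/
noncomputable def condMap {n : ℕ} (a : Fin 3 → Fin n → ℕ) (r : ℕ) (p : Par n r) :
    (EuclideanSpace ℂ (Fin n) →L[ℂ] (Fin r → ℂ)) →L[ℂ] (Idx a r → ℂ) :=
  ContinuousLinearMap.pi fun x =>
    (ContinuousLinearMap.proj x.1.2.2).comp ((p.2 x.1.1).comp
      (ContinuousLinearMap.apply ℂ (Fin r → ℂ) (p.1 x.1.1 x.1.2.1)))

theorem condMap_apply {n : ℕ} (a : Fin 3 → Fin n → ℕ) (r : ℕ) (p : Par n r)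
    (Z : EuclideanSpace ℂ (Fin n) →L[ℂ] (Fin r → ℂ)) (x : Idx a r) :
    condMap a r p Z x = p.2 x.1.1 (Z (p.1 x.1.1 x.1.2.1)) x.1.2.2 := rfl

theorem differentiable_condMap {n : ℕ} (a : Fin 3 → Fin n → ℕ) (r : ℕ) :
    Differentiable ℂ (condMap a r) := by
  have : ContDiff ℂ 1 (condMap a r) := by
    rw [contDiff_clm_apply_iff]
    intro Z
    rw [contDiff_pi]
    intro x
    have h1 : ContDiff ℂ 1 fun p : Par n r => Z (p.1 x.1.1 x.1.2.1) := by fun_prop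
    have h2 : ContDiff ℂ 1 fun p : Par n r => p.2 x.1.1 := by fun_prop
    have h3 := h2.clm_apply h1
    exact (contDiff_pi.1 h3) x.1.2.2
  exact this.differentiable one_ne_zero

theorem finrank_clm (n r : ℕ) :
    finrank ℂ (EuclideanSpace ℂ (Fin n) →L[ℂ] (Fin r → ℂ)) = n * r := by
  rw [← (LinearMap.toContinuousLinearMap (𝕜 := ℂ) (E := EuclideanSpace ℂ (Fin n))
    (F' := Fin r → ℂ)).finrank_eq, finrank_linearMap]
  simp

theorem card_idx_le {n : ℕ} (a : Fin 3 → Fin n → ℕ) (r : ℕ) :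
    Fintype.card (Idx a r) ≤ ∑ i, ∑ j, a i j := by
  let f : Idx a r → Σ i : Fin 3, Σ j : Fin n, Fin (a i j) := fun x => ⟨x.1.1, x.1.2.1, ⟨x.1.2.2, x.2⟩⟩
  have hf : Function.Injective f := by
    rintro ⟨⟨i, j, c⟩, h⟩ ⟨⟨i', j', c'⟩, h'⟩ he
    simp only [f, Sigma.mk.injEq] at he
    obtain ⟨rfl, he⟩ := he
    simp only [heq_eq_eq, Sigma.mk.injEq] at he
    obtain ⟨rfl, he⟩ := he
    simp only [heq_eq_eq, Fin.mk.injEq] at he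
    have : c = c' := Fin.ext he
    subst this
    rfl
  have := Fintype.card_le_of_injective f hf
  simpa using this

theorem isOpen_linearIndependent_triples (n : ℕ) :
    IsOpen {u : Fin 3 → Fin n → EuclideanSpace ℂ (Fin n) | ∀ i, LinearIndependent ℂ (u i)} := by
  have h := isOpen_setOfPred_linearIndependent (𝕜 := ℂ) (E := EuclideanSpace ℂ (Fin n)) (ι := Fin n)
  have := isOpen_iInter_of_finite fun i : Fin 3 =>
    h.preimage (continuous_apply (A := fun _ : Fin 3 => Fin n → EuclideanSpace ℂ (Fin n)) i)
  convert this using 1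
  ext u
  simp

/-- Vectors whose image has vanishing coordinates below `m`. -/
def condSub {r : ℕ} (B : (Fin r → ℂ) →L[ℂ] (Fin r → ℂ)) (m : ℕ) : Submodule ℂ (Fin r → ℂ) where
  carrier := {v | ∀ c : Fin r, (c : ℕ) < m → B v c = 0}
  add_mem' := by
    intro v w hv hw c hc
    simp [hv c hc, hw c hc]
  zero_mem' := by simp
  smul_mem' := by
    intro z v hv c hc
    simp [hv c hc]

theorem condSub_antitone {r : ℕ} (B : (Fin r → ℂ) →L[ℂ] (Fin r → ℂ)) {m m' : ℕ} (h : m ≤ m') :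
    condSub B m' ≤ condSub B m := fun _ hv c hc => hv c (lt_of_lt_of_le hc h)

theorem mkQ_mem_map_iff {V : Type*} [AddCommGroup V] [Module ℂ V] (I G : Submodule ℂ V) (v : V) :
    I.mkQ v ∈ G.map I.mkQ ↔ ∃ g ∈ G, v - g ∈ I := by
  rw [Submodule.mem_map]
  refine exists_congr fun g => and_congr_right fun _ => ?_
  rw [eq_comm, ← sub_eq_zero, ← map_sub, Submodule.mkQ_apply, Submodule.Quotient.mk_eq_zero]

theorem surjective_of_finrank_eq {A B C : Type*} [AddCommGroup A] [Module ℂ A]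
    [FiniteDimensional ℂ A] [AddCommGroup B] [Module ℂ B] [FiniteDimensional ℂ B]
    [AddCommGroup C] [Module ℂ C] [FiniteDimensional ℂ C] (h : finrank ℂ A = finrank ℂ B)
    (f : A →ₗ[ℂ] C) (g : B →ₗ[ℂ] C) (hf : Function.Injective f) (hg : Function.Surjective g) :
    Function.Surjective f := by
  have h1 := LinearMap.finrank_range_of_inj hf
  have h2 := LinearMap.finrank_range_le g
  rw [LinearMap.range_eq_top.2 hg, finrank_top] at h2
  have h3 := Submodule.finrank_le f.range
  rw [← LinearMap.range_eq_top]
  exact Submodule.eq_top_of_finrank_eq (by omega)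

theorem exists_prescribed_of_finrank_eq {A B X ι : Type*} [AddCommGroup A] [Module ℂ A]
    [FiniteDimensional ℂ A] [AddCommGroup B] [Module ℂ B] [FiniteDimensional ℂ B]
    [AddCommGroup X] [Module ℂ X] [FiniteDimensional ℂ X] [Fintype ι] {Y : ι → Type*}
    [∀ x, AddCommGroup (Y x)] [∀ x, Module ℂ (Y x)] [∀ x, FiniteDimensional ℂ (Y x)]
    (h : finrank ℂ A = finrank ℂ B) (π : ∀ x, X →ₗ[ℂ] Y x) (s : ι → A) (t : ι → B)
    (hs : ∀ m : A →ₗ[ℂ] X, (∀ x, π x (m (s x)) = 0) → m = 0)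
    (ht : ∀ y : ∀ x, Y x, ∃ m : B →ₗ[ℂ] X, ∀ x, π x (m (t x)) = y x) (y : ∀ x, Y x) :
    ∃ m : A →ₗ[ℂ] X, ∀ x, π x (m (s x)) = y x := by
  let f : (A →ₗ[ℂ] X) →ₗ[ℂ] ∀ x, Y x := LinearMap.pi fun x => π x ∘ₗ LinearMap.applyₗ (s x)
  let g : (B →ₗ[ℂ] X) →ₗ[ℂ] ∀ x, Y x := LinearMap.pi fun x => π x ∘ₗ LinearMap.applyₗ (t x)
  have hf : Function.Injective f := by
    rw [injective_iff_map_eq_zero]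
    exact fun m hm => hs m fun x => congrFun hm x
  have hg : Function.Surjective g := by
    intro y
    obtain ⟨m, hm⟩ := ht y
    exact ⟨m, funext hm⟩
  have := surjective_of_finrank_eq (by rw [finrank_linearMap, finrank_linearMap, h]) f g hf hg
  obtain ⟨m, hm⟩ := this y
  exact ⟨m, fun x => congrFun hm x⟩

theorem surjective_condMap_of_infinitesimal {n d r : ℕ} (a : Fin 3 → Fin n → ℕ)
    (ha : ∀ i, Antitone (a i)) (u : Fin 3 → Fin n → EuclideanSpace ℂ (Fin n))
    (A : Fin 3 → (Fin r → ℂ) →L[ℂ] (Fin r → ℂ))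
    (hu : ∀ i, LinearIndependent ℂ (u i)) (hA : ∀ i, Function.Surjective (A i))
    (S : Submodule ℂ (EuclideanSpace ℂ (Fin n))) (I : Submodule ℂ (Fin r → ℂ))
    (hd : finrank ℂ S = d) (b : Fin 3 → Fin n → EuclideanSpace ℂ (Fin n))
    (J : Fin 3 → (Fin d ↪o Fin n)) (hb : ∀ i, LinearIndependent ℂ (b i))
    (hbu : ∀ i j, b i j ∈ Submodule.span ℂ (u i '' Set.Iic j))
    (hub : ∀ i j, u i j ∈ Submodule.span ℂ (b i '' Set.Iic j))
    (hbS : ∀ i k, b i (J i k) ∈ S)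
    (hspan : ∀ i, Submodule.span ℂ (Set.range fun k => b i (J i k)) = S)
    (h1 : ∀ q : Fin 3 → EuclideanSpace ℂ (Fin n) →ₗ[ℂ] (Fin r → ℂ), (∀ i, ∀ w ∈ S, q i w ∈ I) →
      ∃ δ : EuclideanSpace ℂ (Fin n) →ₗ[ℂ] (Fin r → ℂ), (∀ w ∈ S, δ w ∈ I) ∧
        ∀ i j, δ (u i j) + q i (u i j) ∈ condSub (A i) (a i j))
    (h2 : ∀ ψ : EuclideanSpace ℂ (Fin n) →ₗ[ℂ] (Fin r → ℂ),
      (∀ i j, ψ (u i j) ∈ condSub (A i) (a i j)) → ∀ w ∈ S, ψ w ∈ I)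
    (h3 : ∃ u', Function.Surjective (condMap (fun i k => a i (J i k)) r (u', A))) :
    Function.Surjective (condMap a r (u, A)) := by
  have hbasis : ∀ (f : Fin n → EuclideanSpace ℂ (Fin n)), LinearIndependent ℂ f →
      ∃ B : Basis (Fin n) ℂ (EuclideanSpace ℂ (Fin n)), ⇑B = f := by
    intro f hf
    rcases isEmpty_or_nonempty (Fin n) with hn | hn
    · have : Subsingleton (EuclideanSpace ℂ (Fin n)) := by
        have : n = 0 := (Nat.eq_zero_or_pos n).resolve_right fun h => hn.false ⟨0, h⟩
        subst this
        infer_instance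
      exact ⟨Basis.empty _, Subsingleton.elim _ _⟩
    · exact ⟨basisOfLinearIndependentOfCardEqFinrank hf (by simp), by simp⟩
  have hdec : ∀ i (m : EuclideanSpace ℂ (Fin n) →ₗ[ℂ] (Fin r → ℂ)),
      (∀ k, I.mkQ (m (b i (J i k))) ∈ (condSub (A i) (a i (J i k))).map I.mkQ) →
      ∃ h : EuclideanSpace ℂ (Fin n) →ₗ[ℂ] (Fin r → ℂ),
        (∀ j, h (u i j) ∈ condSub (A i) (a i j)) ∧ ∀ w ∈ S, (m - h) w ∈ I := by
    intro i m hm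
    simp only [mkQ_mem_map_iff] at hm
    choose g hg hg' using hm
    obtain ⟨B, hB⟩ := hbasis (b i) (hb i)
    classical
    let h := B.constr ℂ (fun j => if hj : ∃ k, J i k = j then g hj.choose else 0)
    have hh : ∀ j, h (b i j) = if hj : ∃ k, J i k = j then g hj.choose else 0 := by
      intro j
      rw [← hB]
      exact B.constr_basis ℂ _ j
    have hh1 : ∀ k, h (b i (J i k)) = g k := by
      intro k
      have hk : ∃ k', J i k' = J i k := ⟨k, rfl⟩
      rw [hh, dif_pos hk]
      congr 1
      exact (J i).injective hk.choose_spec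
    have hh2 : ∀ j, h (b i j) ∈ condSub (A i) (a i j) := by
      intro j
      rw [hh]
      split_ifs with hj
      · have := hg hj.choose
        rwa [hj.choose_spec] at this
      · exact zero_mem _
    refine ⟨h, fun j => ?_, fun w hw => ?_⟩
    · have h4 := Submodule.mem_map_of_mem (f := h) (hub i j)
      rw [Submodule.map_span] at h4
      refine Submodule.span_le.2 ?_ h4
      rintro _ ⟨_, ⟨l, hl, rfl⟩, rfl⟩
      exact condSub_antitone _ (ha i hl) (hh2 l)
    · rw [← hspan i] at hw
      have h4 : Submodule.span ℂ (Set.range fun k => b i (J i k)) ≤ I.comap (m - h) := by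
        rw [Submodule.span_le]
        rintro _ ⟨k, rfl⟩
        simpa [hh1] using hg' k
      exact h4 hw
  let K : Fin 3 × Fin d → Submodule ℂ ((Fin r → ℂ) ⧸ I) := fun x =>
    (condSub (A x.1) (a x.1 (J x.1 x.2))).map I.mkQ
  obtain ⟨u', hu'⟩ := h3
  have hΘ' : ∀ y : (x : Fin 3 × Fin d) → ((Fin r → ℂ) ⧸ I) ⧸ K x,
      ∃ m : EuclideanSpace ℂ (Fin d) →ₗ[ℂ] ((Fin r → ℂ) ⧸ I),
        ∀ x, (K x).mkQ (m (u' x.1 x.2)) = y x := by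
    intro y
    have hy : ∀ x, ∃ v, (K x).mkQ (I.mkQ v) = y x := by
      intro x
      obtain ⟨q, hq⟩ := (K x).mkQ_surjective (y x)
      obtain ⟨v, rfl⟩ := I.mkQ_surjective q
      exact ⟨v, hq⟩
    choose v hv using hy
    obtain ⟨Z, hZ⟩ := hu' (fun x => A x.1.1 (v (x.1.1, x.1.2.1)) x.1.2.2)
    refine ⟨I.mkQ ∘ₗ Z.toLinearMap, fun x => ?_⟩
    rw [← hv x]
    change (K x).mkQ (I.mkQ (Z (u' x.1 x.2))) = _
    rw [← sub_eq_zero, ← map_sub, ← map_sub, Submodule.mkQ_apply, Submodule.Quotient.mk_eq_zero]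
    refine Submodule.mem_map_of_mem ?_
    intro c hc
    have := congrFun hZ ⟨(x.1, x.2, c), hc⟩
    rw [condMap_apply] at this
    rw [map_sub, Pi.sub_apply, sub_eq_zero]
    exact this
  have hlift : ∀ m : S →ₗ[ℂ] ((Fin r → ℂ) ⧸ I), ∃ m' : EuclideanSpace ℂ (Fin n) →ₗ[ℂ] (Fin r → ℂ),
      ∀ w : S, I.mkQ (m' w) = m w := by
    intro m
    obtain ⟨s, hs⟩ := I.mkQ.exists_rightInverse_of_surjective I.range_mkQ
    obtain ⟨e, he⟩ := S.subtype.exists_leftInverse_of_injective (Submodule.ker_subtype _)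
    refine ⟨s ∘ₗ m ∘ₗ e, fun w => ?_⟩
    have h4 : e w = w := LinearMap.congr_fun he w
    have h5 := LinearMap.congr_fun hs (m w)
    simp only [LinearMap.comp_apply, h4]
    exact h5
  have hΘ : ∀ m : S →ₗ[ℂ] ((Fin r → ℂ) ⧸ I),
      (∀ x : Fin 3 × Fin d, (K x).mkQ (m ⟨b x.1 (J x.1 x.2), hbS _ _⟩) = 0) → m = 0 := by
    intro m hm
    obtain ⟨m', hm'⟩ := hlift m
    have h4 : ∀ i, ∃ h : EuclideanSpace ℂ (Fin n) →ₗ[ℂ] (Fin r → ℂ),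
        (∀ j, h (u i j) ∈ condSub (A i) (a i j)) ∧ ∀ w ∈ S, (m' - h) w ∈ I := by
      intro i
      refine hdec i m' fun k => ?_
      have h6 : (K (i, k)).mkQ (m ⟨b i (J i k), hbS i k⟩) = 0 := hm (i, k)
      rw [← hm', Submodule.mkQ_apply, Submodule.Quotient.mk_eq_zero] at h6
      exact h6
    choose h hh hh' using h4
    obtain ⟨δ, hδ, hδ'⟩ := h1 (fun i => m' - h i) hh'
    have h7 := h2 (m' + δ) (fun i j => by
      have := add_mem (hh i j) (hδ' i j)
      have e : h i (u i j) + (δ (u i j) + (m' - h i) (u i j)) = (m' + δ) (u i j) := by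
        simp only [LinearMap.sub_apply, LinearMap.add_apply]; abel
      rwa [e] at this)
    ext w
    rw [← hm']
    have h8 := sub_mem (h7 w w.2) (hδ w w.2)
    simpa using h8
  intro y
  have hZi : ∀ i, ∃ Zi : EuclideanSpace ℂ (Fin n) →ₗ[ℂ] (Fin r → ℂ),
      ∀ j (c : Fin r) (hc : (c : ℕ) < a i j), A i (Zi (u i j)) c = y ⟨(i, j, c), hc⟩ := by
    intro i
    obtain ⟨B, hB⟩ := hbasis (u i) (hu i)
    choose v hv using hA i
    refine ⟨B.constr ℂ fun j => v fun c => if hc : (c : ℕ) < a i j then y ⟨(i, j, c), hc⟩ else 0, ?_⟩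
    intro j c hc
    have := B.constr_basis ℂ
      (fun j => v fun c => if hc : (c : ℕ) < a i j then y ⟨(i, j, c), hc⟩ else 0) j
    rw [hB] at this
    rw [this, hv, dif_pos hc]
  choose Zi hZi using hZi
  obtain ⟨m, hm⟩ := exists_prescribed_of_finrank_eq (by rw [hd]; simp) (fun x => (K x).mkQ) _ _
    hΘ hΘ' fun x => (K x).mkQ (I.mkQ (Zi x.1 (b x.1 (J x.1 x.2))))
  obtain ⟨m', hm'⟩ := hlift m
  have h4 : ∀ i, ∃ h : EuclideanSpace ℂ (Fin n) →ₗ[ℂ] (Fin r → ℂ),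
      (∀ j, h (u i j) ∈ condSub (A i) (a i j)) ∧ ∀ w ∈ S, (m' - Zi i - h) w ∈ I := by
    intro i
    refine hdec i (m' - Zi i) fun k => ?_
    have h6 : (K (i, k)).mkQ (m ⟨b i (J i k), hbS i k⟩) =
      (K (i, k)).mkQ (I.mkQ (Zi i (b i (J i k)))) := hm (i, k)
    rw [← sub_eq_zero, ← hm', ← map_sub, ← map_sub, Submodule.mkQ_apply,
      Submodule.Quotient.mk_eq_zero] at h6
    exact h6
  choose h hh hh' using h4
  obtain ⟨δ, hδ, hδ'⟩ := h1 (fun i => m' - Zi i - h i) hh'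
  refine ⟨LinearMap.toContinuousLinearMap (m' + δ), ?_⟩
  funext ⟨⟨i, j, c⟩, hc⟩
  rw [condMap_apply, ← hZi i j c hc]
  have := add_mem (hh i j) (hδ' i j)
  have e : h i (u i j) + (δ (u i j) + (m' - Zi i - h i) (u i j)) =
      (m' + δ) (u i j) - Zi i (u i j) := by
    simp only [LinearMap.sub_apply, LinearMap.add_apply]; abel
  rw [e] at this
  have h5 := this c hc
  rw [map_sub, Pi.sub_apply, sub_eq_zero] at h5
  exact h5

end Attain
end LRSat

namespace LRSat
open Filter Topology Module

theorem exists_max_of_bounded {α : Type*} (f : α → ℕ) (B : ℕ) (S : Set α) (hS : S.Nonempty)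
    (hB : ∀ x ∈ S, f x ≤ B) : ∃ x ∈ S, ∀ y ∈ S, f y ≤ f x := by
  have hb : BddAbove (f '' S) := ⟨B, by rintro _ ⟨x, hx, rfl⟩; exact hB x hx⟩
  obtain ⟨x, hx, hx'⟩ := Nat.sSup_mem (hS.image f) hb
  exact ⟨x, hx, fun y hy => hx' ▸ le_csSup hb ⟨y, hy, rfl⟩⟩

theorem sum_le_of_not_viol {n : ℕ} (a : Fin 3 → Fin n → ℕ) (r : ℕ)
    (u : Fin 3 → Fin n → EuclideanSpace ℂ (Fin n)) (hu : ∀ i, LinearIndependent ℂ (u i))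
    (hv : ¬ Viol a r u) : ∑ i, ∑ j, a i j ≤ n * r := by
  by_contra hcon
  refine hv ⟨n, u, fun _ => RelEmbedding.refl _, hu, fun i i' k => ?_, fun i k => ?_, ?_⟩
  · rw [(hu i').span_eq_top_of_card_eq_finrank' (by simp)]
    trivial
  · exact Submodule.subset_span ⟨k, by simp, rfl⟩
  · simpa using hcon

theorem exists_add_comp_of_map_ker {W V : Type*} [AddCommGroup W] [Module ℂ W]
    [AddCommGroup V] [Module ℂ V] (Z q : W →ₗ[ℂ] V) (hq : ∀ w, Z w = 0 → ∃ x, q w = Z x) :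
    ∃ (α : V →ₗ[ℂ] V) (γ : W →ₗ[ℂ] W), ∀ w, q w = α (Z w) + Z (γ w) := by
  obtain ⟨R, hR⟩ := exists_generalized_inverse Z
  refine ⟨q ∘ₗ R, R ∘ₗ (q - q ∘ₗ R ∘ₗ Z), fun w => ?_⟩
  obtain ⟨x, hx⟩ := hq (w - R (Z w)) (by rw [map_sub, hR, sub_self])
  have h1 : Z (R (q (w - R (Z w)))) = q (w - R (Z w)) := by rw [hx, hR]
  simp only [LinearMap.comp_apply, LinearMap.sub_apply, ← map_sub q]
  rw [h1, map_sub]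
  abel

/-- Kernel vectors of maximal rank on an open set where the rank of `condMap` is maximal
satisfy first order conditions. -/
theorem exists_infinitesimal {n r : ℕ} (a : Fin 3 → Fin n → ℕ) (O : Set (Par n r)) (hO : IsOpen O)
    (p : Par n r) (hp : p ∈ O)
    (hmax : ∀ p', finrank ℂ (condMap a r p').toLinearMap.range ≤
      finrank ℂ (condMap a r p).toLinearMap.range)
    (Z : EuclideanSpace ℂ (Fin n) →L[ℂ] (Fin r → ℂ)) (hZ : condMap a r p Z = 0)
    (hZmax : ∀ p' ∈ O, ∀ Z', condMap a r p' Z' = 0 →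
      finrank ℂ Z'.toLinearMap.range ≤ finrank ℂ Z.toLinearMap.range)
    (q : Fin 3 → EuclideanSpace ℂ (Fin n) →ₗ[ℂ] (Fin r → ℂ))
    (hq : ∀ i, ∀ w, Z w = 0 → ∃ x, q i w = Z x) :
    ∃ δ : EuclideanSpace ℂ (Fin n) →ₗ[ℂ] (Fin r → ℂ), (∀ w, Z w = 0 → ∃ x, δ w = Z x) ∧
        ∀ i j, δ (p.1 i j) + q i (p.1 i j) ∈ condSub (p.2 i) (a i j) := by
  choose α' γ' hαγ' using fun i => exists_add_comp_of_map_ker Z.toLinearMap (q i) (hq i)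
  let α : Fin 3 → (Fin r → ℂ) →L[ℂ] (Fin r → ℂ) := fun i => LinearMap.toContinuousLinearMap (α' i)
  let γ : Fin 3 → EuclideanSpace ℂ (Fin n) →L[ℂ] EuclideanSpace ℂ (Fin n) :=
    fun i => LinearMap.toContinuousLinearMap (γ' i)
  have hαγ : ∀ i w, q i w = α i (Z w) + Z (γ i w) := hαγ'
  let pt : ℂ → Par n r := fun t =>
    (fun i j => p.1 i j + t • γ i (p.1 i j), fun i => p.2 i + t • (p.2 i).comp (α i))
  have hpt : Differentiable ℂ pt := by
    refine Differentiable.prodMk ?_ ?_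
    · refine differentiable_pi.2 fun i => differentiable_pi.2 fun j => by fun_prop
    · refine differentiable_pi.2 fun i => by fun_prop
  have hpt0 : pt 0 = p :=
    Prod.ext (by simp [pt]) (funext fun i => by ext : 1; simp [pt])
  have hev : ∀ᶠ t in 𝓝 (0 : ℂ), pt t ∈ O :=
    hpt.continuous.continuousAt.eventually (hO.mem_nhds (by rw [hpt0]; exact hp))
  have hN : Differentiable ℂ fun t => condMap a r (pt t) :=
    Differentiable.comp (F := Par n r) (g := condMap a r) (f := pt) (differentiable_condMap a r) hpt
  obtain ⟨Zt, hZd, hZ0, hZt⟩ := exists_kernel_curve (fun t => condMap a r (pt t)) (hN 0)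
    (Eventually.of_forall fun t => by rw [hpt0]; exact hmax (pt t)) Z (by rw [hpt0]; exact hZ)
  have hr : ∀ᶠ t in 𝓝 (0 : ℂ),
      finrank ℂ (Zt t).toLinearMap.range ≤ finrank ℂ (Zt 0).toLinearMap.range := by
    filter_upwards [hev, hZt] with t h1 h2
    rw [hZ0]
    exact hZmax _ h1 _ h2
  refine ⟨(deriv Zt 0).toLinearMap, fun w hw => ?_, fun i j c hc => ?_⟩
  · have := deriv_apply_mem_range Zt hZd hr w (by rw [hZ0]; exact hw)
    rw [hZ0] at this
    exact this
  · have h1 : HasDerivAt (fun t : ℂ => p.1 i j + t • γ i (p.1 i j)) (γ i (p.1 i j)) 0 := by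
      simpa using ((hasDerivAt_id (0 : ℂ)).smul_const (γ i (p.1 i j))).const_add (p.1 i j)
    have h2 : HasDerivAt (fun t : ℂ => p.2 i + t • (p.2 i).comp (α i)) ((p.2 i).comp (α i)) 0 := by
      simpa using ((hasDerivAt_id (0 : ℂ)).smul_const ((p.2 i).comp (α i))).const_add (p.2 i)
    have h3 := h2.clm_apply (hZd.hasDerivAt.clm_apply h1)
    have h4 := (hasDerivAt_pi.1 h3) c
    have h5 : (fun t : ℂ => (p.2 i + t • (p.2 i).comp (α i))
        (Zt t (p.1 i j + t • γ i (p.1 i j))) c) =ᶠ[𝓝 0] fun _ => 0 := by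
      filter_upwards [hZt] with t ht
      exact congrFun ht ⟨(i, j, c), hc⟩
    have h6 := h4.unique ((hasDerivAt_const (0 : ℂ) (0 : ℂ)).congr_of_eventuallyEq h5)
    simp only [zero_smul, add_zero, hZ0] at h6
    change p.2 i (deriv Zt 0 (p.1 i j) + q i (p.1 i j)) c = 0
    rw [hαγ]
    have h7 : p.2 i + (0 : ℂ) • (p.2 i).comp (α i) = p.2 i := by
      ext : 1
      simp
    rw [h7] at h6
    simp only [ContinuousLinearMap.comp_apply, map_add, Pi.add_apply] at h6 ⊢
    linear_combination h6

theorem surjective_of_rank {E F : Type*} [NormedAddCommGroup E] [NormedSpace ℂ E]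
    [NormedAddCommGroup F] [NormedSpace ℂ F] [FiniteDimensional ℂ F] (N N' : E →L[ℂ] F)
    (h : Function.Surjective N)
    (hr : finrank ℂ N.toLinearMap.range ≤ finrank ℂ N'.toLinearMap.range) :
    Function.Surjective N' := by
  have h1 : N.toLinearMap.range = ⊤ := LinearMap.range_eq_top.2 h
  rw [h1, finrank_top] at hr
  have h2 : N'.toLinearMap.range = ⊤ :=
    Submodule.eq_top_of_finrank_eq (le_antisymm (Submodule.finrank_le _) hr)
  exact LinearMap.range_eq_top.1 h2

theorem exists_eq_of_rank_add_smul_le {E F : Type*} [NormedAddCommGroup E] [NormedSpace ℂ E]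
    [FiniteDimensional ℂ E] [NormedAddCommGroup F] [NormedSpace ℂ F] [FiniteDimensional ℂ F]
    (Z ψ : E →L[ℂ] F)
    (h : ∀ t : ℂ, finrank ℂ (Z + t • ψ).toLinearMap.range ≤ finrank ℂ Z.toLinearMap.range)
    (w : E) (hw : Z w = 0) : ∃ x, ψ w = Z x := by
  have hd : HasDerivAt (fun t : ℂ => Z + t • ψ) ψ 0 := by
    simpa using ((hasDerivAt_id (0 : ℂ)).smul_const ψ).const_add Z
  have hz : Z + (0 : ℂ) • ψ = Z := by rw [zero_smul, add_zero]
  have h1 := deriv_apply_mem_range (fun t : ℂ => Z + t • ψ) hd.differentiableAt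
    (Eventually.of_forall fun t => by rw [hz]; exact h t) w (by rw [hz]; exact hw)
  rw [hd.deriv, hz] at h1
  exact h1

/-- If some triple of flags admits no violation, then the conditions attached to the thresholds
`a` are independent for some choice of parameters. -/
theorem exists_surjective_condMap (r n : ℕ) : ∀ (a : Fin 3 → Fin n → ℕ), (∀ i, Antitone (a i)) →
    ∀ u : Fin 3 → Fin n → EuclideanSpace ℂ (Fin n), (∀ i, LinearIndependent ℂ (u i)) →
    ¬ Viol a r u → ∃ p : Par n r, Function.Surjective (condMap a r p) := by
  induction n using Nat.strong_induction_on with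
  | _ n ih =>
  intro a ha u₀ hu₀ hv₀
  by_contra hcon
  push Not at hcon
  obtain ⟨p₁, -, hp₁⟩ := exists_max_of_bounded
    (fun p : Par n r => finrank ℂ (condMap a r p).toLinearMap.range)
    (finrank ℂ (Idx a r → ℂ)) Set.univ ⟨0, trivial⟩ (fun p _ => Submodule.finrank_le _)
  obtain ⟨f, hf, hf1, hf2⟩ := exists_rank_witness (condMap a r) (differentiable_condMap a r) p₁
  have hA : ∀ i : Fin 3, ∃ φ : Par n r → ℂ, Differentiable ℂ φ ∧ (∃ p, φ p ≠ 0) ∧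
      ∀ p, φ p ≠ 0 → Function.Surjective (p.2 i) := by
    intro i
    obtain ⟨φ, h1, h2, h3⟩ := exists_rank_witness (fun p : Par n r => p.2 i) (by fun_prop)
      (0, fun _ => ContinuousLinearMap.id ℂ _)
    exact ⟨φ, h1, ⟨_, h2⟩, fun p hp => surjective_of_rank _ _ Function.surjective_id (h3 p hp)⟩
  choose fA hfA1 hfA2 hfA3 using hA
  have hJ : ∀ x : (Σ d : Fin n, Fin 3 → (Fin d ↪o Fin n)), ∃ φ : Par n r → ℂ, Differentiable ℂ φ ∧
      (∃ p, φ p ≠ 0) ∧ ∀ p, φ p ≠ 0 →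
      (∃ p' : Par x.1 r, Function.Surjective (condMap (fun i k => a i (x.2 i k)) r p')) →
      ∃ u', Function.Surjective (condMap (fun i k => a i (x.2 i k)) r (u', p.2)) := by
    intro x
    by_cases h : ∃ p' : Par x.1 r, Function.Surjective (condMap (fun i k => a i (x.2 i k)) r p')
    · obtain ⟨p', hp'⟩ := h
      obtain ⟨φ, h1, h2, h3⟩ := exists_rank_witness
        (fun p : Par n r => condMap (fun i k => a i (x.2 i k)) r (p'.1, p.2))
        (Differentiable.comp (𝕜 := ℂ) (F := Par x.1 r) (g := condMap (fun i k => a i (x.2 i k)) r)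
          (f := fun p : Par n r => (p'.1, p.2)) (differentiable_condMap _ _) 
          ((differentiable_const _).prodMk differentiable_snd)) (0, p'.2)
      exact ⟨φ, h1, ⟨_, h2⟩, fun p hp _ => ⟨p'.1, surjective_of_rank _ _ hp' (h3 p hp)⟩⟩
    · exact ⟨fun _ => 1, differentiable_const _, ⟨0, one_ne_zero⟩, fun p _ h' => absurd h' h⟩
  choose fJ hfJ1 hfJ2 hfJ3 using hJ
  obtain ⟨C, hC, hC'⟩ := exists_isClosed_viol a r
  let O₁ : Set (Par n r) := {p | (∀ i, LinearIndependent ℂ (p.1 i)) ∧ p.1 ∉ C}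
  have hO₁ : IsOpen O₁ :=
    ((isOpen_linearIndependent_triples n).inter hC.isOpen_compl).preimage continuous_fst
  have hO₁' : O₁.Nonempty := ⟨(u₀, 0), hu₀, fun h => hv₀ ((hC' _ hu₀).2 h)⟩
  let fs : Option (Fin 3 ⊕ (Σ d : Fin n, Fin 3 → (Fin d ↪o Fin n))) → Par n r → ℂ :=
    fun x => x.elim f (Sum.elim fA fJ)
  have hfs : ∀ x, Differentiable ℂ (fs x) ∧ ∃ p, fs x p ≠ 0 := by
    rintro (_ | _ | _)
    · exact ⟨hf, _, hf1⟩
    · exact ⟨hfA1 _, hfA2 _⟩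
    · exact ⟨hfJ1 _, hfJ2 _⟩
  have hfso : ∀ x, IsOpen {p | fs x p ≠ 0} := fun x =>
    isOpen_ne_fun (hfs x).1.continuous continuous_const
  have hO₂ : Dense (⋂ x, {p | fs x p ≠ 0}) :=
    dense_iInter_of_isOpen hfso fun x => by
      obtain ⟨p, hp⟩ := (hfs x).2
      exact dense_ne_zero _ (hfs x).1 p hp
  have hO₂' : IsOpen (⋂ x, {p | fs x p ≠ 0}) := isOpen_iInter_of_finite hfso
  let O : Set (Par n r) := O₁ ∩ ⋂ x, {p | fs x p ≠ 0}
  have hO : IsOpen O := hO₁.inter hO₂'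
  have hOne : O.Nonempty := hO₂.inter_open_nonempty _ hO₁ hO₁'
  have hOf : ∀ p ∈ O, ∀ x, fs x p ≠ 0 := fun p hp x => Set.mem_iInter.1 hp.2 x
  obtain ⟨p₀, hp₀⟩ := hOne
  obtain ⟨⟨p, Z⟩, ⟨hp, hZ⟩, hZmax⟩ := exists_max_of_bounded
    (fun x : Par n r × (EuclideanSpace ℂ (Fin n) →L[ℂ] (Fin r → ℂ)) =>
      finrank ℂ x.2.toLinearMap.range) (finrank ℂ (Fin r → ℂ))
    {x | x.1 ∈ O ∧ condMap a r x.1 x.2 = 0} ⟨(p₀, 0), hp₀, map_zero _⟩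
    (fun x _ => Submodule.finrank_le _)
  simp only at hp hZ
  have hu : ∀ i, LinearIndependent ℂ (p.1 i) := hp.1.1
  have hv : ¬ Viol a r p.1 := fun h => hp.1.2 ((hC' _ hu).1 h)
  have hZ0 : Z ≠ 0 := by
    intro hZ0
    have hinj : Function.Injective (condMap a r p) := by
      rw [injective_iff_map_eq_zero]
      intro Z' hZ'
      have h5 : finrank ℂ Z'.toLinearMap.range ≤ finrank ℂ Z.toLinearMap.range :=
        hZmax (p, Z') ⟨hp, hZ'⟩
      have h6 : Z.toLinearMap.range = ⊥ := by rw [hZ0]; exact LinearMap.range_zero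
      rw [h6, finrank_bot] at h5
      have h0 : finrank ℂ Z'.toLinearMap.range = 0 := Nat.le_zero.1 h5
      rw [Submodule.finrank_eq_zero, LinearMap.range_eq_bot] at h0
      ext1 w
      exact LinearMap.congr_fun h0 w
    refine hcon p ?_
    have h1 : finrank ℂ (Idx a r → ℂ) ≤
        finrank ℂ (EuclideanSpace ℂ (Fin n) →L[ℂ] (Fin r → ℂ)) := by
      rw [finrank_clm, finrank_fintype_fun_eq_card]
      exact (card_idx_le a r).trans (sum_le_of_not_viol a r p.1 hu hv)
    have h2 := LinearMap.finrank_range_of_inj (f := (condMap a r p).toLinearMap) hinj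
    have h3 := Submodule.finrank_le (condMap a r p).toLinearMap.range
    have h4 : (condMap a r p).toLinearMap.range = ⊤ :=
      Submodule.eq_top_of_finrank_eq (by omega)
    exact LinearMap.range_eq_top.1 h4
  let S := Z.toLinearMap.ker
  let I := Z.toLinearMap.range
  have hSlt : finrank ℂ S < n := by
    have h1 : S ≠ ⊤ := fun h => hZ0 (by
      ext1 w
      exact LinearMap.congr_fun (LinearMap.ker_eq_top.1 h) w)
    simpa using Submodule.finrank_lt h1
  choose b J hb hbu hub hbS hspan using fun i =>
    exists_adapted_basis (p.1 i) (hu i) (by simp) S (finrank ℂ S) rfl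
  have hmem : ∀ (q : EuclideanSpace ℂ (Fin n) →ₗ[ℂ] (Fin r → ℂ)),
      (∀ w ∈ S, q w ∈ I) ↔ ∀ w, Z w = 0 → ∃ x, q w = Z x := by
    intro q
    refine forall_congr' fun w => imp_congr Iff.rfl ?_
    exact exists_congr fun x => eq_comm
  refine hcon p (surjective_condMap_of_infinitesimal a ha p.1 p.2 hu
    (fun i => hfA3 i p (hOf p hp (some (Sum.inl i)))) S I rfl b J hb hbu hub hbS hspan ?_ ?_ ?_)
  · intro q hq
    obtain ⟨δ, h1, h2⟩ := exists_infinitesimal a O hO p hp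
      (fun p' => (hp₁ p' trivial).trans (hf2 p (hOf p hp none))) Z hZ
      (fun p' hp' Z' hZ' => hZmax (p', Z') ⟨hp', hZ'⟩) q fun i => (hmem _).1 (hq i)
    exact ⟨δ, (hmem _).2 h1, h2⟩
  · intro ψ hψ
    rw [hmem]
    intro w hw
    let ψ' : EuclideanSpace ℂ (Fin n) →L[ℂ] (Fin r → ℂ) := LinearMap.toContinuousLinearMap ψ
    refine exists_eq_of_rank_add_smul_le Z ψ' (fun t => ?_) w hw
    refine hZmax (p, Z + t • ψ') ⟨hp, ?_⟩
    have h2 : condMap a r p ψ' = 0 := by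
      funext x
      exact hψ _ _ _ x.2
    rw [map_add, map_smul, h2, hZ, smul_zero, add_zero]
  · refine hfJ3 ⟨⟨finrank ℂ S, hSlt⟩, J⟩ p (hOf p hp (some (Sum.inr _))) ?_
    let e : S ≃ₗ[ℂ] EuclideanSpace ℂ (Fin (finrank ℂ S)) := LinearEquiv.ofFinrankEq _ _ (by simp)
    refine ih _ hSlt _ (fun i => (ha i).comp_monotone (J i).monotone)
      (fun i k => e ⟨b i (J i k), hbS i k⟩) (fun i => ?_) fun hV => hv ?_
    · have h1 := (hb i).comp (J i) (J i).injective
      have h2 : LinearIndependent ℂ fun k => (⟨b i (J i k), hbS i k⟩ : S) :=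
        LinearIndependent.of_comp S.subtype h1
      exact h2.map' e.toLinearMap e.ker
    · refine Viol.of_subspace (S.subtype ∘ₗ e.symm.toLinearMap)
        (Subtype.val_injective.comp e.symm.injective) _ J ?_ hV
      intro i k
      simpa using hbu i (J i k)

/-- A version of `exists_surjective_condMap` with linearly independent families. -/
theorem exists_linearIndependent_surjective_condMap {r n : ℕ} (a : Fin 3 → Fin n → ℕ)
    (ha : ∀ i, Antitone (a i)) (u : Fin 3 → Fin n → EuclideanSpace ℂ (Fin n))
    (hu : ∀ i, LinearIndependent ℂ (u i)) (hv : ¬ Viol a r u) :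
    ∃ p : Par n r, (∀ i, LinearIndependent ℂ (p.1 i)) ∧ Function.Surjective (condMap a r p) := by
  obtain ⟨p₁, hp₁⟩ := exists_surjective_condMap r n a ha u hu hv
  obtain ⟨f, hf, hf1, hf2⟩ := exists_rank_witness (condMap a r) (differentiable_condMap a r) p₁
  have hO : IsOpen {p : Par n r | ∀ i, LinearIndependent ℂ (p.1 i)} :=
    (isOpen_linearIndependent_triples n).preimage continuous_fst
  obtain ⟨p, hp, hp'⟩ := (dense_ne_zero f hf p₁ hf1).inter_open_nonempty _ hO ⟨(u, 0), hu⟩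
  exact ⟨p, hp, surjective_of_rank _ _ hp₁ (hf2 p hp')⟩

end LRSat

namespace LRSat
open Module

section LRMatrix

variable {n r : ℕ} {R : Type*} [CommRing R]

/-- The matrix of the linear conditions attached to the thresholds `a`. -/
def lrMat (a : Fin 3 → Fin n → ℕ) (A : Fin 3 → Matrix (Fin r) (Fin r) R)
    (g : Fin 3 → Matrix (Fin n) (Fin n) R) : Matrix (Idx a r) (Fin r × Fin n) R :=
  Matrix.of fun x y => A x.1.1 x.1.2.2 y.1 * g x.1.1 y.2 x.1.2.1

theorem prod_idx {M : Type*} [CommMonoid M] (a : Fin 3 → Fin n → ℕ) (ha : ∀ i j, a i j ≤ r)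
    (f : Fin 3 → Fin n → M) : ∏ x : Idx a r, f x.1.1 x.1.2.1 = ∏ i, ∏ j, f i j ^ a i j := by
  rw [← Finset.prod_subtype (Finset.univ.filter fun x : Fin 3 × Fin n × Fin r => (x.2.2 : ℕ) < a x.1 x.2.1)
    (by simp) (fun x => f x.1 x.2.1), Finset.prod_filter, Fintype.prod_prod_type]
  refine Finset.prod_congr rfl fun i _ => ?_
  rw [Fintype.prod_prod_type]
  refine Finset.prod_congr rfl fun j _ => ?_
  simp only
  rw [← Finset.prod_filter, Finset.prod_const]
  congr 1
  simp [Fin.card_filter_val_lt, ha i j]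

theorem card_idx (a : Fin 3 → Fin n → ℕ) (ha : ∀ i j, a i j ≤ r) :
    Fintype.card (Idx a r) = ∑ i, ∑ j, a i j := by
  have h := prod_idx (M := Multiplicative ℕ) a ha fun _ _ => Multiplicative.ofAdd 1
  rw [Finset.prod_const, Finset.card_univ] at h
  have h2 := congrArg Multiplicative.toAdd h
  rw [toAdd_pow, toAdd_prod] at h2
  rw [toAdd_ofAdd, smul_eq_mul, mul_one] at h2
  rw [h2]
  refine Finset.sum_congr rfl fun i _ => ?_
  rw [toAdd_prod]
  refine Finset.sum_congr rfl fun j _ => ?_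
  rw [toAdd_pow, toAdd_ofAdd, smul_eq_mul, mul_one]

/-- The determinant of `lrMat`, for an identification of rows and columns. -/
noncomputable def lrDet (a : Fin 3 → Fin n → ℕ) (e : Idx a r ≃ Fin r × Fin n)
    (A : Fin 3 → Matrix (Fin r) (Fin r) R) (g : Fin 3 → Matrix (Fin n) (Fin n) R) : R :=
  ((lrMat a A g).submatrix id e).det

theorem lrDet_mul_left (a : Fin 3 → Fin n → ℕ) (e : Idx a r ≃ Fin r × Fin n)
    (A : Fin 3 → Matrix (Fin r) (Fin r) R) (g : Fin 3 → Matrix (Fin n) (Fin n) R)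
    (h : Matrix (Fin n) (Fin n) R) :
    lrDet a e A (fun i => h * g i) = h.det ^ r * lrDet a e A g := by
  have h1 : lrMat a A (fun i => h * g i) =
      lrMat a A g * Matrix.kroneckerMap (· * ·) (1 : Matrix (Fin r) (Fin r) R) h.transpose := by
    ext x y
    simp only [lrMat, Matrix.of_apply, Matrix.mul_apply, Fintype.sum_prod_type,
      Matrix.kroneckerMap_apply, Matrix.transpose_apply, Matrix.one_apply]
    rw [Finset.sum_eq_single y.1]
    · rw [Finset.mul_sum]
      refine Finset.sum_congr rfl fun k _ => ?_
      simp; ring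
    · intro c _ hc
      simp [hc]
    · simp
  rw [lrDet, h1, ← Matrix.submatrix_mul_equiv _ _ id e e, Matrix.det_mul,
    Matrix.det_submatrix_equiv_self, Matrix.det_kronecker, mul_comm]
  simp [lrDet]

theorem lrDet_mul_right (a : Fin 3 → Fin n → ℕ) (ha : ∀ i j, a i j ≤ r) (hanti : ∀ i, Antitone (a i))
    (e : Idx a r ≃ Fin r × Fin n) (A : Fin 3 → Matrix (Fin r) (Fin r) R)
    (g b : Fin 3 → Matrix (Fin n) (Fin n) R) (hb : ∀ i j k, k < j → b i j k = 0) :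
    lrDet a e A (fun i => g i * b i) = (∏ i, ∏ j, b i j j ^ a i j) * lrDet a e A g := by
  classical
  let T : Matrix (Idx a r) (Idx a r) R := Matrix.of fun x y =>
    if x.1.1 = y.1.1 ∧ x.1.2.2 = y.1.2.2 then b x.1.1 y.1.2.1 x.1.2.1 else 0
  have h1 : lrMat a A (fun i => g i * b i) = T * lrMat a A g := by
    ext x y
    obtain ⟨⟨i, j, c⟩, hx⟩ := x
    simp only [lrMat, Matrix.of_apply, Matrix.mul_apply, T]
    have h3 : ∀ z : Fin 3 × Fin n × Fin r, ¬ ((z.2.2 : ℕ) < a z.1 z.2.1) →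
        (if i = z.1 ∧ c = z.2.2 then b i z.2.1 j else 0) = 0 := by
      rintro ⟨i', k, c'⟩ hz
      split_ifs with h
      · obtain ⟨rfl, rfl⟩ := h
        refine hb _ _ _ ?_
        by_contra hk
        exact hz (lt_of_lt_of_le hx (hanti _ (not_lt.1 hk)))
      · rfl
    rw [← Finset.sum_subtype
      (Finset.univ.filter fun z : Fin 3 × Fin n × Fin r => (z.2.2 : ℕ) < a z.1 z.2.1) (by simp)
      (fun z => (if i = z.1 ∧ c = z.2.2 then b i z.2.1 j else 0) *
        (A z.1 z.2.2 y.1 * g z.1 y.2 z.2.1)),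
      Finset.sum_filter_of_ne (fun z _ hz => by
        by_contra hz'
        exact hz (by rw [h3 z hz', zero_mul])),
      Fintype.sum_prod_type, Finset.sum_eq_single i (fun i' _ hi' => by simp [hi'.symm]) (by simp),
      Fintype.sum_prod_type, Finset.mul_sum]
    refine Finset.sum_congr rfl fun k _ => ?_
    rw [Finset.sum_eq_single c (fun c' _ hc' => by simp [hc'.symm]) (by simp)]
    simp
    ring
  have h2 : T.det = ∏ i, ∏ j, b i j j ^ a i j := by
    have hT : T.BlockTriangular fun x => OrderDual.toDual x.1.2.1 := by
      intro x y hxy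
      simp only [T, Matrix.of_apply]
      split_ifs
      · exact hb _ _ _ hxy
      · rfl
    rw [hT.det_fintype, ← prod_idx a ha fun i j => b i j j,
      ← Fintype.prod_fiberwise (fun x : Idx a r => OrderDual.toDual x.1.2.1)]
    refine Finset.prod_congr rfl fun k _ => ?_
    have hd : T.toSquareBlock (fun x => OrderDual.toDual x.1.2.1) k =
        Matrix.diagonal fun x => b x.1.1.1 x.1.1.2.1 x.1.1.2.1 := by
      ext ⟨⟨⟨i, j, c⟩, hx⟩, hk⟩ ⟨⟨⟨i', j', c'⟩, hx'⟩, hk'⟩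
      have : j = j' := hk.trans hk'.symm
      subst this
      simp only [Matrix.toSquareBlock_def, T, Matrix.of_apply, Matrix.diagonal_apply]
      congr 1
      simp
    rw [hd, Matrix.det_diagonal]
  rw [lrDet, h1, ← Matrix.submatrix_mul_equiv _ _ id (Equiv.refl _) e, Matrix.det_mul]
  simp [h2, lrDet]

/-- The permutation matrix of the longest element. -/
def revMat (n : ℕ) (R : Type*) [CommRing R] : Matrix (Fin n) (Fin n) R :=
  Matrix.of fun i j => if j = Fin.rev i then 1 else 0

theorem mul_revMat_apply (h : Matrix (Fin n) (Fin n) R) (i j : Fin n) :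
    (h * revMat n R) i j = h i (Fin.rev j) := by
  rw [Matrix.mul_apply, Finset.sum_eq_single (Fin.rev j)]
  · simp [revMat]
  · intro k _ hk
    have : j ≠ Fin.rev k := fun h => hk (by rw [h, Fin.rev_rev])
    simp [revMat, this]
  · simp

theorem revMat_mul_apply (h : Matrix (Fin n) (Fin n) R) (i j : Fin n) :
    (revMat n R * h) i j = h (Fin.rev i) j := by
  rw [Matrix.mul_apply, Finset.sum_eq_single (Fin.rev i)]
  · simp [revMat]
  · intro k _ hk
    simp [revMat, hk]
  · simp

theorem revMat_mul_revMat : revMat n R * revMat n R = 1 := by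
  ext i j
  rw [revMat_mul_apply, Matrix.one_apply]
  simp only [revMat, Matrix.of_apply, Fin.rev_rev]
  exact if_congr eq_comm rfl rfl

/-- The thresholds attached to three partitions. -/
def thr (lam mu nu : Fin n → ℕ) (r : ℕ) : Fin 3 → Fin n → ℕ :=
  ![lam, mu, fun j => r - nu (Fin.rev j)]

theorem thr_antitone {lam mu nu : Fin n → ℕ} (hl : Antitone lam) (hm : Antitone mu)
    (hn : Antitone nu) (i : Fin 3) : Antitone (thr lam mu nu r i) := by
  fin_cases i
  · exact hl
  · exact hm
  · intro j k hjk
    exact Nat.sub_le_sub_left (hn (Fin.rev_le_rev.2 hjk)) r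

theorem thr_le {lam mu nu : Fin n → ℕ} (hl : ∀ j, lam j ≤ r) (hm : ∀ j, mu j ≤ r) (i : Fin 3)
    (j : Fin n) : thr lam mu nu r i j ≤ r := by
  fin_cases i
  · exact hl j
  · exact hm j
  · exact Nat.sub_le _ _

theorem sum_thr {lam mu nu : Fin n → ℕ} (hn : ∀ j, nu j ≤ r)
    (hsize : ∑ j, lam j + ∑ j, mu j = ∑ j, nu j) :
    ∑ i, ∑ j, thr lam mu nu r i j = r * n := by
  have h : ∑ j : Fin n, (r - nu (Fin.rev j)) + ∑ j, nu j = r * n := by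
    have h1 : ∑ j, nu (Fin.rev j) = ∑ j, nu j := Equiv.sum_comp Fin.revPerm nu
    rw [← h1, ← Finset.sum_add_distrib]
    simp [Nat.sub_add_cancel (hn _), mul_comm]
  rw [Fin.sum_univ_three]
  change ∑ j, lam j + ∑ j, mu j + ∑ j : Fin n, (r - nu (Fin.rev j)) = r * n
  omega

/-- The function `D` on pairs of matrices. -/
noncomputable def lrFun (a : Fin 3 → Fin n → ℕ) (e : Idx a r ≃ Fin r × Fin n)
    (A : Fin 3 → Matrix (Fin r) (Fin r) R) (X Y : Matrix (Fin n) (Fin n) R) : R :=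
  lrDet a e A ![X, Y, revMat n R]

variable {lam mu nu : Fin n → ℕ} (hl : Antitone lam) (hm : Antitone mu) (hn : Antitone nu)
  (hlr : ∀ j, lam j ≤ r) (hmr : ∀ j, mu j ≤ r) (hnr : ∀ j, nu j ≤ r)
  (e : Idx (thr lam mu nu r) r ≃ Fin r × Fin n) (A : Fin 3 → Matrix (Fin r) (Fin r) R)

include hl hm hn hlr hmr in
theorem lrFun_mul_right (X Y b c : Matrix (Fin n) (Fin n) R) (hb : ∀ j k, k < j → b j k = 0)
    (hc : ∀ j k, k < j → c j k = 0) :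
    lrFun _ e A (X * b) (Y * c) =
      (∏ j, b j j ^ lam j) * (∏ j, c j j ^ mu j) * lrFun _ e A X Y := by
  have h := lrDet_mul_right _ (thr_le hlr hmr) (thr_antitone hl hm hn) e A
    ![X, Y, revMat n R] ![b, c, 1] (by
      intro i j k hjk
      fin_cases i
      · exact hb j k hjk
      · exact hc j k hjk
      · exact Matrix.one_apply_ne hjk.ne')
  have h2 : (fun i => (![X, Y, revMat n R] : Fin 3 → Matrix (Fin n) (Fin n) R) i *
      (![b, c, 1] : Fin 3 → Matrix (Fin n) (Fin n) R) i) = ![X * b, Y * c, revMat n R] := by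
    ext i : 1
    fin_cases i
    · rfl
    · rfl
    · exact Matrix.mul_one _
  rw [h2] at h
  rw [lrFun, h, Fin.prod_univ_three]
  change (∏ j, b j j ^ lam j) * (∏ j, c j j ^ mu j) * (∏ j : Fin n,
    (1 : Matrix (Fin n) (Fin n) R) j j ^ (r - nu (Fin.rev j))) * lrFun _ e A X Y = _
  simp only [Matrix.one_apply_eq, one_pow, Finset.prod_const_one, mul_one]

include hl hm hn hlr hmr hnr in
theorem lrFun_mul_left (X Y h : Matrix (Fin n) (Fin n) R) (hh : ∀ j k, j < k → h j k = 0)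
    (hdet : h.det = 1) :
    lrFun _ e A (h * X) (h * Y) = (∏ j, h j j ^ nu j) * lrFun _ e A X Y := by
  have hb : ∀ j k : Fin n, (revMat n R * h * revMat n R) j k = h (Fin.rev j) (Fin.rev k) := by
    intro j k
    rw [mul_revMat_apply, revMat_mul_apply]
  have hd := lrDet_mul_right _ (thr_le hlr hmr) (thr_antitone hl hm hn) e A
    ![h * X, h * Y, revMat n R] ![1, 1, revMat n R * h * revMat n R] (by
      intro i j k hjk
      fin_cases i
      · exact Matrix.one_apply_ne hjk.ne'
      · exact Matrix.one_apply_ne hjk.ne'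
      · refine (hb j k).trans (hh _ _ ?_)
        exact Fin.rev_lt_rev.2 hjk)
  have h2 : (fun i => (![h * X, h * Y, revMat n R] : Fin 3 → Matrix (Fin n) (Fin n) R) i *
      (![1, 1, revMat n R * h * revMat n R] : Fin 3 → Matrix (Fin n) (Fin n) R) i) =
      fun i => h * (![X, Y, revMat n R] : Fin 3 → Matrix (Fin n) (Fin n) R) i := by
    ext i : 1
    fin_cases i
    · exact Matrix.mul_one _
    · exact Matrix.mul_one _
    · change revMat n R * (revMat n R * h * revMat n R) = h * revMat n R
      rw [← Matrix.mul_assoc, ← Matrix.mul_assoc, revMat_mul_revMat, Matrix.one_mul]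
  rw [h2, lrDet_mul_left, hdet, one_pow, one_mul, Fin.prod_univ_three] at hd
  have h3 : ∏ j : Fin n, h (Fin.rev j) (Fin.rev j) ^ (r - nu (Fin.rev j)) =
      ∏ j, h j j ^ (r - nu j) :=
    Equiv.prod_comp Fin.revPerm fun j => h j j ^ (r - nu j)
  change lrFun _ e A X Y = (∏ j, (1 : Matrix (Fin n) (Fin n) R) j j ^ lam j) *
    (∏ j, (1 : Matrix (Fin n) (Fin n) R) j j ^ mu j) *
    (∏ j : Fin n, (revMat n R * h * revMat n R) j j ^ (r - nu (Fin.rev j))) *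
    lrFun _ e A (h * X) (h * Y) at hd
  simp only [Matrix.one_apply_eq, one_pow, Finset.prod_const_one, one_mul, hb, h3] at hd
  have h4 : (∏ j, h j j ^ nu j) * ∏ j, h j j ^ (r - nu j) = 1 := by
    rw [← Finset.prod_mul_distrib]
    have : ∀ j, h j j ^ nu j * h j j ^ (r - nu j) = h j j ^ r := fun j => by
      rw [← pow_add, Nat.add_sub_cancel' (hnr j)]
    simp only [this]
    rw [Finset.prod_pow, ← Matrix.det_of_isLowerTriangular h (fun i j hij => hh _ _ hij), hdet,
      one_pow]
  have h5 := congrArg (fun t => (∏ j, h j j ^ nu j) * t) hd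
  simp only [← mul_assoc, h4, one_mul] at h5
  exact h5.symm

theorem map_lrFun {S : Type*} [CommRing S] (φ : R →+* S) (a : Fin 3 → Fin n → ℕ)
    (e : Idx a r ≃ Fin r × Fin n) (A : Fin 3 → Matrix (Fin r) (Fin r) R)
    (X Y : Matrix (Fin n) (Fin n) R) :
    φ (lrFun a e A X Y) = lrFun a e (fun i => (A i).map φ) (X.map φ) (Y.map φ) := by
  rw [lrFun, lrDet, RingHom.map_det, lrFun, lrDet]
  congr 1
  ext x y
  obtain ⟨⟨i, j, c⟩, hx⟩ := x
  change φ (A i c (e y).1 * (![X, Y, revMat n R] : Fin 3 → Matrix (Fin n) (Fin n) R) i (e y).2 j)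
    = φ (A i c (e y).1) *
      (![X.map φ, Y.map φ, revMat n S] : Fin 3 → Matrix (Fin n) (Fin n) S) i (e y).2 j
  rw [map_mul]
  congr 1
  fin_cases i
  · rfl
  · rfl
  · change φ (if _ then _ else _) = if _ then _ else _
    rw [apply_ite φ, map_one, map_zero]

end LRMatrix

section Nonvanishing

variable {n r : ℕ}

theorem exists_lrFun_ne_zero (a : Fin 3 → Fin n → ℕ) (ha : ∀ i, Antitone (a i))
    (har : ∀ i j, a i j ≤ r) (hsum : ∑ i, ∑ j, a i j = r * n)
    (u : Fin 3 → Fin n → EuclideanSpace ℂ (Fin n)) (hu : ∀ i, LinearIndependent ℂ (u i))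
    (hv : ¬ Viol a r u) :
    ∃ (e : Idx a r ≃ Fin r × Fin n) (A : Fin 3 → Matrix (Fin r) (Fin r) ℂ)
      (X Y : Matrix (Fin n) (Fin n) ℂ), lrFun a e A X Y ≠ 0 := by
  obtain ⟨p, hp, hsurj⟩ := exists_linearIndependent_surjective_condMap a ha u hu hv
  let e : Idx a r ≃ Fin r × Fin n := Fintype.equivOfCardEq (by
    rw [card_idx a har, hsum, Fintype.card_prod, Fintype.card_fin, Fintype.card_fin])
  let A : Fin 3 → Matrix (Fin r) (Fin r) ℂ := fun i =>
    Matrix.of fun c c' => p.2 i (Pi.single c' 1) c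
  let g : Fin 3 → Matrix (Fin n) (Fin n) ℂ := fun i => Matrix.of fun j' j => p.1 i j j'
  have h1 : Function.Surjective ((lrMat a A g).submatrix id e).mulVec := by
    intro t
    obtain ⟨Z, rfl⟩ := hsurj t
    refine ⟨fun x => Z (EuclideanSpace.single (e x).2 1) (e x).1, ?_⟩
    ext x
    have hZ : ∀ v : EuclideanSpace ℂ (Fin n), ∀ c,
        Z v c = ∑ j, v j * Z (EuclideanSpace.single j 1) c := by
      intro v c
      have hv : v = ∑ j, v j • EuclideanSpace.single j (1 : ℂ) := by
        ext k
        simp [Finset.sum_apply, Pi.single_apply]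
      conv_lhs => rw [hv]
      simp [map_sum, Finset.sum_apply]
    have hA : ∀ i (w : Fin r → ℂ) c, p.2 i w c = ∑ c', A i c c' * w c' := by
      intro i w c
      have hw : w = ∑ c', w c' • (Pi.single c' (1 : ℂ) : Fin r → ℂ) := by
        ext k
        simp [Finset.sum_apply, Pi.single_apply]
      conv_lhs => rw [hw]
      simp [map_sum, Finset.sum_apply, A, mul_comm]
    rw [condMap_apply, hA]
    simp only [Matrix.mulVec, dotProduct, Matrix.submatrix_apply, id]
    rw [Equiv.sum_comp e fun y => lrMat a A g x y * Z (EuclideanSpace.single y.2 1) y.1,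
      Fintype.sum_prod_type]
    refine Finset.sum_congr rfl fun c' _ => ?_
    rw [hZ, Finset.mul_sum]
    refine Finset.sum_congr rfl fun j _ => ?_
    simp only [lrMat, g, Matrix.of_apply]
    ring
  have h2 : lrDet a e A g ≠ 0 := by
    rw [Matrix.mulVec_surjective_iff_isUnit, Matrix.isUnit_iff_isUnit_det] at h1
    exact h1.ne_zero
  have h3 : IsUnit (g 2) := by
    rw [← Matrix.linearIndependent_cols_iff_isUnit]
    exact (hp 2).map' (WithLp.linearEquiv 2 ℂ (Fin n → ℂ)).toLinearMap
      (LinearMap.ker_eq_bot.2 (LinearEquiv.injective _))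
  have h3d : IsUnit (g 2).det := (Matrix.isUnit_iff_isUnit_det _).1 h3
  let h := revMat n ℂ * (g 2)⁻¹
  refine ⟨e, A, h * g 0, h * g 1, ?_⟩
  have h4 : ![h * g 0, h * g 1, revMat n ℂ] = fun i => h * g i := by
    ext i : 1
    fin_cases i
    · rfl
    · rfl
    · change revMat n ℂ = h * g 2
      rw [Matrix.mul_assoc, Matrix.nonsing_inv_mul _ h3d, Matrix.mul_one]
  rw [lrFun, h4, lrDet_mul_left]
  refine mul_ne_zero (pow_ne_zero _ ?_) h2
  have h5 : (revMat n ℂ).det * (revMat n ℂ).det = 1 := by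
    rw [← Matrix.det_mul, revMat_mul_revMat, Matrix.det_one]
  rw [Matrix.det_mul]
  refine mul_ne_zero (left_ne_zero_of_mul_eq_one h5) ?_
  rw [Matrix.det_nonsing_inv]
  exact (h3d.ringInverse).ne_zero

end Nonvanishing
end LRSat

namespace LRSat
open Module

section CommonEigenvector

variable {K E ι : Type*} [Field K] [IsAlgClosed K] [AddCommGroup E] [Module K E]
  [FiniteDimensional K E]

/-- Operators which stabilise a nonzero subspace and commute on it have a common eigenvector. -/
theorem exists_common_eigenvector (f : ι → E →ₗ[K] E) (Y : Submodule K E) (hY : Y ≠ ⊥)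
    (hst : ∀ i, ∀ y ∈ Y, f i y ∈ Y) (hcomm : ∀ i j, ∀ y ∈ Y, f i (f j y) = f j (f i y)) :
    ∃ y ∈ Y, y ≠ 0 ∧ ∀ i, ∃ c : K, f i y = c • y := by
  let P : Set (Submodule K E) := {p | p ≤ Y ∧ p ≠ ⊥ ∧ ∀ i, ∀ y ∈ p, f i y ∈ p}
  obtain ⟨p, ⟨hpY, hp0, hpst⟩, hmin⟩ := (wellFounded_lt (α := Submodule K E)).has_min P
    ⟨Y, le_rfl, hY, hst⟩
  obtain ⟨y, hy, hy0⟩ := p.exists_mem_ne_zero_of_ne_bot hp0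
  refine ⟨y, hpY hy, hy0, fun i => ?_⟩
  have : Nontrivial p := Submodule.nontrivial_iff_ne_bot.2 hp0
  obtain ⟨c, hc⟩ := Module.End.exists_eigenvalue ((f i).restrict (hpst i))
  obtain ⟨z, hz⟩ := hc.exists_hasEigenvector
  let q : Submodule K E := p ⊓ LinearMap.ker (f i - c • LinearMap.id)
  have hq : ∀ x, x ∈ q ↔ x ∈ p ∧ f i x = c • x := fun x => by
    simp [q, sub_eq_zero]
  have hqP : q ∈ P := by
    refine ⟨inf_le_left.trans hpY, ?_, fun j x hx => ?_⟩
    · intro h0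
      have hzq : (z : E) ∈ q := (hq z).2 ⟨z.2, by
        have := congrArg Subtype.val hz.apply_eq_smul
        simpa using this⟩
      rw [h0, Submodule.mem_bot] at hzq
      exact hz.2 (Subtype.ext hzq)
    · obtain ⟨h1, h2⟩ := (hq x).1 hx
      exact (hq _).2 ⟨hpst j x h1, by rw [hcomm i j x (hpY h1), h2, map_smul]⟩
  have hqp : q = p := by
    by_contra hne
    exact hmin q hqP (lt_of_le_of_ne inf_le_left hne)
  exact ⟨c, ((hq y).1 (hqp ▸ hy)).2⟩

end CommonEigenvector

section Filtration

variable {n : ℕ} {R : Type*} [CommRing R]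

/-- Matrices supported on the entries `(i, j)` with `j ≥ i + d`. -/
def UpperBy (d : ℕ) (M : Matrix (Fin n) (Fin n) R) : Prop :=
  ∀ i j : Fin n, (j : ℕ) < i + d → M i j = 0

theorem UpperBy.mul {d e : ℕ} {M N : Matrix (Fin n) (Fin n) R} (hM : UpperBy d M)
    (hN : UpperBy e N) : UpperBy (d + e) (M * N) := by
  intro i j hij
  rw [Matrix.mul_apply]
  refine Finset.sum_eq_zero fun k _ => ?_
  by_cases hk : (k : ℕ) < i + d
  · rw [hM i k hk, zero_mul]
  · rw [hN k j (by omega), mul_zero]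

theorem UpperBy.mono {d e : ℕ} {M : Matrix (Fin n) (Fin n) R} (hM : UpperBy d M) (h : e ≤ d) :
    UpperBy e M := fun i j hij => hM i j (by omega)

theorem UpperBy.add {d : ℕ} {M N : Matrix (Fin n) (Fin n) R} (hM : UpperBy d M)
    (hN : UpperBy d N) : UpperBy d (M + N) := fun i j hij => by
  rw [Matrix.add_apply, hM i j hij, hN i j hij, add_zero]

theorem UpperBy.sub {d : ℕ} {M N : Matrix (Fin n) (Fin n) R} (hM : UpperBy d M)
    (hN : UpperBy d N) : UpperBy d (M - N) := fun i j hij => by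
  rw [Matrix.sub_apply, hM i j hij, hN i j hij, sub_zero]

theorem UpperBy.smul {d : ℕ} {M : Matrix (Fin n) (Fin n) R} (hM : UpperBy d M) (c : R) :
    UpperBy d (c • M) := fun i j hij => by
  rw [Matrix.smul_apply, hM i j hij, smul_zero]

theorem upperBy_zero_one : UpperBy 0 (1 : Matrix (Fin n) (Fin n) R) := fun i j hij =>
  Matrix.one_apply_ne (by rintro rfl; omega)

theorem UpperBy.of_sub_one {d : ℕ} {M : Matrix (Fin n) (Fin n) R} (hM : UpperBy d (M - 1)) :
    UpperBy 0 M := by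
  have := (hM.mono (Nat.zero_le d)).add upperBy_zero_one
  rwa [sub_add_cancel] at this

theorem upperBy_zero_iff {M : Matrix (Fin n) (Fin n) R} :
    UpperBy 0 M ↔ M.BlockTriangular id := by
  constructor
  · intro h i j hij
    exact h i j (by simpa using hij)
  · intro h i j hij
    exact h (by simpa using hij)

theorem UpperBy.det {M : Matrix (Fin n) (Fin n) R} (hM : UpperBy 0 M) :
    M.det = ∏ i, M i i :=
  Matrix.det_of_isUpperTriangular (upperBy_zero_iff.1 hM)

theorem UpperBy.pow_sub {d : ℕ} (hd : 0 < d) {M : Matrix (Fin n) (Fin n) R}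
    (hM : UpperBy d (M - 1)) (k : ℕ) : UpperBy (d + 1) (M ^ k - (1 + (k : R) • (M - 1))) := by
  induction k with
  | zero => intro i j _; simp
  | succ k ih =>
    have h1 := (ih.mul hM.of_sub_one).mono (e := d + 1) (by omega)
    have h2 := ((hM.smul (k : R)).mul hM).mono (e := d + 1) (by omega)
    have h3 := h1.add h2
    convert h3 using 1
    rw [pow_succ]
    push_cast
    simp only [add_smul, one_smul, smul_mul_assoc, sub_mul, add_mul, mul_sub, smul_sub, one_mul,
      mul_one]
    abel

theorem UpperBy.inv {M : Matrix (Fin n) (Fin n) ℂ} (hM : UpperBy 0 M) (hdet : M.det = 1) :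
    UpperBy 0 M⁻¹ := by
  have : Invertible M := M.invertibleOfIsUnitDet (by rw [hdet]; exact isUnit_one)
  exact upperBy_zero_iff.2 (Matrix.blockTriangular_inv_of_blockTriangular (upperBy_zero_iff.1 hM))

end Filtration

section FixedVector

variable {n : ℕ} {X : Type*} [AddCommGroup X] [Module ℂ X] [FiniteDimensional ℂ X]
  (ρ : Representation ℂ (SL n) X)

/-- The vectors fixed by the `h`-th step of the lower central series of the unipotent group. -/
def fixedBy (h : ℕ) : Submodule ℂ X where
  carrier := {x | ∀ g : SL n, UpperBy h (g.val - 1) → ρ g x = x}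
  zero_mem' := fun g _ => map_zero _
  add_mem' := fun hx hy g hg => by rw [map_add, hx g hg, hy g hg]
  smul_mem' := fun c x hx g hg => by rw [map_smul, hx g hg]

variable {ρ} {h : ℕ}

omit [FiniteDimensional ℂ X] in
theorem eq_of_mem_fixedBy {a b : SL n} (ha : UpperBy 0 a.val) (hab : UpperBy h (b.val - a.val))
    {y : X} (hy : y ∈ fixedBy ρ h) : ρ a y = ρ b y := by
  have h1 : ρ (a⁻¹ * b) y = y := by
    refine hy _ ?_
    have h2 : (a⁻¹ * b).val - 1 = a.val⁻¹ * (b.val - a.val) := by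
      have hd : IsUnit a.val.det := by rw [a.2]; exact isUnit_one
      rw [Matrix.mul_sub, Matrix.nonsing_inv_mul _ hd, Matrix.SpecialLinearGroup.coe_mul]
      congr 2
      have : (a⁻¹).val * a.val = 1 := by
        rw [← Matrix.SpecialLinearGroup.coe_mul, inv_mul_cancel]; rfl
      exact (Matrix.inv_eq_left_inv this).symm
    rw [h2]
    simpa using (ha.inv a.2).mul hab
  calc ρ a y = ρ a (ρ (a⁻¹ * b) y) := by rw [h1]
    _ = ρ b y := by rw [← Module.End.mul_apply, ← map_mul, mul_inv_cancel_left]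

omit [FiniteDimensional ℂ X] in
theorem map_mem_fixedBy {a : SL n} (ha : UpperBy 0 a.val) {y : X} (hy : y ∈ fixedBy ρ h) :
    ρ a y ∈ fixedBy ρ h := by
  intro g hg
  rw [← Module.End.mul_apply, ← map_mul]
  refine (eq_of_mem_fixedBy ha ?_ hy).symm
  have := hg.mul ha
  rwa [add_zero, Matrix.sub_mul, Matrix.one_mul] at this

theorem exists_diag (hn : 0 < n) (hh : 0 < h) (k : ℕ) (hk : 0 < k) :
    ∃ t : SL n, UpperBy 0 t.val ∧ ∀ g : SL n, UpperBy h (g.val - 1) →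
      UpperBy (h + 1) ((g ^ k * t).val - (t * g).val) := by
  obtain ⟨b, hb⟩ := IsAlgClosed.exists_pow_nat_eq (k : ℂ) hh
  have hk0 : (k : ℂ) ≠ 0 := by exact_mod_cast hk.ne'
  have hb0 : b ≠ 0 := by
    rintro rfl
    rw [zero_pow hh.ne'] at hb
    exact hk0 hb.symm
  obtain ⟨κ, hκ⟩ := IsAlgClosed.exists_pow_nat_eq (∏ i : Fin n, b ^ (i : ℕ)) hn
  let d : Fin n → ℂ := fun i => κ * (b ^ (i : ℕ))⁻¹
  have hdet : (Matrix.diagonal d).det = 1 := by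
    rw [Matrix.det_diagonal, Finset.prod_mul_distrib, Finset.prod_inv_distrib, Finset.prod_const,
      Finset.card_univ, Fintype.card_fin, hκ]
    exact mul_inv_cancel₀ (Finset.prod_ne_zero_iff.2 fun i _ => pow_ne_zero _ hb0)
  have hup : UpperBy 0 (Matrix.diagonal d) := fun i j hij =>
    Matrix.diagonal_apply_ne _ (by rintro rfl; omega)
  let t : SL n := ⟨Matrix.diagonal d, hdet⟩
  refine ⟨t, hup, fun g hg => ?_⟩
  have h1 := (hg.pow_sub hh k).mul hup
  have h2 : UpperBy (h + 1) ((1 + (k : ℂ) • (g.val - 1)) * Matrix.diagonal d -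
      Matrix.diagonal d * g.val) := by
    intro i j hij
    have hg1 : g.val i j = (g.val - 1) i j + (1 : Matrix (Fin n) (Fin n) ℂ) i j := by
      simp
    rw [Matrix.sub_apply, Matrix.mul_diagonal, Matrix.diagonal_mul, hg1, Matrix.add_apply,
      Matrix.smul_apply, smul_eq_mul]
    by_cases hlt : (j : ℕ) < i + h
    · rw [hg i j hlt]
      by_cases hij' : i = j
      · subst hij'; ring
      · rw [Matrix.one_apply_ne hij']; ring
    · have hji : (j : ℕ) = i + h := by omega
      have hne : i ≠ j := by rintro rfl; omega
      have hd : d i = k * d j := by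
        simp only [d, hji, pow_add, hb]
        field_simp
      rw [Matrix.one_apply_ne hne, hd]
      ring
  have h3 := h1.add h2
  convert h3 using 1
  have h4 : (g ^ k * t).val = g.val ^ k * Matrix.diagonal d := by
    rw [Matrix.SpecialLinearGroup.coe_mul, Matrix.SpecialLinearGroup.coe_pow]
  have h5 : (t * g).val = Matrix.diagonal d * g.val := by
    rw [Matrix.SpecialLinearGroup.coe_mul]
  rw [h4, h5, Matrix.sub_mul]
  abel

theorem exists_root (hh : 0 < h) (k : ℕ) (hk : 0 < k) (g : SL n) (hg : UpperBy h (g.val - 1)) :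
    ∃ g' : SL n, UpperBy h (g'.val - 1) ∧ UpperBy (h + 1) (g.val - (g' ^ k).val) := by
  have hk0 : (k : ℂ) ≠ 0 := by exact_mod_cast hk.ne'
  let M : Matrix (Fin n) (Fin n) ℂ := 1 + (k : ℂ)⁻¹ • (g.val - 1)
  have hM : UpperBy h (M - 1) := by
    simp only [M, add_sub_cancel_left]
    exact hg.smul _
  have hdet : M.det = 1 := by
    rw [hM.of_sub_one.det]
    refine Finset.prod_eq_one fun i _ => ?_
    have := hM i i (by omega)
    rw [Matrix.sub_apply, Matrix.one_apply_eq, sub_eq_zero] at this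
    exact this
  let g' : SL n := ⟨M, hdet⟩
  refine ⟨g', hM, ?_⟩
  have h1 := (hM.pow_sub hh k).smul (-1)
  convert h1 using 1
  have h2 : (g' ^ k).val = M ^ k := Matrix.SpecialLinearGroup.coe_pow _ _
  rw [h2]
  simp only [M, add_sub_cancel_left, smul_smul, mul_inv_cancel₀ hk0, one_smul]
  simp

theorem pow_factorial_finrank_eq_one {f : X →ₗ[ℂ] X} {c : ℂ} (hc : c ≠ 0)
    (hf : ∀ k : ℕ, 0 < k → ∃ y, y ≠ 0 ∧ f y = c ^ k • y) :
    c ^ (finrank ℂ X).factorial = 1 := by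
  choose y hy0 hy using fun k : Fin (finrank ℂ X + 1) => hf (k + 1) (Nat.succ_pos _)
  have hinj : ¬ Function.Injective fun k : Fin (finrank ℂ X + 1) => c ^ ((k : ℕ) + 1) := by
    intro hinj
    have hli := Module.End.eigenvectors_linearIndependent' f _ hinj y fun k =>
      Module.End.hasEigenvector_iff.2 ⟨Module.End.mem_eigenspace_iff.2 (hy k), hy0 k⟩
    have := hli.fintype_card_le_finrank
    simp at this
  have key : ∀ a b : Fin (finrank ℂ X + 1), a < b → c ^ ((a : ℕ) + 1) = c ^ ((b : ℕ) + 1) →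
      c ^ (finrank ℂ X).factorial = 1 := by
    intro a b hab he
    have hab' : (a : ℕ) < b := hab
    have h1 : c ^ ((b : ℕ) - a) = 1 := by
      have h2 : c ^ ((b : ℕ) + 1) = c ^ ((a : ℕ) + 1) * c ^ ((b : ℕ) - a) := by
        rw [← pow_add]; congr 1; omega
      rw [h2] at he
      exact mul_left_cancel₀ (pow_ne_zero _ hc) (by rw [mul_one]; exact he.symm)
    obtain ⟨q, hq⟩ := Nat.dvd_factorial (show 0 < (b : ℕ) - a by omega)
      (show (b : ℕ) - a ≤ finrank ℂ X by omega)
    rw [hq, pow_mul, h1, one_pow]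
  rw [Function.not_injective_iff] at hinj
  obtain ⟨a, b, he, hne⟩ := hinj
  rcases lt_or_gt_of_ne hne with hlt | hlt
  · exact key a b hlt he
  · exact key b a hlt he.symm

theorem fixedBy_ne_bot_of_succ (hn : 0 < n) (hh : 0 < h) (hY : fixedBy ρ (h + 1) ≠ ⊥) :
    fixedBy ρ h ≠ ⊥ := by
  obtain ⟨y, hyY, hy0, hy⟩ := exists_common_eigenvector
    (fun g : {g : SL n // UpperBy h (g.val - 1)} => ρ g.1) (fixedBy ρ (h + 1)) hY
    (fun g y hy => map_mem_fixedBy g.2.of_sub_one hy) (fun g g' y hy => by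
      have h0 : ∀ a b : SL n, ρ a (ρ b y) = ρ (a * b) y := fun a b => by
        rw [map_mul, Module.End.mul_apply]
      rw [h0, h0]
      refine eq_of_mem_fixedBy ?_ ?_ hy
      · exact g.2.of_sub_one.mul g'.2.of_sub_one
      · have h1 := ((g'.2.mul g.2).sub (g.2.mul g'.2)).mono (e := h + 1) (by omega)
        convert h1 using 1
        simp only [Matrix.SpecialLinearGroup.coe_mul]
        noncomm_ring)
  choose c hc using hy
  have hc0 : ∀ g, c g ≠ 0 := by
    intro g h0
    have h1 := hc g
    rw [h0, zero_smul] at h1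
    have h2 := congrArg (ρ (g.1⁻¹)) h1
    rw [← Module.End.mul_apply, ← map_mul, inv_mul_cancel, map_one, map_zero] at h2
    exact hy0 h2
  have hpow : ∀ g, ∀ k, (ρ (g.1 ^ k)) y = c g ^ k • y := by
    intro g k
    induction k with
    | zero => simp
    | succ k ih =>
      rw [pow_succ, map_mul, Module.End.mul_apply, hc, map_smul, ih, smul_smul, pow_succ, mul_comm]
  have hfac : ∀ g, c g ^ (finrank ℂ X).factorial = 1 := by
    intro g
    refine pow_factorial_finrank_eq_one (f := ρ g.1) (hc0 g) fun k hk => ?_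
    obtain ⟨t, ht, htg⟩ := exists_diag (h := h) hn hh k hk
    have hti : UpperBy 0 (t⁻¹).val := by
      have h1 := ht.inv t.2
      have : (t⁻¹).val * t.val = 1 := by
        rw [← Matrix.SpecialLinearGroup.coe_mul, inv_mul_cancel]; rfl
      rwa [Matrix.inv_eq_left_inv this] at h1
    have hty : ρ (t⁻¹) y ∈ fixedBy ρ (h + 1) := map_mem_fixedBy hti hyY
    refine ⟨ρ (t⁻¹) y, fun h0 => hy0 ?_, ?_⟩
    · have h2 := congrArg (ρ t) h0
      rwa [← Module.End.mul_apply, ← map_mul, mul_inv_cancel, map_one, map_zero] at h2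
    · have h1 := eq_of_mem_fixedBy (a := t * g.1) (b := g.1 ^ k * t)
        (ht.mul g.2.of_sub_one) (htg g.1 g.2) hty
      have h2 := congrArg (ρ (t⁻¹)) h1
      simp only [← Module.End.mul_apply, ← map_mul] at h2
      rw [show t⁻¹ * (t * g.1 * t⁻¹) = g.1 * t⁻¹ by group,
        show t⁻¹ * (g.1 ^ k * t * t⁻¹) = t⁻¹ * g.1 ^ k by group, map_mul,
        map_mul, Module.End.mul_apply, Module.End.mul_apply, hpow, map_smul] at h2
      exact h2
  refine (Submodule.ne_bot_iff _).2 ⟨y, fun g hg => ?_, hy0⟩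
  obtain ⟨g', hg', hgg'⟩ := exists_root hh _ (Nat.factorial_pos (finrank ℂ X)) g hg
  have h1 : ρ (g' ^ (finrank ℂ X).factorial) y = ρ g y := by
    refine eq_of_mem_fixedBy ?_ hgg' hyY
    have : ∀ k, UpperBy 0 ((g' ^ k).val) := by
      intro k
      induction k with
      | zero => exact upperBy_zero_one
      | succ k ih => rw [pow_succ]; exact ih.mul hg'.of_sub_one
    exact this _
  rw [← h1, hpow ⟨g', hg'⟩, hfac, one_smul]

theorem fixedBy_ne_bot [Nontrivial X] (ρ : Representation ℂ (SL n) X) : fixedBy ρ 1 ≠ ⊥ := by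
  have htop : ∀ h, n ≤ h → fixedBy ρ h ≠ ⊥ := by
    intro h hh
    obtain ⟨x, hx⟩ := exists_ne (0 : X)
    refine (Submodule.ne_bot_iff _).2 ⟨x, fun g hg => ?_, hx⟩
    have : g = 1 := by
      ext i j
      have := hg i j (by omega)
      rwa [Matrix.sub_apply, sub_eq_zero] at this
    rw [this, map_one, Module.End.one_apply]
  rcases Nat.eq_zero_or_pos n with hn | hn
  · exact htop 1 (by omega)
  · have : ∀ k, fixedBy ρ (n - k + 1) ≠ ⊥ := by
      intro k
      induction k with
      | zero => exact htop _ (by omega)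
      | succ k ih =>
        by_cases hk : k < n
        · refine fixedBy_ne_bot_of_succ hn (Nat.succ_pos _) ?_
          have : n - (k + 1) + 1 + 1 = n - k + 1 := by omega
          rwa [this]
        · have : n - (k + 1) + 1 = n - k + 1 := by omega
          rwa [this]
    simpa using this n

/-- Every nonzero finite-dimensional representation of `SL(n)` (with no continuity assumption)
has a nonzero vector fixed by the upper unipotent subgroup. -/
theorem exists_fixed_vector [Nontrivial X] (ρ : Representation ℂ (SL n) X) :
    ∃ x, x ≠ 0 ∧ ∀ g, SLIsUniUpper g → ρ g x = x := by
  obtain ⟨x, hx, hx0⟩ := (Submodule.ne_bot_iff _).1 (fixedBy_ne_bot ρ)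
  refine ⟨x, hx0, fun g hg => hx g fun i j hij => ?_⟩
  rw [Matrix.sub_apply, sub_eq_zero]
  rcases lt_or_eq_of_le (Nat.lt_succ_iff.1 hij) with hlt | heq
  · rw [hg.2 i j hlt, Matrix.one_apply_ne (by rintro rfl; omega)]
  · have : j = i := Fin.ext heq
    subst this
    rw [hg.1, Matrix.one_apply_eq]

end FixedVector
end LRSat

namespace LRSat
open Module

section Lead

variable {n : ℕ} {R : Type*} [CommRing R]

/-- Leading principal minors. -/
def lead (k : Fin n) (X : Matrix (Fin n) (Fin n) R) : R :=
  (X.submatrix (Subtype.val : {i : Fin n // i ≤ k} → Fin n) Subtype.val).det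

theorem map_lead {S : Type*} [CommRing S] (φ : R →+* S) (k : Fin n)
    (X : Matrix (Fin n) (Fin n) R) : φ (lead k X) = lead k (X.map φ) := by
  rw [lead, RingHom.map_det]
  rfl

theorem lead_transpose (k : Fin n) (X : Matrix (Fin n) (Fin n) R) :
    lead k X.transpose = lead k X := by
  rw [lead, ← Matrix.det_transpose]
  rfl

theorem lead_upper {k : Fin n} {b : Matrix (Fin n) (Fin n) R} (hb : UpperBy 0 b) :
    lead k b = ∏ i : {i : Fin n // i ≤ k}, b i i := by
  rw [lead, Matrix.det_of_isUpperTriangular]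
  · rfl
  · intro i j hij
    exact upperBy_zero_iff.1 hb hij

theorem lead_mul_upper (k : Fin n) (X : Matrix (Fin n) (Fin n) R)
    {b : Matrix (Fin n) (Fin n) R} (hb : UpperBy 0 b) : lead k (X * b) = lead k X * lead k b := by
  rw [lead, lead, lead, ← Matrix.det_mul]
  congr 1
  ext i j
  simp only [Matrix.submatrix_apply, Matrix.mul_apply]
  rw [← Finset.sum_subtype (Finset.univ.filter fun l => l ≤ k) (by simp)
    (fun l => X i l * b l j), Finset.sum_filter_of_ne]
  intro l _ hl
  by_contra hlk
  refine hl ?_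
  rw [hb l j (by have := j.2; simp only [Fin.le_def] at *; omega), mul_zero]

/-- The exponents of the leading minors. -/
def gap (a : Fin n → ℕ) (k : Fin n) : ℕ := a k - if h : (k : ℕ) + 1 < n then a ⟨k + 1, h⟩ else 0

theorem sum_gap {a : Fin n → ℕ} (ha : Antitone a) (j : Fin n) :
    ∑ k ∈ Finset.univ.filter (fun k => j ≤ k), gap a k = a j := by
  obtain ⟨j, hj⟩ := j
  obtain ⟨m, hm⟩ : ∃ m, n - j = m := ⟨_, rfl⟩
  induction m generalizing j with
  | zero => omega
  | succ m ih =>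
    have hsplit : (Finset.univ.filter fun k : Fin n => ⟨j, hj⟩ ≤ k) =
        insert ⟨j, hj⟩ (Finset.univ.filter fun k : Fin n => j + 1 ≤ (k : ℕ)) := by
      ext k
      simp only [Finset.mem_filter, Finset.mem_univ, true_and, Finset.mem_insert, Fin.le_def,
        Fin.ext_iff]
      omega
    rw [hsplit, Finset.sum_insert (by simp)]
    by_cases h : j + 1 < n
    · have := ih (j + 1) h (by omega)
      rw [show (Finset.univ.filter fun k : Fin n => j + 1 ≤ (k : ℕ)) =
        Finset.univ.filter fun k : Fin n => ⟨j + 1, h⟩ ≤ k from rfl, this]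
      simp only [gap, h, dite_true]
      exact Nat.sub_add_cancel (ha (by simp [Fin.le_def]))
    · rw [Finset.sum_eq_zero]
      · simp [gap, h]
      · intro k hk
        have := k.2
        simp only [Finset.mem_filter] at hk
        omega

/-- The product of powers of leading minors of weight `a`. -/
def delta (a : Fin n → ℕ) (X : Matrix (Fin n) (Fin n) R) : R := ∏ k, lead k X ^ gap a k

theorem map_delta {S : Type*} [CommRing S] (φ : R →+* S) (a : Fin n → ℕ)
    (X : Matrix (Fin n) (Fin n) R) : φ (delta a X) = delta a (X.map φ) := by
  simp [delta, map_lead]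

theorem delta_transpose (a : Fin n → ℕ) (X : Matrix (Fin n) (Fin n) R) :
    delta a X.transpose = delta a X := by
  simp [delta, lead_transpose]

theorem delta_upper {a : Fin n → ℕ} (ha : Antitone a) {b : Matrix (Fin n) (Fin n) R}
    (hb : UpperBy 0 b) : delta a b = ∏ j, b j j ^ a j := by
  have h1 : ∀ k, lead k b ^ gap a k = ∏ j, if j ≤ k then b j j ^ gap a k else 1 := by
    intro k
    rw [lead_upper hb, ← Finset.prod_filter, Finset.prod_pow]
    congr 1
    exact (Finset.prod_subtype (Finset.univ.filter fun l => l ≤ k) (by simp)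
      (fun l => b l l)).symm
  rw [delta, Finset.prod_congr rfl fun k _ => h1 k, Finset.prod_comm]
  refine Finset.prod_congr rfl fun j _ => ?_
  rw [← Finset.prod_filter, Finset.prod_pow_eq_pow_sum, sum_gap ha]

theorem delta_mul_upper {a : Fin n → ℕ} (ha : Antitone a) (X : Matrix (Fin n) (Fin n) R)
    {b : Matrix (Fin n) (Fin n) R} (hb : UpperBy 0 b) :
    delta a (X * b) = (∏ j, b j j ^ a j) * delta a X := by
  rw [← delta_upper ha hb, delta, delta, delta, ← Finset.prod_mul_distrib]
  refine Finset.prod_congr rfl fun k _ => ?_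
  rw [lead_mul_upper k X hb, mul_pow, mul_comm]

theorem delta_lower_mul {a : Fin n → ℕ} (ha : Antitone a) (X : Matrix (Fin n) (Fin n) R)
    {y : Matrix (Fin n) (Fin n) R} (hy : UpperBy 0 y.transpose) :
    delta a (y * X) = (∏ j, y j j ^ a j) * delta a X := by
  rw [← delta_transpose, Matrix.transpose_mul, delta_mul_upper ha _ hy, delta_transpose]
  rfl

theorem delta_one {a : Fin n → ℕ} (ha : Antitone a) :
    delta a (1 : Matrix (Fin n) (Fin n) R) = 1 := by
  rw [delta_upper ha upperBy_zero_one]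
  simp

end Lead

section LU

variable {n : ℕ} {K : Type*} [Field K]

/-- A matrix with nonzero leading minors becomes lower unipotent after multiplication by an
upper triangular matrix. -/
theorem exists_upper_mul_lower (X : Matrix (Fin n) (Fin n) K) (hX : ∀ k, lead k X ≠ 0) :
    ∃ b : Matrix (Fin n) (Fin n) K, UpperBy 0 b ∧ UpperBy 0 (X * b).transpose ∧
      ∀ i, (X * b) i i = 1 := by
  let Y : ∀ j : Fin n, Matrix {i : Fin n // i ≤ j} {i : Fin n // i ≤ j} K := fun j =>
    X.submatrix Subtype.val Subtype.val
  let b : Matrix (Fin n) (Fin n) K := Matrix.of fun k j =>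
    if h : k ≤ j then (Y j)⁻¹ ⟨k, h⟩ ⟨j, le_rfl⟩ else 0
  have hb : ∀ i j, i ≤ j → (X * b) i j = (1 : Matrix (Fin n) (Fin n) K) i j := by
    intro i j hij
    have h1 : (Y j * (Y j)⁻¹) ⟨i, hij⟩ ⟨j, le_rfl⟩ =
        (1 : Matrix {i : Fin n // i ≤ j} {i : Fin n // i ≤ j} K) ⟨i, hij⟩ ⟨j, le_rfl⟩ := by
      rw [Matrix.mul_nonsing_inv _ (isUnit_iff_ne_zero.2 (hX j))]
    rw [Matrix.mul_apply, Matrix.one_apply] at h1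
    simp only [Subtype.mk.injEq] at h1
    rw [Matrix.one_apply, ← h1, Matrix.mul_apply]
    have h2 : ∀ k : {i : Fin n // i ≤ j}, Y j ⟨i, hij⟩ k * (Y j)⁻¹ k ⟨j, le_rfl⟩ =
        X i k * b k j := by
      intro k
      simp [b, Y, k.2]
    rw [Finset.sum_congr rfl fun k _ => h2 k,
      ← Finset.sum_subtype (Finset.univ.filter fun l => l ≤ j) (by simp)
        (fun l => X i l * b l j), Finset.sum_filter_of_ne]
    intro l _ hl
    by_contra hlk
    exact hl (by simp [b, hlk])
  refine ⟨b, ?_, ?_, fun i => ?_⟩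
  · intro i j hij
    have : ¬ i ≤ j := by simp only [Fin.le_def]; omega
    simp [b, this]
  · intro i j hij
    rw [Matrix.transpose_apply, hb j i (by simp only [Fin.le_def]; omega)]
    exact Matrix.one_apply_ne (by rintro rfl; omega)
  · rw [hb i i le_rfl, Matrix.one_apply_eq]

end LU

section LinearSubstitution

open MvPolynomial

variable {σ : Type*} [Fintype σ] [DecidableEq σ]

/-- Linear substitution in polynomials. -/
noncomputable def lsub (L : Matrix σ σ ℂ) : MvPolynomial σ ℂ →ₐ[ℂ] MvPolynomial σ ℂ :=
  aeval fun i => ∑ j, C (L i j) * X j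

omit [DecidableEq σ] in
theorem eval_lsub (L : Matrix σ σ ℂ) (p : MvPolynomial σ ℂ) (x : σ → ℂ) :
    eval x (lsub L p) = eval (L.mulVec x) p := by
  rw [lsub, MvPolynomial.aeval_def, MvPolynomial.algebraMap_eq, eval_eval₂]
  have : (eval x).comp C = RingHom.id ℂ := by ext; simp
  rw [this]
  simp [MvPolynomial.eval₂_id]
  rfl

omit [DecidableEq σ] in
theorem lsub_lsub (L L' : Matrix σ σ ℂ) (p : MvPolynomial σ ℂ) :
    lsub L (lsub L' p) = lsub (L' * L) p := by
  refine MvPolynomial.funext fun x => ?_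
  simp only [eval_lsub, Matrix.mulVec_mulVec]

theorem lsub_one (p : MvPolynomial σ ℂ) : lsub (1 : Matrix σ σ ℂ) p = p := by
  refine MvPolynomial.funext fun x => ?_
  simp only [eval_lsub, Matrix.one_mulVec]

omit [DecidableEq σ] in
theorem isHomogeneous_lsub (L : Matrix σ σ ℂ) {p : MvPolynomial σ ℂ} {d : ℕ}
    (hp : p.IsHomogeneous d) : (lsub L p).IsHomogeneous d := by
  have h := hp.aeval (fun i => ∑ j, C (L i j) * X j) (n := 1) fun i =>
    IsHomogeneous.sum _ _ _ fun j _ => by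
      have := (isHomogeneous_C σ (L i j)).mul (isHomogeneous_X ℂ j)
      simpa using this
  rwa [one_mul] at h

instance finiteDimensional_homogeneousSubmodule (d : ℕ) :
    FiniteDimensional ℂ (homogeneousSubmodule σ ℂ d) := by
  have h : homogeneousSubmodule σ ℂ d ≤ restrictTotalDegree σ ℂ d := fun p hp => by
    rw [mem_restrictTotalDegree]
    exact IsHomogeneous.totalDegree_le hp
  exact Submodule.finiteDimensional_of_le h

/-- The representation on homogeneous polynomials given by linear substitutions. -/
noncomputable def homRep {n : ℕ} (d : ℕ) (L : SL n → Matrix σ σ ℂ) (h1 : L 1 = 1)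
    (hmul : ∀ g h, L (g * h) = L h * L g) :
    Representation ℂ (SL n) (homogeneousSubmodule σ ℂ d) where
  toFun g := (lsub (L g)).toLinearMap.restrict fun _ hp => isHomogeneous_lsub (L g) hp
  map_one' := by
    refine LinearMap.ext fun p => Subtype.ext ?_
    change lsub (L 1) (p : MvPolynomial σ ℂ) = p
    rw [h1, lsub_one]
  map_mul' g h := by
    refine LinearMap.ext fun p => Subtype.ext ?_
    change lsub (L (g * h)) (p : MvPolynomial σ ℂ) = lsub (L g) (lsub (L h) p)
    rw [hmul, lsub_lsub]

end LinearSubstitution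
end LRSat

namespace LRSat
open Module MvPolynomial

section MatrixPolynomials

variable {n : ℕ}

/-- Evaluation of a polynomial in the matrix entries. -/
noncomputable def ev (X : Matrix (Fin n) (Fin n) ℂ) : MvPolynomial (Fin n × Fin n) ℂ →+* ℂ :=
  eval fun q => X q.1 q.2

/-- The generic matrix. -/
noncomputable abbrev gen (n : ℕ) : Matrix (Fin n) (Fin n) (MvPolynomial (Fin n × Fin n) ℂ) :=
  Matrix.mvPolynomialX (Fin n) (Fin n) ℂ

theorem gen_map_ev (X : Matrix (Fin n) (Fin n) ℂ) : (gen n).map (ev X) = X := by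
  ext i j
  simp [ev, Matrix.mvPolynomialX]

theorem ev_ext {p q : MvPolynomial (Fin n × Fin n) ℂ} (h : ∀ X, ev X p = ev X q) : p = q :=
  MvPolynomial.funext fun x => h (Matrix.of fun i j => x (i, j))

/-- The linear map `X ↦ h * X` on matrices. -/
def lmat (h : Matrix (Fin n) (Fin n) ℂ) : Matrix (Fin n × Fin n) (Fin n × Fin n) ℂ :=
  Matrix.kroneckerMap (· * ·) h 1

/-- The linear map `X ↦ X * h` on matrices. -/
def rmat (h : Matrix (Fin n) (Fin n) ℂ) : Matrix (Fin n × Fin n) (Fin n × Fin n) ℂ :=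
  Matrix.kroneckerMap (· * ·) 1 h.transpose

theorem ev_lsub_lmat (h X : Matrix (Fin n) (Fin n) ℂ) (p : MvPolynomial (Fin n × Fin n) ℂ) :
    ev X (lsub (lmat h) p) = ev (h * X) p := by
  rw [ev, eval_lsub, ev]
  congr 2
  ext ⟨i, j⟩
  simp [Matrix.mulVec, dotProduct, Fintype.sum_prod_type, lmat, Matrix.one_apply,
    Matrix.mul_apply]

theorem ev_lsub_rmat (h X : Matrix (Fin n) (Fin n) ℂ) (p : MvPolynomial (Fin n × Fin n) ℂ) :
    ev X (lsub (rmat h) p) = ev (X * h) p := by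
  rw [ev, eval_lsub, ev]
  congr 2
  ext ⟨i, j⟩
  simp [Matrix.mulVec, dotProduct, Fintype.sum_prod_type, rmat, Matrix.one_apply,
    Matrix.mul_apply, mul_comm]

theorem lmat_transpose (h : Matrix (Fin n) (Fin n) ℂ) :
    (lmat h).transpose = lmat h.transpose := by
  ext ⟨i, j⟩ ⟨k, l⟩
  simp [lmat, Matrix.one_apply, eq_comm]

theorem lmat_one : lmat (1 : Matrix (Fin n) (Fin n) ℂ) = 1 := by
  ext ⟨i, j⟩ ⟨k, l⟩
  simp [lmat, Matrix.one_apply, ite_and]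
  split_ifs <;> rfl

theorem rmat_one : rmat (1 : Matrix (Fin n) (Fin n) ℂ) = 1 := by
  ext ⟨i, j⟩ ⟨k, l⟩
  simp [rmat, Matrix.one_apply, ite_and]
  split_ifs <;> rfl

theorem lmat_mul (g h : Matrix (Fin n) (Fin n) ℂ) : lmat (g * h) = lmat g * lmat h := by
  rw [lmat, lmat, lmat, ← Matrix.mul_kronecker_mul, one_mul]

theorem rmat_mul (g h : Matrix (Fin n) (Fin n) ℂ) : rmat (g * h) = rmat h * rmat g := by
  rw [rmat, rmat, rmat, Matrix.transpose_mul, ← Matrix.mul_kronecker_mul, one_mul]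

theorem exists_scale (X : Matrix (Fin n) (Fin n) ℂ) (hX : X.det ≠ 0) :
    ∃ (c : ℂ) (g : SL n), c ≠ 0 ∧ g.val = c • X := by
  rcases Nat.eq_zero_or_pos n with rfl | hn
  · exact ⟨1, 1, one_ne_zero, by ext i; exact i.elim0⟩
  · obtain ⟨z, hz⟩ := IsAlgClosed.exists_pow_nat_eq (X.det)⁻¹ hn
    have hdet : (z • X).det = 1 := by
      rw [Matrix.det_smul, Fintype.card_fin, hz, inv_mul_cancel₀ hX]
    refine ⟨z, ⟨z • X, hdet⟩, ?_, rfl⟩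
    rintro rfl
    rw [zero_pow hn.ne'] at hz
    exact inv_ne_zero hX hz.symm

theorem ev_smul {p : MvPolynomial (Fin n × Fin n) ℂ} {d : ℕ} (hp : p.IsHomogeneous d) (c : ℂ)
    (X : Matrix (Fin n) (Fin n) ℂ) : ev (c • X) p = c ^ d * ev X p := by
  rw [ev, eval_eq, ev, eval_eq, Finset.mul_sum]
  refine Finset.sum_congr rfl fun α hα => ?_
  have := hp (mem_support_iff.1 hα)
  have h2 : c ^ d = ∏ i ∈ α.support, c ^ α i := by
    rw [Finset.prod_pow_eq_pow_sum, ← this]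
    congr 1
    simp [Finsupp.weight_apply, Finsupp.sum]
  rw [h2, mul_left_comm, ← Finset.prod_mul_distrib]
  congr 1
  exact Finset.prod_congr rfl fun i _ => by simp [mul_pow]

theorem homogeneous_ext {p q : MvPolynomial (Fin n × Fin n) ℂ} {d : ℕ}
    (hp : p.IsHomogeneous d) (hq : q.IsHomogeneous d)
    (h : ∀ g : SL n, ev g.val p = ev g.val q) : p = q := by
  have h1 : (p - q) * (gen n).det = 0 := by
    refine ev_ext fun X => ?_
    rw [map_mul, map_zero, RingHom.map_det]
    change _ * ((gen n).map (ev X)).det = 0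
    rw [gen_map_ev]
    by_cases hX : X.det = 0
    · rw [hX, mul_zero]
    · obtain ⟨c, g, hc, hg⟩ := exists_scale X hX
      have h2 := ev_smul (hp.sub hq) c X
      rw [← hg, map_sub, h g, sub_self] at h2
      rw [(mul_eq_zero.1 h2.symm).resolve_left (pow_ne_zero _ hc), zero_mul]
  exact sub_eq_zero.1
    ((mul_eq_zero.1 h1).resolve_right (Matrix.det_mvPolynomialX_ne_zero (Fin n) ℂ))

theorem lead_smul (k : Fin n) (c : ℂ) (X : Matrix (Fin n) (Fin n) ℂ) :
    lead k (c • X) = c ^ Fintype.card {i : Fin n // i ≤ k} * lead k X := by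
  rw [lead, Matrix.submatrix_smul]
  exact Matrix.det_smul _ _

theorem lead_one (k : Fin n) : lead k (1 : Matrix (Fin n) (Fin n) ℂ) = 1 := by
  rw [lead_upper upperBy_zero_one]
  simp

/-- Some translate moves finitely many group elements into the big cell. -/
theorem exists_good (s : Finset (SL n)) : ∃ h : SL n, ∀ g ∈ s, ∀ k, lead k (h * g).val ≠ 0 := by
  let P : MvPolynomial (Fin n × Fin n) ℂ :=
    (∏ g ∈ s, ∏ k, lead k (gen n * g.val.map C)) * (gen n).det
  have hev : ∀ X (g : SL n) k, ev X (lead k (gen n * g.val.map C)) = lead k (X * g.val) := by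
    intro X g k
    rw [map_lead, Matrix.map_mul, gen_map_ev]
    congr 2
    ext i j
    simp [ev]
  have hP : P ≠ 0 := by
    refine mul_ne_zero (Finset.prod_ne_zero_iff.2 fun g _ => Finset.prod_ne_zero_iff.2
      fun k _ h0 => ?_) (Matrix.det_mvPolynomialX_ne_zero (Fin n) ℂ)
    have := hev g⁻¹.val g k
    rw [h0, map_zero, ← Matrix.SpecialLinearGroup.coe_mul, inv_mul_cancel,
      Matrix.SpecialLinearGroup.coe_one, lead_one] at this
    exact zero_ne_one this
  obtain ⟨X, hX⟩ : ∃ X, ev X P ≠ 0 := by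
    by_contra! hcon
    exact hP (ev_ext fun X => by rw [hcon, map_zero])
  rw [map_mul, mul_ne_zero_iff] at hX
  have hd : X.det ≠ 0 := by
    have := hX.2
    rw [RingHom.map_det] at this
    change ((gen n).map (ev X)).det ≠ 0 at this
    rwa [gen_map_ev] at this
  obtain ⟨c, h, hc, hh⟩ := exists_scale X hd
  refine ⟨h, fun g hg k => ?_⟩
  rw [Matrix.SpecialLinearGroup.coe_mul]
  erw [hh]
  rw [Matrix.smul_mul, lead_smul, ← hev]
  refine mul_ne_zero (pow_ne_zero _ hc) ?_
  have := hX.1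
  rw [map_prod, Finset.prod_ne_zero_iff] at this
  have := this g hg
  rw [map_prod, Finset.prod_ne_zero_iff] at this
  exact this k (Finset.mem_univ k)

end MatrixPolynomials

section Density

variable {n : ℕ} {X : Type*} [AddCommGroup X] [Module ℂ X] [FiniteDimensional ℂ X]

/-- A matrix coefficient vanishing on the big cell vanishes. -/
theorem eq_zero_of_bigCell (ρ : Representation ℂ (SL n) X) (ζ : Dual ℂ X) (x : X)
    (h : ∀ g : SL n, (∀ k, lead k g.val ≠ 0) → ζ (ρ g x) = 0) (g : SL n) : ζ (ρ g x) = 0 := by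
  classical
  have hfg : (Submodule.span ℂ (Set.range fun g => ρ g x)).FG :=
    IsNoetherian.noetherian _
  obtain ⟨t, ht, hspan⟩ := (Submodule.fg_span_iff_fg_span_finset_subset _).1 hfg
  choose! f hf using fun y (hy : y ∈ Set.range fun g => ρ g x) => hy
  obtain ⟨h0, hh0⟩ := exists_good (t.image f)
  have hmem : ρ (h0⁻¹ * g) x ∈ Submodule.span ℂ (t : Set X) := by
    rw [← hspan]
    exact Submodule.subset_span ⟨_, rfl⟩
  have hle : Submodule.span ℂ (t : Set X) ≤ LinearMap.ker (ζ ∘ₗ ρ h0) := by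
    refine Submodule.span_le.2 fun y hy => ?_
    have h1 := hf y (ht hy)
    simp only at h1
    rw [SetLike.mem_coe, LinearMap.mem_ker, ← h1]
    change ζ (ρ h0 (ρ (f y) x)) = 0
    rw [← Module.End.mul_apply, ← map_mul]
    exact h _ (hh0 _ (Finset.mem_image_of_mem f hy))
  have := hle hmem
  rw [LinearMap.mem_ker] at this
  change ζ (ρ h0 (ρ (h0⁻¹ * g) x)) = 0 at this
  rwa [← Module.End.mul_apply, ← map_mul, mul_inv_cancel_left] at this

end Density
end LRSat

namespace LRSat
open Module MvPolynomial

section HighestWeight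

variable {n : ℕ} {X : Type*} [AddCommGroup X] [Module ℂ X]

theorem diag_ne_zero {b : SL n} (hb : UpperBy 0 b.val) (i : Fin n) : b.val i i ≠ 0 := by
  have h1 : b.val.det = ∏ i, b.val i i :=
    Matrix.det_of_isUpperTriangular (upperBy_zero_iff.1 hb)
  have h2 : b.val.det = 1 := b.2
  intro h0
  rw [h1, Finset.prod_eq_zero (f := fun i => b.val i i) (Finset.mem_univ i) h0] at h2
  exact zero_ne_one h2

/-- The Borel subgroup acts on a highest weight vector through its diagonal. -/
theorem borel_smul {ρ : Representation ℂ (SL n) X} {a : Fin n → ℤ} {v : X}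
    (hv : IsHWVector ρ a v) (b : SL n) (hb : UpperBy 0 b.val) :
    ρ b v = (∏ i, b.val i i ^ a i) • v := by
  have hdet : (Matrix.diagonal fun i => b.val i i).det = 1 := by
    rw [Matrix.det_diagonal]
    have h1 : b.val.det = ∏ i, b.val i i :=
      Matrix.det_of_isUpperTriangular (upperBy_zero_iff.1 hb)
    rw [← h1]
    exact b.2
  let t : SL n := ⟨Matrix.diagonal fun i => b.val i i, hdet⟩
  have hdet' : (Matrix.diagonal fun i => (b.val i i)⁻¹).det = 1 := by
    rw [Matrix.det_diagonal, Finset.prod_inv_distrib, ← Matrix.det_diagonal, hdet, inv_one]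
  let t' : SL n := ⟨Matrix.diagonal fun i => (b.val i i)⁻¹, hdet'⟩
  have htt : t * t' = 1 := by
    ext i j
    rw [Matrix.SpecialLinearGroup.coe_mul]
    change (Matrix.diagonal (fun i => b.val i i) *
      Matrix.diagonal (fun i => (b.val i i)⁻¹)) i j = (1 : Matrix (Fin n) (Fin n) ℂ) i j
    rw [Matrix.diagonal_mul_diagonal, Matrix.one_apply, Matrix.diagonal_apply]
    simp only [mul_inv_cancel₀ (diag_ne_zero hb _)]
  have hbt : b = t * (t' * b) := by rw [← mul_assoc, htt, one_mul]
  have hval : ∀ i j, (t' * b).val i j = (b.val i i)⁻¹ * b.val i j := by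
    intro i j
    have : (t' * b).val = Matrix.diagonal (fun i => (b.val i i)⁻¹) * b.val := by
      rw [Matrix.SpecialLinearGroup.coe_mul]
    rw [this, Matrix.diagonal_mul]
  have hu : SLIsUniUpper (t' * b) := by
    refine ⟨fun i => ?_, fun i j hij => ?_⟩
    · rw [hval, inv_mul_cancel₀ (diag_ne_zero hb i)]
    · rw [hval, hb i j (by simpa using hij), mul_zero]
  have ht : SLIsDiag t := fun i j hij => Matrix.diagonal_apply_ne _ hij
  rw [hbt, map_mul, Module.End.mul_apply, hv.2.1 _ hu, hv.2.2 _ ht, ← hbt]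
  congr 1
  refine Finset.prod_congr rfl fun i _ => ?_
  change (Matrix.diagonal (fun i => b.val i i)) i i ^ a i = _
  rw [Matrix.diagonal_apply_eq]

theorem span_orbit_eq_top {ρ : Representation ℂ (SL n) X} (hρ : RepIsIrreducible ρ) {v : X}
    (hv : v ≠ 0) : Submodule.span ℂ (Set.range fun g => ρ g v) = ⊤ := by
  refine (hρ.2 (Submodule.span ℂ (Set.range fun g => ρ g v)) fun g x hx => ?_).resolve_left
    fun h0 => hv ?_
  · have : Submodule.span ℂ (Set.range fun g => ρ g v) ≤
        (Submodule.span ℂ (Set.range fun g => ρ g v)).comap (ρ g) := by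
      refine Submodule.span_le.2 ?_
      rintro _ ⟨h, rfl⟩
      refine Submodule.subset_span ⟨g * h, ?_⟩
      simp
    exact this hx
  · have : v ∈ Submodule.span ℂ (Set.range fun g => ρ g v) :=
      Submodule.subset_span ⟨1, by simp⟩
    rwa [h0, Submodule.mem_bot] at this

/-- An invariant subspace of the dual of an irreducible representation is everything as soon as
it is nonzero. -/
theorem dual_eq_top [FiniteDimensional ℂ X] {ρ : Representation ℂ (SL n) X}
    (hρ : RepIsIrreducible ρ) (Ξ : Submodule ℂ (Dual ℂ X)) (hΞ : ∀ g, ∀ ξ ∈ Ξ, ξ ∘ₗ ρ g ∈ Ξ)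
    {ξ : Dual ℂ X} (hξ : ξ ∈ Ξ) (h0 : ξ ≠ 0) : Ξ = ⊤ := by
  have h : Ξ.dualCoannihilator = ⊥ := by
    refine (hρ.2 _ fun g x hx => ?_).resolve_right fun htop => h0 ?_
    · rw [Submodule.mem_dualCoannihilator] at hx ⊢
      exact fun φ hφ => hx _ (hΞ g φ hφ)
    · ext x
      have : x ∈ Ξ.dualCoannihilator := htop ▸ Submodule.mem_top
      exact (Submodule.mem_dualCoannihilator x).1 this ξ hξ
  rw [← Subspace.dualCoannihilator_dualAnnihilator_eq (W := Ξ), h,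
    Submodule.dualAnnihilator_bot]

/-- The dual representation twisted by the transpose. -/
noncomputable def dualTranspose (ρ : Representation ℂ (SL n) X) :
    Representation ℂ (SL n) (Dual ℂ X) where
  toFun g := Module.Dual.transpose (R := ℂ) (ρ g.transpose)
  map_one' := by
    have : (1 : SL n).transpose = 1 := by ext i j; simp [Matrix.one_apply, eq_comm]
    rw [this, map_one]
    rfl
  map_mul' g h := by
    have : (g * h).transpose = h.transpose * g.transpose := by
      refine Subtype.ext ?_
      rw [Matrix.SpecialLinearGroup.coe_mul]
      exact Matrix.transpose_mul g.val h.val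
    rw [this, map_mul]
    rfl

theorem exists_lower_fixed [FiniteDimensional ℂ X] [Nontrivial X]
    (ρ : Representation ℂ (SL n) X) : ∃ ξ : Dual ℂ X, ξ ≠ 0 ∧
      ∀ y : SL n, UpperBy 0 y.val.transpose → (∀ i, y.val i i = 1) → ξ ∘ₗ ρ y = ξ := by
  obtain ⟨ξ, h0, hξ⟩ := exists_fixed_vector (dualTranspose ρ)
  refine ⟨ξ, h0, fun y hy h1 => ?_⟩
  have := hξ y.transpose ⟨fun i => ?_, fun i j hij => ?_⟩
  · change ξ ∘ₗ ρ y.transpose.transpose = ξ at this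
    rwa [show y.transpose.transpose = y by ext i j; simp] at this
  · simpa using h1 i
  · simpa using hy i j (by simpa using hij)

theorem isHomogeneous_delta (a : Fin n → ℕ) : ∃ d, (delta a (gen n)).IsHomogeneous d := by
  refine ⟨∑ k, Fintype.card {i : Fin n // i ≤ k} * gap a k, ?_⟩
  refine IsHomogeneous.prod _ _ _ fun k _ => IsHomogeneous.pow ?_ _
  rw [lead, Matrix.det_apply']
  refine IsHomogeneous.sum _ _ _ fun π _ => ?_
  have := (isHomogeneous_C (Fin n × Fin n) (((Equiv.Perm.sign π : ℤˣ) : ℤ) : ℂ)).mul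
    (IsHomogeneous.prod Finset.univ
    (fun i => ((gen n).submatrix Subtype.val Subtype.val) (π i) i)
    (fun _ : {i : Fin n // i ≤ k} => 1) fun i _ => by
      simpa [Matrix.mvPolynomialX] using isHomogeneous_X ℂ _)
  simpa using this

theorem ev_delta (a : Fin n → ℕ) (Y : Matrix (Fin n) (Fin n) ℂ) :
    ev Y (delta a (gen n)) = delta a Y := by
  rw [map_delta, gen_map_ev]

end HighestWeight
end LRSat

namespace LRSat
open Module MvPolynomial

section MatrixCoefficients

variable {n : ℕ} {X : Type*} [AddCommGroup X] [Module ℂ X] [FiniteDimensional ℂ X]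
  {ρ : Representation ℂ (SL n) X} {a : Fin n → ℕ} {v : X}

omit [FiniteDimensional ℂ X] in
theorem borel_smul_nat (hv : IsHWVector ρ (fun j => (a j : ℤ)) v) (b : SL n)
    (hb : UpperBy 0 b.val) : ρ b v = (∏ i, b.val i i ^ a i) • v := by
  rw [borel_smul hv b hb]
  simp only [zpow_natCast]

/-- The matrix coefficient of a highest weight vector against a suitable functional is a product
of leading minors. -/
theorem exists_delta_functional (hρ : RepIsIrreducible ρ) (ha : Antitone a)
    (hv : IsHWVector ρ (fun j => (a j : ℤ)) v) :
    ∃ ξ : Dual ℂ X, ∀ g : SL n, ξ (ρ g v) = delta a g.val := by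
  have : Nontrivial X := ⟨⟨v, 0, hv.1⟩⟩
  obtain ⟨ξ, hξ0, hξ⟩ := exists_lower_fixed ρ
  obtain ⟨d, hd⟩ := isHomogeneous_delta a
  let R : Representation ℂ (SL n) (homogeneousSubmodule (Fin n × Fin n) ℂ d) :=
    homRep d (fun h => rmat h.val) (by simp [rmat_one])
      (fun g h => by rw [Matrix.SpecialLinearGroup.coe_mul, rmat_mul])
  let ζ : Dual ℂ (X × homogeneousSubmodule (Fin n × Fin n) ℂ d) :=
    ξ ∘ₗ LinearMap.fst ℂ _ _ - ξ v • ((MvPolynomial.aeval fun q : Fin n × Fin n =>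
      (1 : Matrix (Fin n) (Fin n) ℂ) q.1 q.2).toLinearMap ∘ₗ Submodule.subtype _) ∘ₗ
      LinearMap.snd ℂ _ _
  have hζ : ∀ g, ζ ((ρ.prod R) g (v, ⟨delta a (gen n), hd⟩)) =
      ξ (ρ g v) - ξ v * delta a g.val := by
    intro g
    have h1 : ev 1 (lsub (rmat g.val) (delta a (gen n))) = delta a g.val := by
      rw [ev_lsub_rmat, one_mul, ev_delta]
    rw [← h1]
    rfl
  have hcell : ∀ g : SL n, (∀ k, lead k g.val ≠ 0) →
      ζ ((ρ.prod R) g (v, ⟨delta a (gen n), hd⟩)) = 0 := by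
    intro g hg
    obtain ⟨b, hb, hy, hy1⟩ := exists_upper_mul_lower g.val hg
    have hdet : b.det = 1 := by
      have h1 : (g.val * b).transpose.det = ∏ i, (g.val * b).transpose i i :=
        Matrix.det_of_isUpperTriangular (upperBy_zero_iff.1 hy)
      simp only [Matrix.transpose_apply, hy1, Finset.prod_const_one, Matrix.det_transpose,
        Matrix.det_mul] at h1
      rwa [show g.val.det = 1 from g.2, one_mul] at h1
    let b' : SL n := ⟨b, hdet⟩
    have hgb : (g * b').val = g.val * b := by rw [Matrix.SpecialLinearGroup.coe_mul]
    have h1 : ξ (ρ (g * b') v) = ξ v :=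
      LinearMap.congr_fun (hξ (g * b') (by rwa [hgb]) (by rwa [hgb])) v
    rw [map_mul, Module.End.mul_apply, borel_smul_nat hv b' hb, map_smul, map_smul, smul_eq_mul] at h1
    change (∏ i, b i i ^ a i) * _ = _ at h1
    have h2 : delta a (g.val * b) = 1 := by
      rw [← mul_one (g.val * b), delta_lower_mul ha _ hy, delta_one ha, mul_one]
      simp [hy1]
    rw [delta_mul_upper ha _ hb] at h2
    rw [hζ, ← h1]
    linear_combination (-ξ (ρ g v)) * h2
  have hall : ∀ g, ξ (ρ g v) = ξ v * delta a g.val := fun g =>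
    sub_eq_zero.1 ((hζ g).symm.trans (eq_zero_of_bigCell (ρ.prod R) ζ _ hcell g))
  have hne : ξ v ≠ 0 := by
    intro h0
    refine hξ0 ?_
    have hle : Submodule.span ℂ (Set.range fun g => ρ g v) ≤ LinearMap.ker ξ := by
      refine Submodule.span_le.2 ?_
      rintro _ ⟨g, rfl⟩
      change ξ (ρ g v) = 0
      rw [hall, h0, zero_mul]
    rw [span_orbit_eq_top hρ hv.1, top_le_iff] at hle
    exact LinearMap.ker_eq_top.1 hle
  refine ⟨(ξ v)⁻¹ • ξ, fun g => ?_⟩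
  rw [LinearMap.smul_apply, hall, smul_eq_mul, inv_mul_cancel_left₀ hne]

/-- Matrix coefficients are homogeneous polynomials. -/
theorem exists_polynomial (hρ : RepIsIrreducible ρ) (hv : v ≠ 0) {ξ₀ : Dual ℂ X}
    (h0 : ∀ g : SL n, ξ₀ (ρ g v) = delta a g.val) (hξ₀ : ξ₀ ≠ 0) {d : ℕ}
    (hd : (delta a (gen n)).IsHomogeneous d) (ξ : Dual ℂ X) (z : X) :
    ∃ p : MvPolynomial (Fin n × Fin n) ℂ, p.IsHomogeneous d ∧
      ∀ g : SL n, ev g.val p = ξ (ρ g z) := by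
  let Z : Submodule ℂ X :=
    { carrier := {z | ∃ p : MvPolynomial (Fin n × Fin n) ℂ, p.IsHomogeneous d ∧
        ∀ g : SL n, ev g.val p = ξ₀ (ρ g z)}
      add_mem' := by
        rintro x y ⟨p, hp, hpx⟩ ⟨q, hq, hqy⟩
        exact ⟨p + q, hp.add hq, fun g => by rw [map_add, hpx, hqy, map_add, map_add]⟩
      zero_mem' := ⟨0, isHomogeneous_zero _ _ _, fun g => by simp⟩
      smul_mem' := by
        rintro c x ⟨p, hp, hpx⟩
        refine ⟨C c * p, by simpa using (isHomogeneous_C _ c).mul hp, fun g => ?_⟩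
        rw [map_mul, hpx, map_smul, map_smul, smul_eq_mul]
        simp [ev] }
  have hZ : Z = ⊤ := by
    rw [eq_top_iff, ← span_orbit_eq_top hρ hv]
    refine Submodule.span_le.2 ?_
    rintro _ ⟨h, rfl⟩
    refine ⟨lsub (rmat h.val) (delta a (gen n)), isHomogeneous_lsub _ hd, fun g => ?_⟩
    change _ = ξ₀ (ρ g (ρ h v))
    rw [ev_lsub_rmat, ev_delta, ← Module.End.mul_apply, ← map_mul, h0,
      Matrix.SpecialLinearGroup.coe_mul]
  let Ξ : Submodule ℂ (Dual ℂ X) :=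
    { carrier := {ξ | ∃ p : MvPolynomial (Fin n × Fin n) ℂ, p.IsHomogeneous d ∧
        ∀ g : SL n, ev g.val p = ξ (ρ g z)}
      add_mem' := by
        rintro x y ⟨p, hp, hpx⟩ ⟨q, hq, hqy⟩
        exact ⟨p + q, hp.add hq, fun g => by rw [map_add, hpx, hqy, LinearMap.add_apply]⟩
      zero_mem' := ⟨0, isHomogeneous_zero _ _ _, fun g => by simp⟩
      smul_mem' := by
        rintro c x ⟨p, hp, hpx⟩
        refine ⟨C c * p, by simpa using (isHomogeneous_C _ c).mul hp, fun g => ?_⟩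
        rw [map_mul, hpx, LinearMap.smul_apply, smul_eq_mul]
        simp [ev] }
  have hΞ : Ξ = ⊤ := by
    refine dual_eq_top hρ Ξ ?_ (show z ∈ Z from hZ ▸ Submodule.mem_top) hξ₀
    rintro h ξ ⟨p, hp, hpx⟩
    refine ⟨lsub (lmat h.val) p, isHomogeneous_lsub _ hp, fun g => ?_⟩
    rw [ev_lsub_lmat, ← Matrix.SpecialLinearGroup.coe_mul, hpx, map_mul]
    rfl
  exact show ξ ∈ Ξ from hΞ ▸ Submodule.mem_top

/-- Matrix coefficients of a fixed vector, as a linear map on the dual. -/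
theorem exists_polynomial_map (hρ : RepIsIrreducible ρ) (hv : v ≠ 0) {ξ₀ : Dual ℂ X}
    (h0 : ∀ g : SL n, ξ₀ (ρ g v) = delta a g.val) (hξ₀ : ξ₀ ≠ 0) {d : ℕ}
    (hd : (delta a (gen n)).IsHomogeneous d) :
    ∃ P : Dual ℂ X →ₗ[ℂ] MvPolynomial (Fin n × Fin n) ℂ,
      (∀ (ξ : Dual ℂ X) (h : SL n), P (ξ ∘ₗ ρ h) = lsub (lmat h.val) (P ξ)) ∧
      P ξ₀ = delta a (gen n) := by
  choose P hP hPe using fun ξ => exists_polynomial hρ hv h0 hξ₀ hd ξ v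
  refine ⟨⟨⟨P, fun ξ η => ?_⟩, fun c ξ => ?_⟩, fun ξ h => ?_, ?_⟩
  · refine homogeneous_ext (hP _) ((hP _).add (hP _)) fun g => ?_
    rw [map_add, hPe, hPe, hPe, LinearMap.add_apply]
  · refine homogeneous_ext (hP _) ?_ fun g => ?_
    · rw [smul_eq_C_mul]
      simpa using (isHomogeneous_C _ _).mul (hP _)
    · rw [hPe, RingHom.id_apply, smul_eq_C_mul, map_mul, hPe]
      simp [ev]
  · refine homogeneous_ext (hP _) (isHomogeneous_lsub _ (hP _)) fun g => ?_
    change ev g.val (P _) = ev g.val (lsub _ (P ξ))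
    rw [ev_lsub_lmat, ← Matrix.SpecialLinearGroup.coe_mul, hPe, hPe, map_mul]
    rfl
  · refine homogeneous_ext (hP _) hd fun g => ?_
    change ev g.val (P _) = _
    rw [hPe, h0, ev_delta]

end MatrixCoefficients
end LRSat

namespace LRSat
open Module
open scoped TensorProduct

section Pairing

variable {n : ℕ} {V W : Type*} [AddCommGroup V] [Module ℂ V] [FiniteDimensional ℂ V]
  [AddCommGroup W] [Module ℂ W] [FiniteDimensional ℂ W]

omit [FiniteDimensional ℂ V] [FiniteDimensional ℂ W] in
theorem dualDistrib_comp (ξ : Dual ℂ V) (η : Dual ℂ W) (f : V →ₗ[ℂ] V) (g : W →ₗ[ℂ] W)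
    (x : V ⊗[ℂ] W) : TensorProduct.dualDistrib ℂ V W ((ξ ∘ₗ f) ⊗ₜ (η ∘ₗ g)) x =
      TensorProduct.dualDistrib ℂ V W (ξ ⊗ₜ η) (TensorProduct.map f g x) := by
  induction x with
  | zero => simp
  | tmul v w => simp [TensorProduct.dualDistrib_apply]
  | add x y hx hy => rw [map_add, map_add, map_add, hx, hy]

theorem eq_zero_of_dualDistrib {x : V ⊗[ℂ] W}
    (h : ∀ ξ η, TensorProduct.dualDistrib ℂ V W (ξ ⊗ₜ η) x = 0) : x = 0 := by
  refine (Module.forall_dual_apply_eq_zero_iff ℂ x).1 fun φ => ?_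
  obtain ⟨θ, rfl⟩ := (TensorProduct.dualDistribEquiv ℂ V W).surjective φ
  change TensorProduct.dualDistrib ℂ V W θ x = 0
  induction θ with
  | zero => simp
  | tmul ξ η => exact h ξ η
  | add θ θ' h1 h2 => rw [map_add, LinearMap.add_apply, h1, h2, add_zero]

theorem span_dual_orbit {ρ : Representation ℂ (SL n) V} (hρ : RepIsIrreducible ρ)
    {ξ : Dual ℂ V} (hξ : ξ ≠ 0) :
    Submodule.span ℂ (Set.range fun g => ξ ∘ₗ ρ g) = ⊤ := by
  refine dual_eq_top hρ _ (fun g η hη => ?_) (ξ := ξ)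
    (Submodule.subset_span ⟨1, by simp [Module.End.one_eq_id]⟩) hξ
  have : Submodule.span ℂ (Set.range fun g => ξ ∘ₗ ρ g) ≤
      (Submodule.span ℂ (Set.range fun g => ξ ∘ₗ ρ g)).comap (Module.Dual.transpose (ρ g)) := by
    refine Submodule.span_le.2 ?_
    rintro _ ⟨h, rfl⟩
    refine Submodule.subset_span ⟨h * g, ?_⟩
    simp only [map_mul]
    rfl
  exact this hη

theorem exists_translate_ne_zero {ρ : Representation ℂ (SL n) V}
    {σ : Representation ℂ (SL n) W} (hρ : RepIsIrreducible ρ) (hσ : RepIsIrreducible σ)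
    {ξ : Dual ℂ V} {η : Dual ℂ W} (hξ : ξ ≠ 0) (hη : η ≠ 0) {x : V ⊗[ℂ] W} (hx : x ≠ 0) :
    ∃ g h, TensorProduct.dualDistrib ℂ V W ((ξ ∘ₗ ρ g) ⊗ₜ (η ∘ₗ σ h)) x ≠ 0 := by
  by_contra! hcon
  refine hx (eq_zero_of_dualDistrib fun ξ' η' => ?_)
  have hξ' : ξ' ∈ Submodule.span ℂ (Set.range fun g => ξ ∘ₗ ρ g) :=
    span_dual_orbit hρ hξ ▸ Submodule.mem_top
  have hη' : η' ∈ Submodule.span ℂ (Set.range fun g => η ∘ₗ σ g) :=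
    span_dual_orbit hσ hη ▸ Submodule.mem_top
  induction hξ' using Submodule.span_induction with
  | zero => simp
  | add a b _ _ ha hb => rw [TensorProduct.add_tmul, map_add, LinearMap.add_apply, ha, hb, add_zero]
  | smul c a _ ha => rw [← TensorProduct.smul_tmul', map_smul, LinearMap.smul_apply, ha, smul_zero]
  | mem a ha =>
    obtain ⟨g, rfl⟩ := ha
    induction hη' using Submodule.span_induction with
    | zero => simp
    | add a b _ _ ha hb =>
      rw [TensorProduct.tmul_add, map_add, LinearMap.add_apply, ha, hb, add_zero]
    | smul c a _ ha => rw [TensorProduct.tmul_smul, map_smul, LinearMap.smul_apply, ha, smul_zero]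
    | mem b hb =>
      obtain ⟨h, rfl⟩ := hb
      exact hcon g h

/-- A highest weight vector in a tensor product gives a continuous function on pairs of matrices
which is equivariant under triangular matrices. -/
theorem exists_equivariant_function {ρ : Representation ℂ (SL n) V}
    {σ : Representation ℂ (SL n) W} (hρ : RepIsIrreducible ρ) (hσ : RepIsIrreducible σ)
    {a b c : Fin n → ℕ} (ha : Antitone a) (hb : Antitone b) {v : V} {w : W} {x : V ⊗[ℂ] W}
    (hv : IsHWVector ρ (fun j => (a j : ℤ)) v) (hw : IsHWVector σ (fun j => (b j : ℤ)) w)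
    (hx : IsHWVector (tensorRep2 ρ σ) (fun j => (c j : ℤ)) x) :
    ∃ F : Matrix (Fin n) (Fin n) ℂ × Matrix (Fin n) (Fin n) ℂ → ℂ, Continuous F ∧
      (∃ g h : SL n, F (g.val, h.val) ≠ 0) ∧
      (∀ y g h : SL n, UpperBy 0 y.val.transpose → F (y.val * g.val, y.val * h.val) =
        (∏ i, y.val i i ^ c i) * F (g.val, h.val)) ∧
      ∀ g h y z : SL n, UpperBy 0 y.val → UpperBy 0 z.val → F (g.val * y.val, h.val * z.val) =
        (∏ i, y.val i i ^ a i) * (∏ i, z.val i i ^ b i) * F (g.val, h.val) := by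
  obtain ⟨ξ, hξ⟩ := exists_delta_functional hρ ha hv
  obtain ⟨η, hη⟩ := exists_delta_functional hσ hb hw
  have hξ0 : ξ ≠ 0 := by
    rintro rfl
    have := hξ 1
    rw [Matrix.SpecialLinearGroup.coe_one, delta_one ha] at this
    exact zero_ne_one this
  have hη0 : η ≠ 0 := by
    rintro rfl
    have := hη 1
    rw [Matrix.SpecialLinearGroup.coe_one, delta_one hb] at this
    exact zero_ne_one this
  have key : ∀ x : V ⊗[ℂ] W,
      ∃ F : Matrix (Fin n) (Fin n) ℂ × Matrix (Fin n) (Fin n) ℂ → ℂ, Continuous F ∧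
        ∀ g h : SL n, F (g.val, h.val) = TensorProduct.dualDistrib ℂ V W
          ((ξ ∘ₗ ρ g.transpose) ⊗ₜ (η ∘ₗ σ h.transpose)) x := by
    intro x
    induction x with
    | zero => exact ⟨0, continuous_const, fun g h => by simp⟩
    | add x y hx hy =>
      obtain ⟨F, hF, hFx⟩ := hx
      obtain ⟨G, hG, hGy⟩ := hy
      exact ⟨F + G, hF.add hG, fun g h => by rw [map_add, Pi.add_apply, hFx, hGy]⟩
    | tmul v' w' =>
      obtain ⟨d, hd⟩ := isHomogeneous_delta a
      obtain ⟨e, he⟩ := isHomogeneous_delta b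
      obtain ⟨p, -, hp⟩ := exists_polynomial hρ hv.1 hξ hξ0 hd ξ v'
      obtain ⟨q, -, hq⟩ := exists_polynomial hσ hw.1 hη hη0 he η w'
      refine ⟨fun X => ev X.1.transpose p * ev X.2.transpose q, ?_, fun g h => ?_⟩
      · refine Continuous.mul ?_ ?_
        · exact (MvPolynomial.continuous_eval p).comp (by fun_prop)
        · exact (MvPolynomial.continuous_eval q).comp (by fun_prop)
      · rw [TensorProduct.dualDistrib_apply]
        change ev g.transpose.val p * ev h.transpose.val q = _
        rw [hp, hq]
        rfl
  obtain ⟨F, hF, hFx⟩ := key x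
  have htr : ∀ g h : SL n, (g * h).transpose = h.transpose * g.transpose := by
    intro g h
    refine Subtype.ext ?_
    rw [Matrix.SpecialLinearGroup.coe_mul]
    exact Matrix.transpose_mul g.val h.val
  refine ⟨F, hF, ?_, fun y g h hy => ?_, fun g h y z hy hz => ?_⟩
  · obtain ⟨g, h, hgh⟩ := exists_translate_ne_zero hρ hσ hξ0 hη0 hx.1
    refine ⟨g.transpose, h.transpose, ?_⟩
    rw [hFx]
    rwa [show g.transpose.transpose = g by ext i j; simp,
      show h.transpose.transpose = h by ext i j; simp]
  · rw [← Matrix.SpecialLinearGroup.coe_mul, ← Matrix.SpecialLinearGroup.coe_mul, hFx, hFx,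
      htr, htr, map_mul, map_mul, Module.End.mul_eq_comp, Module.End.mul_eq_comp,
      ← LinearMap.comp_assoc, ← LinearMap.comp_assoc,
      dualDistrib_comp (ξ ∘ₗ ρ g.transpose) (η ∘ₗ σ h.transpose)]
    have h1 : TensorProduct.map (ρ y.transpose) (σ y.transpose) x =
        (∏ i, y.val i i ^ c i) • x := by
      have := borel_smul_nat hx y.transpose hy
      simp only [Matrix.SpecialLinearGroup.coe_transpose, Matrix.transpose_apply] at this
      exact this
    rw [h1, map_smul, smul_eq_mul]
  · have h1 : ξ ∘ₗ ρ y.transpose = (∏ i, y.val i i ^ a i) • ξ := by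
      refine LinearMap.ext_on (span_orbit_eq_top hρ hv.1) ?_
      rintro _ ⟨k, rfl⟩
      change ξ (ρ y.transpose (ρ k v)) = _ * ξ (ρ k v)
      rw [← Module.End.mul_apply, ← map_mul, hξ, hξ, Matrix.SpecialLinearGroup.coe_mul]
      exact delta_lower_mul ha _ hy
    have h2 : η ∘ₗ σ z.transpose = (∏ i, z.val i i ^ b i) • η := by
      refine LinearMap.ext_on (span_orbit_eq_top hσ hw.1) ?_
      rintro _ ⟨k, rfl⟩
      change η (σ z.transpose (σ k w)) = _ * η (σ k w)
      rw [← Module.End.mul_apply, ← map_mul, hη, hη, Matrix.SpecialLinearGroup.coe_mul]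
      exact delta_lower_mul hb _ hz
    rw [← Matrix.SpecialLinearGroup.coe_mul, ← Matrix.SpecialLinearGroup.coe_mul, hFx, hFx,
      htr, htr, map_mul, map_mul, Module.End.mul_eq_comp, Module.End.mul_eq_comp,
      ← LinearMap.comp_assoc, ← LinearMap.comp_assoc, h1, h2, LinearMap.smul_comp,
      LinearMap.smul_comp, ← TensorProduct.smul_tmul', TensorProduct.tmul_smul, map_smul,
      map_smul, LinearMap.smul_apply, LinearMap.smul_apply, smul_eq_mul, smul_eq_mul, mul_assoc]

end Pairing
end LRSat

namespace LRSat
open Module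

section Degeneration

variable {n : ℕ}

/-- The one-parameter subgroup attached to a subset of size `d`. -/
noncomputable def oneParam (d : ℕ) (I : Finset (Fin n)) (t : ℂ) (i : Fin n) : ℂ :=
  t ^ d * if i ∈ I then (t⁻¹) ^ n else 1

theorem prod_oneParam (d : ℕ) (I : Finset (Fin n)) (t : ℂ) (a : Fin n → ℕ) :
    ∏ i, oneParam d I t i ^ a i = t ^ (d * ∑ i, a i) * (t⁻¹) ^ (n * ∑ i ∈ I, a i) := by
  simp only [oneParam, mul_pow, Finset.prod_mul_distrib, ite_pow, one_pow, ← pow_mul]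
  rw [Finset.prod_pow_eq_pow_sum, ← Finset.mul_sum, Finset.prod_ite_mem, Finset.univ_inter,
    Finset.prod_pow_eq_pow_sum, ← Finset.mul_sum]

theorem det_oneParam {d : ℕ} {I : Finset (Fin n)} (hI : I.card = d) {t : ℂ} (ht : t ≠ 0) :
    (Matrix.diagonal (oneParam d I t)).det = 1 := by
  have := prod_oneParam d I t fun _ => 1
  simp only [pow_one, Finset.sum_const, Finset.card_univ, Fintype.card_fin, smul_eq_mul,
    mul_one, hI] at this
  rw [Matrix.det_diagonal, this, mul_comm d n, ← mul_pow, mul_inv_cancel₀ ht, one_pow]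

theorem upperBy_diagonal {K : Type*} [CommRing K] (f : Fin n → K) :
    UpperBy 0 (Matrix.diagonal f) := by
  intro i j hij
  exact Matrix.diagonal_apply_ne _ (by rintro rfl; omega)

/-- The degeneration of a matrix attached to a pair of subsets. -/
def degen (I J : Finset (Fin n)) (z : ℂ) (G : Matrix (Fin n) (Fin n) ℂ) :
    Matrix (Fin n) (Fin n) ℂ := Matrix.of fun i j =>
  if i ∈ I then (if j ∈ J then G i j else z * G i j) else (if j ∈ J then 0 else G i j)

theorem degen_eq {d : ℕ} (I J : Finset (Fin n)) {t : ℂ} (ht : t ≠ 0)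
    (G : Matrix (Fin n) (Fin n) ℂ) (hG : ∀ i j, i ∉ I → j ∈ J → G i j = 0) :
    Matrix.diagonal (oneParam d I t⁻¹) * (G * Matrix.diagonal (oneParam d J t)) =
      degen I J (t ^ n) G := by
  ext i j
  rw [Matrix.diagonal_mul, Matrix.mul_diagonal, degen, Matrix.of_apply, oneParam, oneParam]
  have h1 : (t⁻¹) ^ d * t ^ d = 1 := by rw [← mul_pow, inv_mul_cancel₀ ht, one_pow]
  have h2 : (t⁻¹) ^ n * t ^ n = 1 := by rw [← mul_pow, inv_mul_cancel₀ ht, one_pow]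
  rw [inv_inv]
  split_ifs with hi hj hj
  · linear_combination (G i j * t ^ n * (t⁻¹) ^ n) * h1 + G i j * h2
  · linear_combination (G i j * t ^ n) * h1
  · rw [hG i j hi hj]
    ring
  · linear_combination (G i j) * h1

/-- The numerical inequality forced by a block of zeros. -/
theorem sum_le_of_degeneration
    {F : Matrix (Fin n) (Fin n) ℂ × Matrix (Fin n) (Fin n) ℂ → ℂ} (hF : Continuous F)
    {a b c : Fin n → ℕ} (hsum : ∑ i, a i + ∑ i, b i = ∑ i, c i)
    (hl : ∀ y g h : SL n, UpperBy 0 y.val.transpose → F (y.val * g.val, y.val * h.val) =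
      (∏ i, y.val i i ^ c i) * F (g.val, h.val))
    (hr : ∀ g h y z : SL n, UpperBy 0 y.val → UpperBy 0 z.val →
      F (g.val * y.val, h.val * z.val) =
        (∏ i, y.val i i ^ a i) * (∏ i, z.val i i ^ b i) * F (g.val, h.val))
    {d : ℕ} {I J K : Finset (Fin n)} (hI : I.card = d) (hJ : J.card = d) (hK : K.card = d)
    {g h : SL n} (hg : ∀ i j, i ∉ I → j ∈ J → g.val i j = 0)
    (hh : ∀ i j, i ∉ I → j ∈ K → h.val i j = 0) (hgh : F (g.val, h.val) ≠ 0) :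
    ∑ j ∈ J, a j + ∑ j ∈ K, b j ≤ ∑ i ∈ I, c i := by
  by_contra! hlt
  have hn : 0 < n := by
    rcases Nat.eq_zero_or_pos n with rfl | hn
    · simp [Finset.eq_empty_of_isEmpty] at hlt
    · exact hn
  obtain ⟨e, he⟩ := Nat.exists_eq_add_of_lt hlt
  have key : ∀ t : ℂ, t ≠ 0 → t ^ (n * (e + 1)) *
      F (degen I J (t ^ n) g.val, degen I K (t ^ n) h.val) = F (g.val, h.val) := by
    intro t ht
    let y : SL n := ⟨_, det_oneParam hI (inv_ne_zero ht)⟩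
    let z : SL n := ⟨_, det_oneParam hJ ht⟩
    let w : SL n := ⟨_, det_oneParam hK ht⟩
    have hy : UpperBy 0 y.val.transpose := by
      change UpperBy 0 (Matrix.diagonal _).transpose
      rw [Matrix.diagonal_transpose]
      exact upperBy_diagonal _
    have h1 := hl y (g * z) (h * w) hy
    rw [Matrix.SpecialLinearGroup.coe_mul, Matrix.SpecialLinearGroup.coe_mul,
      hr g h z w (upperBy_diagonal _) (upperBy_diagonal _)] at h1
    have h2 : y.val * (g.val * z.val) = degen I J (t ^ n) g.val := degen_eq I J ht _ hg
    have h3 : y.val * (h.val * w.val) = degen I K (t ^ n) h.val := degen_eq I K ht _ hh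
    have h4 : ∏ i, y.val i i ^ c i =
        (t⁻¹) ^ (d * ∑ i, c i) * t ^ (n * ∑ i ∈ I, c i) := by
      rw [← inv_inv (t ^ (n * ∑ i ∈ I, c i)), ← inv_pow, ← inv_pow, ← prod_oneParam]
      exact Finset.prod_congr rfl fun i _ => by
        rw [show y.val i i = oneParam d I t⁻¹ i from Matrix.diagonal_apply_eq _ _]
    have h5 : ∏ i, z.val i i ^ a i =
        t ^ (d * ∑ i, a i) * (t⁻¹) ^ (n * ∑ i ∈ J, a i) := by
      rw [← prod_oneParam]
      exact Finset.prod_congr rfl fun i _ => by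
        rw [show z.val i i = oneParam d J t i from Matrix.diagonal_apply_eq _ _]
    have h6 : ∏ i, w.val i i ^ b i =
        t ^ (d * ∑ i, b i) * (t⁻¹) ^ (n * ∑ i ∈ K, b i) := by
      rw [← prod_oneParam]
      exact Finset.prod_congr rfl fun i _ => by
        rw [show w.val i i = oneParam d K t i from Matrix.diagonal_apply_eq _ _]
    rw [h2, h3, h4, h5, h6] at h1
    rw [h1, ← hsum]
    have hexp : n * (∑ j ∈ J, a j) + n * (∑ j ∈ K, b j) =
        n * (∑ i ∈ I, c i) + n * (e + 1) := by
      rw [← mul_add, he]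
      ring
    have h7 : t ^ (n * ∑ i ∈ I, c i) * t ^ (n * (e + 1)) *
        ((t⁻¹) ^ (n * ∑ i ∈ J, a i) * (t⁻¹) ^ (n * ∑ i ∈ K, b i)) = 1 := by
      rw [← pow_add, ← pow_add, hexp, ← mul_pow, mul_inv_cancel₀ ht, one_pow]
    have h8 : (t⁻¹) ^ (d * (∑ i, a i + ∑ i, b i)) * (t ^ (d * ∑ i, a i) * t ^ (d * ∑ i, b i))
        = 1 := by
      rw [← pow_add, ← mul_add, ← mul_pow, inv_mul_cancel₀ ht, one_pow]
    calc _ = ((t⁻¹) ^ (d * (∑ i, a i + ∑ i, b i)) *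
          (t ^ (d * ∑ i, a i) * t ^ (d * ∑ i, b i))) *
          (t ^ (n * ∑ i ∈ I, c i) * t ^ (n * (e + 1)) *
            ((t⁻¹) ^ (n * ∑ i ∈ J, a i) * (t⁻¹) ^ (n * ∑ i ∈ K, b i))) *
          F (g.val, h.val) := by ring
      _ = _ := by rw [h7, h8, one_mul, one_mul]
  have hdeg : ∀ (L : Finset (Fin n)) (G : Matrix (Fin n) (Fin n) ℂ),
      Continuous fun t : ℂ => degen I L (t ^ n) G := by
    intro L G
    refine continuous_matrix fun i j => ?_
    simp only [degen, Matrix.of_apply]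
    split_ifs <;> fun_prop
  have hcont : Continuous fun t : ℂ => t ^ (n * (e + 1)) *
      F (degen I J (t ^ n) g.val, degen I K (t ^ n) h.val) :=
    (continuous_pow _).mul (hF.comp ((hdeg J _).prodMk (hdeg K _)))
  have heq := Continuous.ext_on (dense_compl_singleton (0 : ℂ)) hcont
    (continuous_const (y := F (g.val, h.val))) fun t ht => key t ht
  have := congrFun heq 0
  rw [zero_pow (by positivity), zero_mul] at this
  exact hgh this.symm

end Degeneration
end LRSat

namespace LRSat
open Module

section Adapted

variable {n : ℕ}

/-- The positions of an adapted basis are the smallest possible. -/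
theorem adapted_positions_le {W : Type*} [AddCommGroup W] [Module ℂ W] [FiniteDimensional ℂ W]
    {u b : Fin n → W} (hb : LinearIndependent ℂ b) (hn : finrank ℂ W = n)
    (hub : ∀ j, u j ∈ Submodule.span ℂ (b '' Set.Iic j)) {d : ℕ} {J J' : Fin d ↪o Fin n}
    {s : Fin d → W} (hs : LinearIndependent ℂ s)
    (hsJ : ∀ k, s k ∈ Submodule.span ℂ (u '' Set.Iic (J k)))
    (hsb : ∀ k, s k ∈ Submodule.span ℂ (Set.range fun k => b (J' k))) (k : Fin d) :
    J' k ≤ J k := by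
  by_contra! hlt
  let B : Basis (Fin n) ℂ W := basisOfLinearIndependentOfCardEqFinrank' b hb (by simp [hn])
  have hB : ⇑B = b := coe_basisOfLinearIndependentOfCardEqFinrank' b hb (by simp [hn])
  have hsub : ∀ j, Submodule.span ℂ (u '' Set.Iic j) ≤ Submodule.span ℂ (b '' Set.Iic j) := by
    intro j
    refine Submodule.span_le.2 ?_
    rintro _ ⟨l, hl, rfl⟩
    exact Submodule.span_mono (Set.image_mono (Set.Iic_subset_Iic.2 hl)) (hub l)
  have hmem : ∀ l : Fin (k + 1), s ⟨l, by omega⟩ ∈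
      Submodule.span ℂ (Set.range fun l : Fin k => b (J' ⟨l, by omega⟩)) := by
    intro l
    have hlk : (⟨l, by omega⟩ : Fin d) ≤ k := by simp only [Fin.le_def]; omega
    have h1 := hsub _ (hsJ ⟨l, by omega⟩)
    have h2 := hsb ⟨l, by omega⟩
    have h3 : (Set.range fun k => b (J' k)) = b '' Set.range J' := Set.range_comp b J'
    rw [h3] at h2
    rw [← hB, B.mem_span_image] at h1 h2
    have h4 : s ⟨l, by omega⟩ ∈ Submodule.span ℂ (b '' (Set.Iic (J k) ∩ Set.range J')) := by
      rw [← hB, B.mem_span_image]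
      exact Set.subset_inter (h1.trans (Set.Iic_subset_Iic.2 (J.monotone hlk))) h2
    refine Submodule.span_mono ?_ h4
    rintro _ ⟨_, ⟨h5, e, rfl⟩, rfl⟩
    have h6 : e < k := J'.lt_iff_lt.1 (lt_of_le_of_lt h5 hlt)
    exact ⟨⟨e, h6⟩, rfl⟩
  have hli : LinearIndependent ℂ fun l : Fin (k + 1) => s ⟨l, by omega⟩ :=
    hs.comp _ fun x y hxy => by
      simp only [Fin.mk.injEq] at hxy
      exact Fin.ext hxy
  have h1 := finrank_span_eq_card hli
  have h2 : Submodule.span ℂ (Set.range fun l : Fin (k + 1) => s ⟨l, by omega⟩) ≤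
      Submodule.span ℂ (Set.range fun l : Fin k => b (J' ⟨l, by omega⟩)) := by
    refine Submodule.span_le.2 ?_
    rintro _ ⟨l, rfl⟩
    exact hmem l
  have h3 := Submodule.finrank_mono h2
  have h4 := finrank_range_le_card (R := ℂ) fun l : Fin k => b (J' ⟨l, by omega⟩)
  rw [Set.finrank] at h4
  simp only [Fintype.card_fin] at h1 h4
  omega

/-- The columns of a matrix. -/
noncomputable def ecol (X : Matrix (Fin n) (Fin n) ℂ) (j : Fin n) : EuclideanSpace ℂ (Fin n) :=
  WithLp.toLp 2 fun i => X i j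

theorem linearIndependent_ecol {X : Matrix (Fin n) (Fin n) ℂ} (hX : X.det ≠ 0) :
    LinearIndependent ℂ (ecol X) := by
  have h1 : LinearIndependent ℂ X.col :=
    Matrix.linearIndependent_cols_iff_isUnit.2
      ((Matrix.isUnit_iff_isUnit_det X).2 (isUnit_iff_ne_zero.2 hX))
  exact h1.map' (WithLp.linearEquiv 2 ℂ (Fin n → ℂ)).symm.toLinearMap (LinearEquiv.ker _)

theorem det_ne_zero_of_ecol {X : Matrix (Fin n) (Fin n) ℂ}
    (hX : LinearIndependent ℂ (ecol X)) : X.det ≠ 0 := by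
  have h1 : LinearIndependent ℂ X.col :=
    hX.map' (WithLp.linearEquiv 2 ℂ (Fin n → ℂ)).toLinearMap (LinearEquiv.ker _)
  exact isUnit_iff_ne_zero.1 ((Matrix.isUnit_iff_isUnit_det X).1
    (Matrix.linearIndependent_cols_iff_isUnit.1 h1))

theorem exists_upper_adapted {X : Matrix (Fin n) (Fin n) ℂ} (hX : X.det ≠ 0)
    {d : ℕ} {s : Fin d → EuclideanSpace ℂ (Fin n)} (hs : LinearIndependent ℂ s)
    {J : Fin d ↪o Fin n} (hsJ : ∀ k, s k ∈ Submodule.span ℂ (ecol X '' Set.Iic (J k))) :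
    ∃ (b : SL n) (J' : Fin d ↪o Fin n), UpperBy 0 b.val ∧ (∀ k, J' k ≤ J k) ∧
      Submodule.span ℂ (Set.range fun k => ecol (X * b.val) (J' k)) =
        Submodule.span ℂ (Set.range s) := by
  have hfr : finrank ℂ (EuclideanSpace ℂ (Fin n)) = n := finrank_euclideanSpace_fin
  have hu := linearIndependent_ecol hX
  obtain ⟨b, J', hb, hbu, hub, -, hspan⟩ := exists_adapted_basis (ecol X) hu hfr
    (Submodule.span ℂ (Set.range s)) d (by rw [finrank_span_eq_card hs, Fintype.card_fin])
  have hle := adapted_positions_le hb hfr hub hs hsJ (J' := J')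
    fun k => hspan ▸ Submodule.subset_span ⟨k, rfl⟩
  let U : Basis (Fin n) ℂ (EuclideanSpace ℂ (Fin n)) :=
    basisOfLinearIndependentOfCardEqFinrank' (ecol X) hu (by simp)
  have hU : ⇑U = ecol X := coe_basisOfLinearIndependentOfCardEqFinrank' (ecol X) hu (by simp)
  let B : Matrix (Fin n) (Fin n) ℂ := Matrix.of fun l j => U.repr (b j) l
  have hB : UpperBy 0 B := by
    intro l j hlj
    have h1 := hbu j
    rw [← hU, U.mem_span_image] at h1
    by_contra h0
    have h2 := h1 (Finsupp.mem_support_iff.2 h0)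
    simp only [Set.mem_Iic, Fin.le_def] at h2
    omega
  have hcol : ∀ j, ecol (X * B) j = b j := by
    intro j
    rw [← U.sum_repr (b j), hU]
    ext i
    simp [ecol, Matrix.mul_apply, B, mul_comm]
  have hdet : B.det ≠ 0 := by
    have h1 : (X * B).det ≠ 0 := det_ne_zero_of_ecol (by rwa [funext hcol])
    rw [Matrix.det_mul] at h1
    exact right_ne_zero_of_mul h1
  obtain ⟨c, g, hc, hg⟩ := exists_scale B hdet
  have hcol' : ∀ j, ecol (X * g.val) j = c • b j := by
    intro j
    rw [← hcol]
    ext i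
    rw [hg, Matrix.mul_smul]
    rfl
  refine ⟨g, J', ?_, hle, ?_⟩
  · intro i j hij
    rw [hg, Matrix.smul_apply, hB i j hij, smul_zero]
  · rw [← hspan]
    simp only [hcol']
    refine le_antisymm (Submodule.span_le.2 ?_) (Submodule.span_le.2 ?_)
    · rintro _ ⟨k, rfl⟩
      exact Submodule.smul_mem _ _ (Submodule.subset_span ⟨k, rfl⟩)
    · rintro _ ⟨k, rfl⟩
      have : c⁻¹ • c • b (J' k) ∈ Submodule.span ℂ (Set.range fun k => c • b (J' k)) :=
        Submodule.smul_mem _ _ (Submodule.subset_span ⟨k, rfl⟩)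
      rwa [smul_smul, inv_mul_cancel₀ hc, one_smul] at this

end Adapted
end LRSat

namespace LRSat
open Module

section NotViol

variable {n : ℕ}

theorem det_revMat_sq : (revMat n ℂ).det * (revMat n ℂ).det = 1 := by
  rw [← Matrix.det_mul, revMat_mul_revMat, Matrix.det_one]

theorem diag_prod_ne_zero {b : SL n} (hb : UpperBy 0 b.val) (a : Fin n → ℕ) :
    ∏ i, b.val i i ^ a i ≠ 0 :=
  Finset.prod_ne_zero_iff.2 fun i _ => pow_ne_zero _ (diag_ne_zero hb i)

/-- A triple of flags at which the equivariant function does not vanish satisfies all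
inequalities. -/
theorem not_viol_of_equivariant
    {F : Matrix (Fin n) (Fin n) ℂ × Matrix (Fin n) (Fin n) ℂ → ℂ} (hF : Continuous F)
    {lam mu nu : Fin n → ℕ} (hlam : Antitone lam) (hmu : Antitone mu) (hnu : Antitone nu)
    (hsum : ∑ i, lam i + ∑ i, mu i = ∑ i, nu i) {m : ℕ} (hm : 0 < m)
    (hl : ∀ y g h : SL n, UpperBy 0 y.val.transpose → F (y.val * g.val, y.val * h.val) =
      (∏ i, y.val i i ^ (m * nu i)) * F (g.val, h.val))
    (hr : ∀ g h y z : SL n, UpperBy 0 y.val → UpperBy 0 z.val →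
      F (g.val * y.val, h.val * z.val) = (∏ i, y.val i i ^ (m * lam i)) *
        (∏ i, z.val i i ^ (m * mu i)) * F (g.val, h.val))
    {r : ℕ} (hnr : ∀ j, nu j ≤ r) {g h : SL n} (hgh : F (g.val, h.val) ≠ 0) :
    ¬ Viol (thr lam mu nu r) r
      (fun i => ecol ((![g.val, h.val, revMat n ℂ] : Fin 3 → Matrix (Fin n) (Fin n) ℂ) i)) := by
  rintro ⟨d, s, J, h1, h2, h3, h4⟩
  have hrev : (revMat n ℂ).det ≠ 0 := fun h0 => by
    have := det_revMat_sq (n := n)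
    rw [h0, zero_mul] at this
    exact zero_ne_one this
  have hsS : ∀ i, Submodule.span ℂ (Set.range (s i)) = Submodule.span ℂ (Set.range (s 2)) := by
    intro i
    refine le_antisymm (Submodule.span_le.2 ?_) (Submodule.span_le.2 ?_)
    · rintro _ ⟨k, rfl⟩
      exact h2 i 2 k
    · rintro _ ⟨k, rfl⟩
      exact h2 2 i k
  have hdet : ∀ k : SL n, k.val.det ≠ 0 := fun k => by
    rw [show k.val.det = 1 from k.2]
    exact one_ne_zero
  obtain ⟨b0, J0, hb0, hJ0, hS0⟩ := exists_upper_adapted (hdet g) (h1 0) (h3 0)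
  obtain ⟨b1, J1, hb1, hJ1, hS1⟩ := exists_upper_adapted (hdet h) (h1 1) (h3 1)
  obtain ⟨b2, J2, hb2, hJ2, hS2⟩ := exists_upper_adapted hrev (h1 2) (h3 2)
  have hQdet : (revMat n ℂ * b2.val * revMat n ℂ).det = 1 := by
    rw [Matrix.det_mul, Matrix.det_mul, show b2.val.det = 1 from b2.2, mul_one, det_revMat_sq]
  have hQ : UpperBy 0 (revMat n ℂ * b2.val * revMat n ℂ).transpose := by
    intro i j hij
    rw [Matrix.transpose_apply, mul_revMat_apply, revMat_mul_apply]
    refine hb2 _ _ ?_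
    simp only [Fin.val_rev]
    omega
  let Q : Matrix (Fin n) (Fin n) ℂ := revMat n ℂ * b2.val * revMat n ℂ
  have hunit : IsUnit Q.det := by rw [hQdet]; exact isUnit_one
  have hydet : Q⁻¹.det = 1 := by
    rw [Matrix.det_nonsing_inv, hQdet, Ring.inverse_one]
  let y : SL n := ⟨Q⁻¹, hydet⟩
  have hy : UpperBy 0 y.val.transpose := by
    change UpperBy 0 (Q⁻¹).transpose
    rw [Matrix.transpose_nonsing_inv]
    exact hQ.inv (by rw [Matrix.det_transpose, hQdet])
  have hyrev : Q⁻¹ * (revMat n ℂ * b2.val) = revMat n ℂ := by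
    have h5 : revMat n ℂ * b2.val = Q * revMat n ℂ := by
      rw [mul_assoc, revMat_mul_revMat, mul_one]
    rw [h5, ← mul_assoc, Matrix.nonsing_inv_mul _ hunit, one_mul]
  let I : Finset (Fin n) := Finset.univ.map (J2.toEmbedding.trans Fin.revPerm.toEmbedding)
  have hkill : ∀ i, i ∉ I → ∀ x ∈ Submodule.span ℂ (Set.range (s 2)),
      ∑ l, Q⁻¹ i l * x l = 0 := by
    intro i hi x hx
    rw [← hS2] at hx
    induction hx using Submodule.span_induction with
    | zero => simp
    | add x y _ _ hx hy => simp only [PiLp.add_apply, mul_add, Finset.sum_add_distrib, hx, hy,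
        add_zero]
    | smul c x _ hx =>
      simp only [PiLp.smul_apply, smul_eq_mul, mul_left_comm _ c, ← Finset.mul_sum, hx, mul_zero]
    | mem x hx =>
      obtain ⟨k, rfl⟩ := hx
      have h6 := congrFun (congrFun hyrev i) (J2 k)
      rw [Matrix.mul_apply] at h6
      refine Eq.trans h6 ?_
      simp only [revMat, Matrix.of_apply]
      refine if_neg fun h7 => hi ?_
      refine Finset.mem_map.2 ⟨k, Finset.mem_univ k, ?_⟩
      change Fin.rev (J2 k) = i
      rw [h7, Fin.rev_rev]
  have hzero : ∀ (G b : SL n) (J' : Fin d ↪o Fin n),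
      Submodule.span ℂ (Set.range fun k => ecol (G.val * b.val) (J' k)) =
        Submodule.span ℂ (Set.range (s 2)) →
      ∀ i j, i ∉ I → j ∈ Finset.univ.map J'.toEmbedding → (y * (G * b)).val i j = 0 := by
    intro G b J' hsp i j hi hj
    obtain ⟨k, -, rfl⟩ := Finset.mem_map.1 hj
    have h5 : ecol (G.val * b.val) (J' k) ∈ Submodule.span ℂ (Set.range (s 2)) := by
      rw [← hsp]
      exact Submodule.subset_span ⟨k, rfl⟩
    have h6 := hkill i hi _ h5
    rw [Matrix.SpecialLinearGroup.coe_mul, Matrix.SpecialLinearGroup.coe_mul, Matrix.mul_apply]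
    exact h6
  have hne : F ((y * (g * b0)).val, (y * (h * b1)).val) ≠ 0 := by
    have hcoe : ∀ p q : SL n, (p * q).val = p.val * q.val := fun p q =>
      Matrix.SpecialLinearGroup.coe_mul p q
    rw [hcoe y, hcoe y, hl _ _ _ hy, hcoe, hcoe, hr _ _ _ _ hb0 hb1]
    refine mul_ne_zero ?_ (mul_ne_zero (mul_ne_zero (diag_prod_ne_zero hb0 _)
      (diag_prod_ne_zero hb1 _)) hgh)
    exact diag_prod_ne_zero (b := y.transpose) hy _
  have hfin := sum_le_of_degeneration hF (a := fun i => m * lam i) (b := fun i => m * mu i)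
    (c := fun i => m * nu i) (by simp only [← Finset.mul_sum, ← mul_add, hsum]) hl hr
    (d := d) (I := I) (by simp [I]) (by simp) (by simp)
    (hzero g b0 J0 (hS0.trans (hsS 0))) (hzero h b1 J1 (hS1.trans (hsS 1))) hne
  simp only [← Finset.mul_sum, ← mul_add] at hfin
  have hfin2 := Nat.le_of_mul_le_mul_left hfin hm
  rw [Finset.sum_map, Finset.sum_map, Finset.sum_map] at hfin2
  have hI : ∑ k, (r - nu (Fin.rev (J2 k))) + ∑ k, nu (Fin.rev (J2 k)) = d * r := by
    rw [← Finset.sum_add_distrib]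
    simp [Nat.sub_add_cancel (hnr _)]
  have hle : ∑ i, ∑ k, thr lam mu nu r i (J i k) ≤
      ∑ k, lam (J0 k) + ∑ k, mu (J1 k) + ∑ k, (r - nu (Fin.rev (J2 k))) := by
    rw [Fin.sum_univ_three]
    refine add_le_add (add_le_add ?_ ?_) ?_
    · exact Finset.sum_le_sum fun k _ => thr_antitone hlam hmu hnu 0 (hJ0 k)
    · exact Finset.sum_le_sum fun k _ => thr_antitone hlam hmu hnu 1 (hJ1 k)
    · exact Finset.sum_le_sum fun k _ => thr_antitone hlam hmu hnu 2 (hJ2 k)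
  have hfin3 : ∑ k, lam (J0 k) + ∑ k, mu (J1 k) ≤ ∑ k, nu (Fin.rev (J2 k)) := hfin2
  omega

end NotViol
end LRSat

namespace LRSat
open Module MvPolynomial

section Apolar

variable {σ : Type*} [Fintype σ] [DecidableEq σ]

/-- The product of the factorials of the exponents. -/
def multiFact (α : σ →₀ ℕ) : ℕ := ∏ i, (α i).factorial

omit [DecidableEq σ] in
theorem multiFact_add_single (α : σ →₀ ℕ) (i : σ) :
    multiFact (α + Finsupp.single i 1) = (α i + 1) * multiFact α := by
  classical
  rw [multiFact, multiFact, ← Finset.mul_prod_erase _ _ (Finset.mem_univ i),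
    ← Finset.mul_prod_erase _ (fun j => (α j).factorial) (Finset.mem_univ i), ← mul_assoc]
  congr 1
  · simp [Nat.factorial_succ]
  · refine Finset.prod_congr rfl fun j hj => ?_
    rw [Finsupp.add_apply, Finsupp.single_eq_of_ne (Finset.ne_of_mem_erase hj), add_zero]

/-- The apolar bilinear form. -/
noncomputable def apolar : MvPolynomial σ ℂ →ₗ[ℂ] MvPolynomial σ ℂ →ₗ[ℂ] ℂ :=
  (basisMonomials σ ℂ).constr ℂ fun α => (multiFact α : ℂ) • lcoeff ℂ α

omit [DecidableEq σ] in
theorem apolar_monomial (α : σ →₀ ℕ) (c : ℂ) (q : MvPolynomial σ ℂ) :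
    apolar (monomial α c) q = c * (multiFact α * coeff α q) := by
  have h1 : apolar (monomial α (1 : ℂ)) = (multiFact α : ℂ) • lcoeff ℂ α := by
    have := (basisMonomials σ ℂ).constr_basis ℂ
      (fun α => (multiFact α : ℂ) • lcoeff ℂ α) α
    rwa [coe_basisMonomials] at this
  have h2 : monomial α c = c • monomial α (1 : ℂ) := by rw [smul_monomial, smul_eq_mul, mul_one]
  rw [h2, map_smul, h1]
  simp [lcoeff]

omit [DecidableEq σ] in
theorem apolar_eq_sum (p q : MvPolynomial σ ℂ) :
    apolar p q = ∑ α ∈ p.support, coeff α p * (multiFact α * coeff α q) := by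
  conv_lhs => rw [p.as_sum]
  rw [map_sum, LinearMap.sum_apply]
  exact Finset.sum_congr rfl fun α _ => apolar_monomial _ _ _

omit [DecidableEq σ] in
theorem apolar_mul_X (p q : MvPolynomial σ ℂ) (i : σ) :
    apolar (p * X i) q = apolar p (pderiv i q) := by
  induction p using MvPolynomial.induction_on' with
  | monomial α c =>
    rw [X, monomial_mul, mul_one, apolar_monomial, apolar_monomial, coeff_pderiv,
      multiFact_add_single]
    push_cast
    ring
  | add p p' h h' => rw [add_mul, map_add, map_add, LinearMap.add_apply, LinearMap.add_apply, h, h']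

omit [DecidableEq σ] in
theorem lsub_C (L : Matrix σ σ ℂ) (c : ℂ) : lsub L (C c) = C c := by
  rw [lsub, aeval_C, algebraMap_eq]

omit [DecidableEq σ] in
theorem lsub_X (L : Matrix σ σ ℂ) (i : σ) : lsub L (X i) = ∑ j, C (L i j) * X j := by
  rw [lsub, aeval_X]

theorem pderiv_lsub (L : Matrix σ σ ℂ) (q : MvPolynomial σ ℂ) (i : σ) :
    pderiv i (lsub L q) = ∑ j, C (L j i) * lsub L (pderiv j q) := by
  induction q using MvPolynomial.induction_on with
  | C c => simp
  | add p q hp hq => simp only [map_add, hp, hq, mul_add, Finset.sum_add_distrib]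
  | mul_X p k hp =>
    have h1 : pderiv i (lsub L (X k)) = C (L k i) := by
      rw [lsub_X, map_sum, Finset.sum_eq_single i]
      · simp
      · intro j _ hj
        rw [pderiv_C_mul, pderiv_X_of_ne hj, mul_zero]
      · simp
    have h2 : ∀ j, C (L j i) * lsub L (pderiv j (p * X k)) =
        C (L j i) * lsub L (pderiv j p) * lsub L (X k) +
          C (L j i) * lsub L p * lsub L (pderiv j (X k)) := fun j => by
      rw [pderiv_mul, map_add, map_mul, map_mul, mul_add, mul_assoc, mul_assoc]
    have h3 : ∑ j, C (L j i) * lsub L p * lsub L (pderiv j (X k)) = lsub L p * C (L k i) := by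
      rw [Finset.sum_eq_single k]
      · rw [pderiv_X_self, map_one, mul_one, mul_comm]
      · intro j _ hj
        rw [pderiv_X_of_ne hj.symm, map_zero, mul_zero]
      · exact fun h => absurd (Finset.mem_univ k) h
    rw [Finset.sum_congr rfl fun j _ => h2 j, Finset.sum_add_distrib, h3, ← Finset.sum_mul,
      map_mul, pderiv_mul, hp, h1]

/-- Linear substitution by the transpose is the adjoint for the apolar form. -/
theorem apolar_lsub (L : Matrix σ σ ℂ) (p q : MvPolynomial σ ℂ) :
    apolar (lsub L p) q = apolar p (lsub L.transpose q) := by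
  induction p using MvPolynomial.induction_on generalizing q with
  | C c =>
    rw [lsub_C, C_apply, apolar_monomial, apolar_monomial, ← constantCoeff_eq,
      ← eval_zero, eval_lsub, Matrix.mulVec_zero]
  | add p p' h h' => simp only [map_add, LinearMap.add_apply, h, h']
  | mul_X p i hp =>
    rw [apolar_mul_X, pderiv_lsub, map_mul, lsub_X, Finset.mul_sum, map_sum, map_sum,
      LinearMap.sum_apply]
    refine Finset.sum_congr rfl fun j _ => ?_
    rw [mul_left_comm, ← smul_eq_C_mul, map_smul, LinearMap.smul_apply, apolar_mul_X, hp,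
      ← smul_eq_C_mul, map_smul, Matrix.transpose_apply]

omit [DecidableEq σ] in
theorem apolar_self_ne_zero {p : MvPolynomial σ ℤ} (hp : p.map (Int.castRingHom ℂ) ≠ 0) :
    apolar (p.map (Int.castRingHom ℂ)) (p.map (Int.castRingHom ℂ)) ≠ 0 := by
  have hp' : (p.map (Int.castRingHom ℂ)).support.Nonempty := support_nonempty.2 hp
  have h1 : apolar (p.map (Int.castRingHom ℂ)) (p.map (Int.castRingHom ℂ)) =
      ((∑ α ∈ (p.map (Int.castRingHom ℂ)).support, coeff α p * (multiFact α * coeff α p) : ℤ) :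
        ℂ) := by
    rw [apolar_eq_sum]
    push_cast
    exact Finset.sum_congr rfl fun α _ => by rw [coeff_map]; rfl
  rw [h1, Int.cast_ne_zero]
  refine (Finset.sum_pos (fun α hα => ?_) hp').ne'
  have h2 : coeff α p ≠ 0 := fun h0 => by
    rw [MvPolynomial.mem_support_iff, coeff_map, h0, map_zero] at hα
    exact hα rfl
  have h3 : 0 < multiFact α := Finset.prod_pos fun i _ => Nat.factorial_pos _
  have h4 : 0 < coeff α p * coeff α p := mul_self_pos.2 h2
  have h5 : (0 : ℤ) < multiFact α := by exact_mod_cast h3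
  nlinarith [mul_pos h5 h4]

end Apolar
end LRSat

namespace LRSat
open Module MvPolynomial

section FixedPolynomial

variable {n : ℕ} {σ : Type*} [Fintype σ] [DecidableEq σ]

omit [DecidableEq σ] in
/-- Every polynomial lies in a finite-dimensional space stable under linear substitutions. -/
theorem exists_stable_space (p : MvPolynomial σ ℂ) : ∃ S : Submodule ℂ (MvPolynomial σ ℂ),
    FiniteDimensional ℂ S ∧ p ∈ S ∧ ∀ (L : Matrix σ σ ℂ), ∀ q ∈ S, lsub L q ∈ S := by
  refine ⟨⨆ i : Fin (p.totalDegree + 1), homogeneousSubmodule σ ℂ i, inferInstance, ?_,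
    fun L => ?_⟩
  · have h : ∑ i ∈ Finset.range (p.totalDegree + 1), homogeneousComponent i p ∈
        ⨆ i : Fin (p.totalDegree + 1), homogeneousSubmodule σ ℂ i :=
      Submodule.sum_mem _ fun i hi =>
        Submodule.mem_iSup_of_mem (⟨i, Finset.mem_range.1 hi⟩ : Fin (p.totalDegree + 1))
          (homogeneousComponent_isHomogeneous i p)
    rwa [sum_homogeneousComponent] at h
  · have h : (⨆ i : Fin (p.totalDegree + 1), homogeneousSubmodule σ ℂ i) ≤
        (⨆ i : Fin (p.totalDegree + 1), homogeneousSubmodule σ ℂ i).comap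
          (lsub L).toLinearMap := by
      refine iSup_le fun i q hq => ?_
      exact Submodule.mem_iSup_of_mem i (isHomogeneous_lsub L hq)
    exact fun q hq => h hq

theorem exists_fixed_polynomial (N : Submodule ℂ (MvPolynomial σ ℂ)) [FiniteDimensional ℂ N]
    (hN : N ≠ ⊥) (L : SL n → Matrix σ σ ℂ) (h1 : L 1 = 1)
    (hmul : ∀ g h, L (g * h) = L h * L g) (hst : ∀ g, ∀ p ∈ N, lsub (L g) p ∈ N) :
    ∃ p ∈ N, p ≠ 0 ∧ ∀ g, SLIsUniUpper g → lsub (L g) p = p := by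
  have : Nontrivial N := Submodule.nontrivial_iff_ne_bot.2 hN
  let R : Representation ℂ (SL n) N :=
    { toFun := fun g => (lsub (L g)).toLinearMap.restrict (hst g)
      map_one' := by
        refine LinearMap.ext fun p => Subtype.ext ?_
        change lsub (L 1) (p : MvPolynomial σ ℂ) = p
        rw [h1, lsub_one]
      map_mul' := fun g h => by
        refine LinearMap.ext fun p => Subtype.ext ?_
        change lsub (L (g * h)) (p : MvPolynomial σ ℂ) = lsub (L g) (lsub (L h) p)
        rw [hmul, lsub_lsub] }
  obtain ⟨x, hx, hfix⟩ := exists_fixed_vector R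
  exact ⟨x, x.2, fun h => hx (Subtype.ext h), fun g hg => congrArg Subtype.val (hfix g hg)⟩

end FixedPolynomial

section PairPolynomials

variable {n : ℕ}

/-- The entries of a pair of matrices. -/
abbrev PairIdx (n : ℕ) : Type := (Fin n × Fin n) ⊕ (Fin n × Fin n)

/-- Evaluation at a pair of matrices. -/
noncomputable def evPair (X Y : Matrix (Fin n) (Fin n) ℂ) : MvPolynomial (PairIdx n) ℂ →+* ℂ :=
  eval (Sum.elim (fun q => X q.1 q.2) fun q => Y q.1 q.2)

theorem evPair_C (X Y : Matrix (Fin n) (Fin n) ℂ) (c : ℂ) : evPair X Y (C c) = c := eval_C c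

theorem evPair_ext {p q : MvPolynomial (PairIdx n) ℂ} (h : ∀ X Y, evPair X Y p = evPair X Y q) :
    p = q := by
  refine MvPolynomial.funext fun x => ?_
  have := h (Matrix.of fun i j => x (Sum.inl (i, j))) (Matrix.of fun i j => x (Sum.inr (i, j)))
  have hx : Sum.elim (fun q : Fin n × Fin n => x (Sum.inl (q.1, q.2)))
      (fun q => x (Sum.inr (q.1, q.2))) = x := by
    ext (i | i) <;> rfl
  rw [← hx]
  exact this

/-- The first generic matrix. -/
noncomputable def genL (n : ℕ) (R : Type*) [CommRing R] :
    Matrix (Fin n) (Fin n) (MvPolynomial (PairIdx n) R) :=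
  Matrix.of fun i j => X (Sum.inl (i, j))

/-- The second generic matrix. -/
noncomputable def genR (n : ℕ) (R : Type*) [CommRing R] :
    Matrix (Fin n) (Fin n) (MvPolynomial (PairIdx n) R) :=
  Matrix.of fun i j => X (Sum.inr (i, j))

theorem genL_map_evPair (X Y : Matrix (Fin n) (Fin n) ℂ) : (genL n ℂ).map (evPair X Y) = X := by
  ext i j
  simp [genL, evPair]

theorem genR_map_evPair (X Y : Matrix (Fin n) (Fin n) ℂ) : (genR n ℂ).map (evPair X Y) = Y := by
  ext i j
  simp [genR, evPair]

theorem evPair_rename_inl (X Y : Matrix (Fin n) (Fin n) ℂ) (p : MvPolynomial (Fin n × Fin n) ℂ) :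
    evPair X Y (rename Sum.inl p) = ev X p := by
  rw [evPair, eval_rename, Sum.elim_comp_inl, ev]

theorem evPair_rename_inr (X Y : Matrix (Fin n) (Fin n) ℂ) (p : MvPolynomial (Fin n × Fin n) ℂ) :
    evPair X Y (rename Sum.inr p) = ev Y p := by
  rw [evPair, eval_rename, Sum.elim_comp_inr, ev]

/-- The linear map `(X, Y) ↦ (h * X, k * Y)` on pairs of matrices. -/
def blk (h k : Matrix (Fin n) (Fin n) ℂ) : Matrix (PairIdx n) (PairIdx n) ℂ :=
  Matrix.fromBlocks (lmat h) 0 0 (lmat k)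

theorem blk_one : blk (1 : Matrix (Fin n) (Fin n) ℂ) 1 = 1 := by
  rw [blk, lmat_one, Matrix.fromBlocks_one]

theorem blk_mul (h k h' k' : Matrix (Fin n) (Fin n) ℂ) :
    blk (h * h') (k * k') = blk h k * blk h' k' := by
  simp [blk, Matrix.fromBlocks_multiply, lmat_mul]

theorem blk_transpose (h k : Matrix (Fin n) (Fin n) ℂ) :
    (blk h k).transpose = blk h.transpose k.transpose := by
  simp [blk, Matrix.fromBlocks_transpose, lmat_transpose]

theorem lmat_mulVec (h X : Matrix (Fin n) (Fin n) ℂ) :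
    (lmat h).mulVec (fun q => X q.1 q.2) = fun q => (h * X) q.1 q.2 := by
  ext ⟨i, j⟩
  simp [Matrix.mulVec, dotProduct, Fintype.sum_prod_type, lmat, Matrix.one_apply,
    Matrix.mul_apply]

theorem evPair_lsub (h k X Y : Matrix (Fin n) (Fin n) ℂ) (p : MvPolynomial (PairIdx n) ℂ) :
    evPair X Y (lsub (blk h k) p) = evPair (h * X) (k * Y) p := by
  rw [evPair, eval_lsub, evPair, blk, Matrix.fromBlocks_mulVec, Sum.elim_comp_inl,
    Sum.elim_comp_inr, lmat_mulVec, lmat_mulVec, Matrix.zero_mulVec, Matrix.zero_mulVec,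
    add_zero, zero_add]

theorem lsub_blk_rename (h k : Matrix (Fin n) (Fin n) ℂ)
    (p q : MvPolynomial (Fin n × Fin n) ℂ) :
    lsub (blk h k) (rename Sum.inl p * rename Sum.inr q) =
      rename Sum.inl (lsub (lmat h) p) * rename Sum.inr (lsub (lmat k) q) := by
  refine evPair_ext fun X Y => ?_
  rw [evPair_lsub, map_mul, map_mul, evPair_rename_inl, evPair_rename_inl, evPair_rename_inr,
    evPair_rename_inr, ev_lsub_lmat, ev_lsub_lmat]

/-- The product of the highest weight polynomials in the two generic matrices. -/
noncomputable def deltaPair (a b : Fin n → ℕ) : MvPolynomial (PairIdx n) ℂ :=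
  rename Sum.inl (delta a (gen n)) * rename Sum.inr (delta b (gen n))

theorem evPair_deltaPair (a b : Fin n → ℕ) (X Y : Matrix (Fin n) (Fin n) ℂ) :
    evPair X Y (deltaPair a b) = delta a X * delta b Y := by
  rw [deltaPair, map_mul, evPair_rename_inl, evPair_rename_inr, ev_delta, ev_delta]

theorem apolar_deltaPair_ne_zero {a b : Fin n → ℕ} (ha : Antitone a) (hb : Antitone b) :
    apolar (deltaPair a b) (deltaPair a b) ≠ 0 := by
  have h : deltaPair a b =
      (delta a (genL n ℤ) * delta b (genR n ℤ)).map (Int.castRingHom ℂ) := by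
    refine evPair_ext fun X Y => ?_
    have h1 : (genL n ℤ).map (MvPolynomial.map (Int.castRingHom ℂ)) = genL n ℂ := by
      ext1 i j
      simp [genL]
    have h2 : (genR n ℤ).map (MvPolynomial.map (Int.castRingHom ℂ)) = genR n ℂ := by
      ext1 i j
      simp [genR]
    rw [evPair_deltaPair, map_mul, map_delta, map_delta, h1, h2, map_mul, map_delta, map_delta,
      genL_map_evPair, genR_map_evPair]
  rw [h]
  refine apolar_self_ne_zero fun h0 => ?_
  rw [← h] at h0
  have := evPair_deltaPair a b 1 1
  rw [h0, map_zero, delta_one ha, delta_one hb, mul_one] at this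
  exact zero_ne_one this

/-- A polynomial which is equivariant for the upper triangular matrices on the right and invariant
under the lower unitriangular matrices on the left is a multiple of `deltaPair`. -/
theorem eq_C_mul_deltaPair {a b : Fin n → ℕ} (ha : Antitone a) (hb : Antitone b)
    {f : MvPolynomial (PairIdx n) ℂ}
    (hr : ∀ X Y y z : Matrix (Fin n) (Fin n) ℂ, UpperBy 0 y → UpperBy 0 z →
      evPair (X * y) (Y * z) f = (∏ i, y i i ^ a i) * (∏ i, z i i ^ b i) * evPair X Y f)
    (hl : ∀ y z : Matrix (Fin n) (Fin n) ℂ, UpperBy 0 y.transpose → UpperBy 0 z.transpose →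
      (∀ i, y i i = 1) → (∀ i, z i i = 1) → evPair y z f = evPair 1 1 f) :
    f = C (evPair 1 1 f) * deltaPair a b := by
  let E : MvPolynomial (PairIdx n) ℂ := ∏ k, (lead k (genL n ℂ) * lead k (genR n ℂ))
  have hE : ∀ X Y, evPair X Y E = ∏ k, (lead k X * lead k Y) := fun X Y => by
    rw [map_prod]
    refine Finset.prod_congr rfl fun k _ => ?_
    rw [map_mul, map_lead, map_lead, genL_map_evPair, genR_map_evPair]
  have hE0 : E ≠ 0 := fun h0 => by
    have := hE 1 1
    rw [h0, map_zero] at this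
    refine Finset.prod_ne_zero_iff.2 (fun k _ => ?_) this.symm
    rw [lead_upper upperBy_zero_one]
    simp
  refine sub_eq_zero.1 ((mul_eq_zero.1 ?_).resolve_left hE0)
  refine evPair_ext fun X Y => ?_
  rw [map_zero, map_mul, hE, map_sub, map_mul, evPair_C, evPair_deltaPair]
  by_cases hlead : ∀ k, lead k X * lead k Y ≠ 0
  · obtain ⟨y, hy, hXy, hXy1⟩ := exists_upper_mul_lower X fun k => left_ne_zero_of_mul (hlead k)
    obtain ⟨z, hz, hYz, hYz1⟩ := exists_upper_mul_lower Y fun k => right_ne_zero_of_mul (hlead k)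
    have h1 := hr X Y y z hy hz
    rw [hl _ _ hXy hYz hXy1 hYz1] at h1
    have key : ∀ {c : Fin n → ℕ} (_ : Antitone c) (Z w : Matrix (Fin n) (Fin n) ℂ),
        UpperBy 0 w → UpperBy 0 (Z * w).transpose → (∀ i, (Z * w) i i = 1) →
        (∏ i, w i i ^ c i) * delta c Z = 1 := fun hc Z w hw hZw h1 => by
      rw [← delta_mul_upper hc Z hw, ← mul_one (Z * w), delta_lower_mul hc 1 hZw, delta_one hc]
      simp [h1]
    have h2 := key ha X y hy hXy hXy1
    have h3 := key hb Y z hz hYz hYz1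
    rw [h1]
    refine mul_eq_zero_of_right _ ?_
    linear_combination (-evPair X Y f) * (∏ i, z i i ^ b i) * delta b Y * h2 - evPair X Y f * h3
  · push Not at hlead
    obtain ⟨k, hk⟩ := hlead
    rw [Finset.prod_eq_zero (Finset.mem_univ k) hk, zero_mul]

/-- The span of the translates of a polynomial. -/
noncomputable def translates (D : MvPolynomial (PairIdx n) ℂ) :
    Submodule ℂ (MvPolynomial (PairIdx n) ℂ) :=
  Submodule.span ℂ (Set.range fun q : SL n × SL n => lsub (blk q.1.val q.2.val) D)

theorem finiteDimensional_translates (D : MvPolynomial (PairIdx n) ℂ) :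
    FiniteDimensional ℂ (translates D) := by
  obtain ⟨S, hS, hDS, hSst⟩ := exists_stable_space D
  refine Submodule.finiteDimensional_of_le (S₂ := S) (Submodule.span_le.2 ?_)
  rintro _ ⟨q, rfl⟩
  exact hSst _ D hDS

theorem self_mem_translates (D : MvPolynomial (PairIdx n) ℂ) : D ∈ translates D := by
  have h : lsub (blk (1 : SL n).val (1 : SL n).val) D ∈ translates D :=
    Submodule.subset_span (Set.mem_range_self ((1, 1) : SL n × SL n))
  rwa [Matrix.SpecialLinearGroup.coe_one, blk_one, lsub_one] at h

theorem lsub_mem_translates {D p : MvPolynomial (PairIdx n) ℂ} (hp : p ∈ translates D)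
    (h k : SL n) : lsub (blk h.val k.val) p ∈ translates D := by
  rw [translates] at hp
  induction hp using Submodule.span_induction with
  | mem f hf =>
    obtain ⟨q, rfl⟩ := hf
    have hq : lsub (blk (q.1 * h).val (q.2 * k).val) D ∈ translates D :=
      Submodule.subset_span (Set.mem_range_self ((q.1 * h, q.2 * k) : SL n × SL n))
    rwa [Matrix.SpecialLinearGroup.coe_mul, Matrix.SpecialLinearGroup.coe_mul, blk_mul,
      ← lsub_lsub] at hq
  | zero => rw [map_zero]; exact Submodule.zero_mem _
  | add f f' _ _ hf hf' => rw [map_add]; exact Submodule.add_mem _ hf hf'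
  | smul c f _ hf => rw [map_smul]; exact Submodule.smul_mem _ c hf

theorem evPair_mul_right_of_mem_translates {D f : MvPolynomial (PairIdx n) ℂ}
    (hf : f ∈ translates D) {y z : Matrix (Fin n) (Fin n) ℂ} {c : ℂ}
    (hD : ∀ X Y, evPair (X * y) (Y * z) D = c * evPair X Y D) (X Y : Matrix (Fin n) (Fin n) ℂ) :
    evPair (X * y) (Y * z) f = c * evPair X Y f := by
  rw [translates] at hf
  induction hf using Submodule.span_induction with
  | mem f hf =>
    obtain ⟨q, rfl⟩ := hf
    rw [evPair_lsub, evPair_lsub, ← mul_assoc, ← mul_assoc, hD]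
  | zero => rw [map_zero, map_zero, mul_zero]
  | add f f' _ _ hf hf' => rw [map_add, map_add, hf, hf', mul_add]
  | smul t f _ hf =>
    rw [smul_eq_C_mul, map_mul, map_mul, hf, evPair_C, evPair_C, mul_left_comm]

theorem apolar_eq_zero_of_mem_translates {D f q : MvPolynomial (PairIdx n) ℂ}
    (hf : f ∈ translates D) (h : ∀ g k : SL n, apolar D (lsub (blk g.val k.val) q) = 0) :
    apolar f q = 0 := by
  rw [translates] at hf
  induction hf using Submodule.span_induction with
  | mem f hf =>
    obtain ⟨p, rfl⟩ := hf
    have := h p.1.transpose p.2.transpose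
    rwa [Matrix.SpecialLinearGroup.coe_transpose, Matrix.SpecialLinearGroup.coe_transpose,
      ← blk_transpose, ← apolar_lsub] at this
  | zero => rw [map_zero, LinearMap.zero_apply]
  | add f f' _ _ hf hf' => rw [map_add, LinearMap.add_apply, hf, hf', add_zero]
  | smul t f _ hf => rw [map_smul, LinearMap.smul_apply, hf, smul_zero]

/-- Some translate of `deltaPair` pairs nontrivially with a nonzero polynomial that is equivariant
for the upper triangular matrices on the right. -/
theorem exists_apolar_ne_zero {a b : Fin n → ℕ} (ha : Antitone a) (hb : Antitone b)
    {D : MvPolynomial (PairIdx n) ℂ} (hD : D ≠ 0)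
    (hr : ∀ X Y y z : Matrix (Fin n) (Fin n) ℂ, UpperBy 0 y → UpperBy 0 z →
      evPair (X * y) (Y * z) D = (∏ i, y i i ^ a i) * (∏ i, z i i ^ b i) * evPair X Y D) :
    ∃ h k : SL n, apolar D (lsub (blk h.val k.val) (deltaPair a b)) ≠ 0 := by
  by_contra! hcon
  have hcoe : ∀ p q : SL n, (p * q).val = p.val * q.val :=
    fun p q => Matrix.SpecialLinearGroup.coe_mul p q
  have hone : (1 : SL n).val = 1 := Matrix.SpecialLinearGroup.coe_one
  have := finiteDimensional_translates D
  have hNst : ∀ h k : SL n, ∀ p ∈ translates D, lsub (blk h.val k.val) p ∈ translates D :=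
    fun h k p hp => lsub_mem_translates hp h k
  have htr : ∀ g h : SL n, (g * h).val.transpose = h.val.transpose * g.val.transpose :=
    fun g h => by rw [hcoe, Matrix.transpose_mul]
  have htr1 : (1 : SL n).val.transpose = 1 := by rw [hone, Matrix.transpose_one]
  let N' : Submodule ℂ (MvPolynomial (PairIdx n) ℂ) :=
    { carrier := {f | f ∈ translates D ∧ ∀ g : SL n, SLIsUniUpper g → lsub (blk g.val.transpose 1) f = f}
      zero_mem' := ⟨Submodule.zero_mem _, fun g _ => map_zero _⟩
      add_mem' := fun hf hf' => ⟨Submodule.add_mem _ hf.1 hf'.1, fun g hg => by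
        rw [map_add, hf.2 g hg, hf'.2 g hg]⟩
      smul_mem' := fun c f hf => ⟨Submodule.smul_mem _ c hf.1, fun g hg => by rw [map_smul, hf.2 g hg]⟩ }
  obtain ⟨f₁, hf₁, hf₁0, hf₁g⟩ := exists_fixed_polynomial (translates D)
    (fun h => hD (by
      have := self_mem_translates D
      rwa [h, Submodule.mem_bot] at this))
    (fun g : SL n => blk g.val.transpose 1) (by rw [htr1, blk_one])
    (fun g h => by rw [htr, ← blk_mul, one_mul])
    (fun g p hp => by
      have := hNst g.transpose 1 p hp
      rwa [hone, Matrix.SpecialLinearGroup.coe_transpose] at this)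
  have : FiniteDimensional ℂ N' := Submodule.finiteDimensional_of_le
    (show N' ≤ translates D from fun f hf => hf.1)
  obtain ⟨f, hf, hf0, hfg⟩ := exists_fixed_polynomial N'
    (fun h => hf₁0 (by
      have : f₁ ∈ N' := ⟨hf₁, hf₁g⟩
      rwa [h, Submodule.mem_bot] at this))
    (fun g : SL n => blk 1 g.val.transpose) (by rw [htr1, blk_one])
    (fun g h => by rw [htr, ← blk_mul, one_mul])
    (fun g p hp => ⟨by
      have := hNst 1 g.transpose p hp.1
      rwa [hone, Matrix.SpecialLinearGroup.coe_transpose] at this, fun g' hg' => by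
      rw [lsub_lsub, ← blk_mul, one_mul, mul_one]
      conv_rhs => rw [← hp.2 g' hg', lsub_lsub, ← blk_mul, one_mul, mul_one]⟩)
  have hlift : ∀ y : Matrix (Fin n) (Fin n) ℂ, UpperBy 0 y.transpose → (∀ i, y i i = 1) →
      ∃ g : SL n, SLIsUniUpper g ∧ g.val.transpose = y := by
    intro y hy hy1
    have hdet : y.transpose.det = 1 := by
      rw [Matrix.det_of_isUpperTriangular (upperBy_zero_iff.1 hy)]
      exact Finset.prod_eq_one fun i _ => hy1 i
    exact ⟨⟨y.transpose, hdet⟩, ⟨hy1, fun i j hij => hy i j hij⟩, rfl⟩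
  have hf_eq := eq_C_mul_deltaPair ha hb (fun X Y y z hy hz => evPair_mul_right_of_mem_translates
    hf.1 (fun X Y => hr X Y y z hy hz) X Y) fun y z hy hz hy1 hz1 => by
    obtain ⟨g, hg, rfl⟩ := hlift y hy hy1
    obtain ⟨h, hh, rfl⟩ := hlift z hz hz1
    conv_rhs => rw [← hfg h hh, evPair_lsub, ← hf.2 g hg, evPair_lsub]
    simp
  have hc : evPair 1 1 f ≠ 0 := fun h0 => hf0 (by rw [hf_eq, h0, C_0, zero_mul])
  have := apolar_eq_zero_of_mem_translates hf.1 hcon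
  rw [hf_eq, ← smul_eq_C_mul, map_smul, LinearMap.smul_apply, smul_eq_mul] at this
  exact mul_ne_zero hc (apolar_deltaPair_ne_zero ha hb) this

end PairPolynomials
end LRSat

namespace LRSat
open Module MvPolynomial
open scoped TensorProduct

section Occurrence

variable {n : ℕ} {V W : Type*} [AddCommGroup V] [Module ℂ V] [FiniteDimensional ℂ V]
  [AddCommGroup W] [Module ℂ W] [FiniteDimensional ℂ W]

/-- Every bilinear form on the duals is represented by a tensor. -/
theorem exists_tensor (B : Dual ℂ V →ₗ[ℂ] Dual ℂ W →ₗ[ℂ] ℂ) :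
    ∃ x : V ⊗[ℂ] W, ∀ ξ η, TensorProduct.dualDistrib ℂ V W (ξ ⊗ₜ η) x = B ξ η := by
  let Φ : Dual ℂ (Dual ℂ (V ⊗[ℂ] W)) :=
    TensorProduct.lift B ∘ₗ (TensorProduct.dualDistribEquiv ℂ V W).symm.toLinearMap
  refine ⟨(evalEquiv ℂ (V ⊗[ℂ] W)).symm Φ, fun ξ η => ?_⟩
  rw [apply_evalEquiv_symm_apply]
  change TensorProduct.lift B ((TensorProduct.dualDistribEquiv ℂ V W).symm
    (TensorProduct.dualDistribEquiv ℂ V W (ξ ⊗ₜ η))) = B ξ η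
  rw [LinearEquiv.symm_apply_apply, TensorProduct.lift.tmul]

/-- A polynomial in two matrices with the appropriate equivariance produces a highest weight vector
in a tensor product. -/
theorem occurs_of_polynomial {ρ : Representation ℂ (SL n) V} {σ : Representation ℂ (SL n) W}
    (hρ : RepIsIrreducible ρ) (hσ : RepIsIrreducible σ) {a b c : Fin n → ℕ} (ha : Antitone a)
    (hb : Antitone b) (hoa : Occurs ρ (fun j => (a j : ℤ))) (hob : Occurs σ (fun j => (b j : ℤ)))
    {D : MvPolynomial (PairIdx n) ℂ} (hD : D ≠ 0)
    (hr : ∀ X Y y z : Matrix (Fin n) (Fin n) ℂ, UpperBy 0 y → UpperBy 0 z →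
      evPair (X * y) (Y * z) D = (∏ i, y i i ^ a i) * (∏ i, z i i ^ b i) * evPair X Y D)
    (hl : ∀ X Y y : Matrix (Fin n) (Fin n) ℂ, UpperBy 0 y.transpose → y.det = 1 →
      evPair (y * X) (y * Y) D = (∏ i, y i i ^ c i) * evPair X Y D) :
    Occurs (tensorRep2 ρ σ) (fun j => (c j : ℤ)) := by
  obtain ⟨v, hv⟩ := hoa
  obtain ⟨w, hw⟩ := hob
  obtain ⟨ξ, hξ⟩ := exists_delta_functional hρ ha hv
  obtain ⟨η, hη⟩ := exists_delta_functional hσ hb hw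
  have hξ0 : ξ ≠ 0 := by
    rintro rfl
    have := hξ 1
    rw [Matrix.SpecialLinearGroup.coe_one, delta_one ha] at this
    exact zero_ne_one this
  have hη0 : η ≠ 0 := by
    rintro rfl
    have := hη 1
    rw [Matrix.SpecialLinearGroup.coe_one, delta_one hb] at this
    exact zero_ne_one this
  obtain ⟨d, hd⟩ := isHomogeneous_delta (n := n) a
  obtain ⟨d', hd'⟩ := isHomogeneous_delta (n := n) b
  obtain ⟨P, hP, hP0⟩ := exists_polynomial_map hρ hv.1 hξ hξ0 hd
  obtain ⟨Q, hQ, hQ0⟩ := exists_polynomial_map hσ hw.1 hη hη0 hd'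
  obtain ⟨x, hx⟩ := exists_tensor (((LinearMap.mul ℂ (MvPolynomial (PairIdx n) ℂ)).compl₁₂
    ((rename Sum.inl).toLinearMap ∘ₗ P) ((rename Sum.inr).toLinearMap ∘ₗ Q)).compr₂ (apolar D))
  have hx' : ∀ ξ η, TensorProduct.dualDistrib ℂ V W (ξ ⊗ₜ η) x =
      apolar D (rename Sum.inl (P ξ) * rename Sum.inr (Q η)) := hx
  have htrans : ∀ (ξ : Dual ℂ V) (η : Dual ℂ W) (g h : SL n),
      TensorProduct.dualDistrib ℂ V W ((ξ ∘ₗ ρ g) ⊗ₜ (η ∘ₗ σ h)) x =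
        apolar D (lsub (blk g.val h.val) (rename Sum.inl (P ξ) * rename Sum.inr (Q η))) := by
    intro ξ η g h
    rw [hx', hP, hQ, lsub_blk_rename]
  have hborel : ∀ y : SL n, UpperBy 0 y.val →
      tensorRep2 ρ σ y x = (∏ i, y.val i i ^ c i) • x := by
    intro y hy
    rw [← sub_eq_zero]
    refine eq_zero_of_dualDistrib fun ξ η => ?_
    have hDy : lsub (blk y.val.transpose y.val.transpose) D =
        C (∏ i, y.val i i ^ c i) * D := by
      refine evPair_ext fun X Y => ?_
      rw [evPair_lsub, map_mul, evPair_C,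
        hl X Y y.val.transpose (by rwa [Matrix.transpose_transpose])
          (by rw [Matrix.det_transpose]; exact y.2)]
      rfl
    have h1 := htrans ξ η y y
    rw [dualDistrib_comp, ← Matrix.transpose_transpose (blk y.val y.val), ← apolar_lsub,
      blk_transpose, hDy, ← smul_eq_C_mul, map_smul, LinearMap.smul_apply, ← hx' ξ η] at h1
    rw [map_sub, map_smul, ← h1]
    exact sub_self _
  refine ⟨x, ?_, fun g hg => ?_, fun g hg => ?_⟩
  · obtain ⟨g, h, hgh⟩ := exists_apolar_ne_zero ha hb hD hr
    rintro rfl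
    have h1 := htrans ξ η g h
    rw [hP0, hQ0, map_zero] at h1
    exact hgh h1.symm
  · rw [hborel g (upperBy_zero_iff.2 fun i j hij => hg.2 i j hij)]
    simp [hg.1]
  · rw [hborel g (upperBy_zero_iff.2 fun i j hij => hg i j hij.ne')]
    simp only [zpow_natCast]

/-- Nonvanishing of the determinantal function implies occurrence. -/
theorem occurs_of_lrFun {ρ : Representation ℂ (SL n) V} {σ : Representation ℂ (SL n) W}
    (hρ : RepIsIrreducible ρ) (hσ : RepIsIrreducible σ) {a b c : Fin n → ℕ} (ha : Antitone a)
    (hb : Antitone b) (hc : Antitone c) (hoa : Occurs ρ (fun j => (a j : ℤ)))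
    (hob : Occurs σ (fun j => (b j : ℤ))) {r : ℕ} (har : ∀ j, a j ≤ r) (hbr : ∀ j, b j ≤ r)
    (hcr : ∀ j, c j ≤ r) (e : Idx (thr a b c r) r ≃ Fin r × Fin n)
    (A : Fin 3 → Matrix (Fin r) (Fin r) ℂ) (X Y : Matrix (Fin n) (Fin n) ℂ)
    (hXY : lrFun _ e A X Y ≠ 0) : Occurs (tensorRep2 ρ σ) (fun j => (c j : ℤ)) := by
  let D : MvPolynomial (PairIdx n) ℂ :=
    lrFun _ e (fun i => (A i).map C) (genL n ℂ) (genR n ℂ)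
  have hD : ∀ X Y, evPair X Y D = lrFun _ e A X Y := fun X Y => by
    have hA : (fun i => ((A i).map C).map (evPair X Y)) = A := by
      ext i k l
      exact evPair_C X Y _
    rw [map_lrFun, genL_map_evPair, genR_map_evPair, hA]
  refine occurs_of_polynomial hρ hσ ha hb hoa hob (D := D) (fun h0 => hXY ?_)
    (fun X Y y z hy hz => ?_) fun X Y y hy hdet => ?_
  · rw [← hD, h0, map_zero]
  · rw [hD, hD, lrFun_mul_right ha hb hc har hbr e A X Y y z
      (fun j k hjk => hy j k hjk) fun j k hjk => hz j k hjk]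
  · rw [hD, hD, lrFun_mul_left ha hb hc har hbr hcr e A X Y y
      (fun j k hjk => hy k j hjk) hdet]

end Occurrence
end LRSat

theorem saturation_LR (n : ℕ) (lam mu nu : Fin n → ℕ)
    (hlam : IsPartition lam) (hmu : IsPartition mu) (hnu : IsPartition nu)
    (hsize : ∑ j, lam j + ∑ j, mu j = ∑ j, nu j)
    (m : ℕ) (hm : 0 < m)
    -- `c^{mν}_{mλ,mμ} ≠ 0`: `V(mν)` occurs in `V(mλ) ⊗ V(mμ)`
    (V W : Type*) [AddCommGroup V] [Module ℂ V] [FiniteDimensional ℂ V]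
    [AddCommGroup W] [Module ℂ W] [FiniteDimensional ℂ W]
    (ρ : Representation ℂ (SL n) V) (σ : Representation ℂ (SL n) W)
    (hρ : RepIsIrreducible ρ) (hσ : RepIsIrreducible σ)
    (hρw : Occurs ρ (fun j => (m * lam j : ℤ))) (hσw : Occurs σ (fun j => (m * mu j : ℤ)))
    (hocc : Occurs (tensorRep2 ρ σ) (fun j => (m * nu j : ℤ))) :
    -- `c^ν_{λμ} ≠ 0`: `V(ν)` occurs in `V(λ) ⊗ V(μ)`
    ∀ (V' W' : Type*) [AddCommGroup V'] [Module ℂ V'] [FiniteDimensional ℂ V']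
      [AddCommGroup W'] [Module ℂ W'] [FiniteDimensional ℂ W']
      (ρ' : Representation ℂ (SL n) V') (σ' : Representation ℂ (SL n) W'),
      RepIsIrreducible ρ' → RepIsIrreducible σ' →
      Occurs ρ' (fun j => (lam j : ℤ)) → Occurs σ' (fun j => (mu j : ℤ)) →
      Occurs (tensorRep2 ρ' σ') (fun j => (nu j : ℤ)) := by
  intro V' W' _ _ _ _ _ _ ρ' σ' hρ' hσ' hlam' hmu'
  have hl : Antitone lam := fun i j => hlam i j
  have hm' : Antitone mu := fun i j => hmu i j
  have hn : Antitone nu := fun i j => hnu i j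
  have hcast : ∀ a : Fin n → ℕ, (fun j => (m * a j : ℤ)) = fun j => ((m * a j : ℕ) : ℤ) :=
    fun a => funext fun j => (Nat.cast_mul m (a j)).symm
  rw [hcast] at hρw hσw hocc
  obtain ⟨v, hv⟩ := hρw
  obtain ⟨w, hw⟩ := hσw
  obtain ⟨x, hx⟩ := hocc
  obtain ⟨F, hF, ⟨g, h, hgh⟩, hFl, hFr⟩ := LRSat.exists_equivariant_function hρ hσ
    (fun i j hij => Nat.mul_le_mul_left m (hl hij))
    (fun i j hij => Nat.mul_le_mul_left m (hm' hij)) hv hw hx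
  have hsingle : ∀ (a : Fin n → ℕ) (j : Fin n), a j ≤ ∑ j, a j := fun a j =>
    Finset.single_le_sum (fun _ _ => Nat.zero_le _) (Finset.mem_univ j)
  have hlr : ∀ j, lam j ≤ ∑ j, nu j := fun j =>
    (hsingle lam j).trans (hsize ▸ Nat.le_add_right _ _)
  have hmr : ∀ j, mu j ≤ ∑ j, nu j := fun j =>
    (hsingle mu j).trans (hsize ▸ Nat.le_add_left _ _)
  have hnr := hsingle nu
  have hg : g.val.det ≠ 0 := by rw [g.2]; exact one_ne_zero
  have hh : h.val.det ≠ 0 := by rw [h.2]; exact one_ne_zero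
  have hrev : (LRSat.revMat n ℂ).det ≠ 0 :=
    left_ne_zero_of_mul (LRSat.det_revMat_sq.trans_ne one_ne_zero)
  have hdet : ∀ i, ((![g.val, h.val, LRSat.revMat n ℂ] :
      Fin 3 → Matrix (Fin n) (Fin n) ℂ) i).det ≠ 0 := by
    intro i
    fin_cases i
    · exact hg
    · exact hh
    · exact hrev
  obtain ⟨e, A, X, Y, hXY⟩ := LRSat.exists_lrFun_ne_zero _
    (LRSat.thr_antitone hl hm' hn) (LRSat.thr_le hlr hmr) (LRSat.sum_thr hnr hsize) _
    (fun i => LRSat.linearIndependent_ecol (hdet i))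
    (LRSat.not_viol_of_equivariant hF hl hm' hn hsize hm hFl hFr hnr hgh)
  exact LRSat.occurs_of_lrFun hρ' hσ' hl hm' hn hlam' hmu' hlr hmr hnr e A X Y hXY
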